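/- arXiv:2208.04111 — 3 statements merged into one kernel-verified Lean document; each statement's English description precedes it below -/
import Mathlib

section
/- Let d ≥ 2 be an integer and let ε > 0 be fixed. For every choice of integers t = t(n) and b = b(n) with (1+ε)·n·log n/2 ≤ t ≤ n(n-1)/2 and b ≥ (1+ε)·d·n/2, Builder has a (t,b)-strategy such that the graph G_t is asymptotically almost surely d-connected. -/
open Filter SimpleGraph
open scoped Classical

noncomputable section

/-- The number of edges of the complete graph on `Fin n`. -/
def numEdges (n : ℕ) : ℕ := Fintype.card ((completeGraph (Fin n)).edgeSet)

/-- A uniformly random ordering of the edges of `K_n` is modelled as a uniformly random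
bijection from the edge set of `K_n` to `Fin (numEdges n)`; the edge proposed at the
(0-indexed) round `r` is the preimage of `r`. -/
abbrev EdgeOrdering (n : ℕ) : Type := ((completeGraph (Fin n)).edgeSet) ≃ Fin (numEdges n)

/-- The list `(e_1, …, e_t)` of the first `t` proposed edges, in the order of proposal. -/
def history {n : ℕ} (σ : EdgeOrdering n) (t : ℕ) : List (Sym2 (Fin n)) :=
  ((List.finRange (numEdges n)).filter (fun (r : Fin (numEdges n)) => decide ((r : ℕ) < t))).map
    (fun r => ((σ.symm r : ((completeGraph (Fin n)).edgeSet)) : Sym2 (Fin n)))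

/-- The probability of an event under the uniform measure on a finite type. -/
def Pr {α : Type*} [Fintype α] (P : α → Prop) : ℝ :=
  ((Finset.univ.filter P).card : ℝ) / (Fintype.card α : ℝ)

/-- A strategy of Builder: given the history `(e_1, …, e_s)` of edges proposed so far
(the current proposal `e_s` being the last entry), decide whether to accept `e_s`. -/
abbrev Strategy (n : ℕ) : Type := List (Sym2 (Fin n)) → Bool

/-- The graph `G_t` built by Builder after the first `t` rounds: its edges are the
edges proposed at some round `r ≤ t` and accepted by the strategy at that round. -/
def builderGraph {n : ℕ} (strat : Strategy n) (σ : EdgeOrdering n) (t : ℕ) :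
    SimpleGraph (Fin n) :=
  SimpleGraph.fromEdgeSet
    {e | ∃ r : Fin (numEdges n), (r : ℕ) < t ∧
        ((σ.symm r : ((completeGraph (Fin n)).edgeSet)) : Sym2 (Fin n)) = e ∧
        strat (history σ ((r : ℕ) + 1)) = true}

/-- The number of edges accepted by Builder during the first `t` rounds. -/
def numAccepted {n : ℕ} (strat : Strategy n) (σ : EdgeOrdering n) (t : ℕ) : ℕ :=
  (Finset.univ.filter (fun e : Sym2 (Fin n) => e ∈ (builderGraph strat σ t).edgeSet)).card

/-- A graph `G` is `d`-connected if it has at least `d + 1` vertices and removing any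
set of at most `d - 1` vertices leaves a connected graph. -/
def IsKConnected {V : Type*} [Fintype V] (d : ℕ) (G : SimpleGraph V) : Prop :=
  d + 1 ≤ Fintype.card V ∧
    ∀ S : Finset V, S.card ≤ d - 1 → (G.induce ((↑S : Set V)ᶜ)).Connected

/-!
Fix large constants `R` and `m`, where `m` is large compared with `R`, and put `r = n / R`. Builder
first takes every edge inside a fixed set of about `4 (d + 1) r` vertices for `O(n)` rounds. Any two
disjoint `r`-subsets of it are then joined, so deleting a largest poorly expanding subset leaves a
core without small cuts.

Outside the core she then builds a locally sparse graph of minimum degree `d`. During `O(n)` rounds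
she accepts edges between two vertices of degree below `d`, so each edge raises two degrees; the
vertices still unsaturated form a set of size `O(r)`, as it contains no large independent set of
the proposed graph. These are completed by edges with one endpoint of degree below `d`, for which
about `(1 + δ / 2) n log n / 2` rounds suffice. Local sparsity rejects at most one edge at each
vertex, and the total is `d n / 2 + O(r)` edges.

Local sparsity and minimum degree `d` force every set of at most `m` vertices to have `d`
neighbours. Hence the obstructions that remain, sets outside the core with too few neighbours, are
large. At level `k`, when every set outside the core has at least `k` neighbours, the minimal sets
with exactly `k` neighbours are pairwise disjoint by submodularity, so there are at most `n / m` of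
them and `O(n / m)` edges into the core destroy them all. After `d` levels every set outside the
core has `d` neighbours, and since the core has no small cut, neither has the whole graph.
-/

namespace BuilderGame

section Expansion

variable {V : Type*} [Fintype V] [DecidableEq V]

/-- The external neighbourhood of a vertex set `A` in the graph with edge set `E`. Graphs are
handled through their finite edge sets, because Builder's graph grows edge by edge. -/
def extNbhd (E : Finset (Sym2 V)) (A : Finset V) : Finset V :=
  Finset.univ.filter fun y => y ∉ A ∧ ∃ x ∈ A, s(x, y) ∈ E

theorem mem_extNbhd {E : Finset (Sym2 V)} {A : Finset V} {y : V} :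
    y ∈ extNbhd E A ↔ y ∉ A ∧ ∃ x ∈ A, s(x, y) ∈ E := by
  simp [extNbhd]

theorem extNbhd_mono {E F : Finset (Sym2 V)} (h : E ⊆ F) (A : Finset V) :
    extNbhd E A ⊆ extNbhd F A := by
  intro y
  simp only [mem_extNbhd]
  exact fun ⟨hyA, x, hx, hxy⟩ => ⟨hyA, x, hx, h hxy⟩

theorem disjoint_extNbhd (E : Finset (Sym2 V)) (A : Finset V) : Disjoint A (extNbhd E A) :=
  Finset.disjoint_left.2 fun _ ha hN => (mem_extNbhd.1 hN).1 ha

theorem extNbhd_inter_subset (E : Finset (Sym2 V)) (A C : Finset V) :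
    extNbhd E (A ∩ C) ∩ C ⊆ extNbhd E A := by
  intro y
  simp only [Finset.mem_inter, mem_extNbhd]
  exact fun ⟨⟨hyAC, x, hx, hxy⟩, hyC⟩ => ⟨fun hyA => hyAC ⟨hyA, hyC⟩, x, hx.1, hxy⟩

theorem card_extNbhd_inter_add_card_extNbhd_union_le (E : Finset (Sym2 V)) (A B : Finset V) :
    (extNbhd E (A ∩ B)).card + (extNbhd E (A ∪ B)).card ≤
      (extNbhd E A).card + (extNbhd E B).card := by
  have hunion : extNbhd E (A ∩ B) ∪ extNbhd E (A ∪ B) ⊆ extNbhd E A ∪ extNbhd E B := by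
    intro y
    simp only [Finset.mem_union, mem_extNbhd, Finset.mem_inter]
    grind
  have hinter : extNbhd E (A ∩ B) ∩ extNbhd E (A ∪ B) ⊆ extNbhd E A ∩ extNbhd E B := by
    intro y
    simp only [Finset.mem_union, mem_extNbhd, Finset.mem_inter]
    grind
  rw [← Finset.card_union_add_card_inter, ← Finset.card_union_add_card_inter (extNbhd E A)]
  exact Nat.add_le_add (Finset.card_le_card hunion) (Finset.card_le_card hinter)

theorem extNbhd_sdiff_subset (E : Finset (Sym2 V)) (X C : Finset V) :
    extNbhd E (C \ (X ∪ extNbhd E X)) ∩ C ⊆ extNbhd E X := by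
  intro z hz
  obtain ⟨hzN, hzC⟩ := Finset.mem_inter.1 hz
  obtain ⟨hzY, y, hy, hyz⟩ := mem_extNbhd.1 hzN
  have hyXN : y ∉ X ∧ y ∉ extNbhd E X := by
    simpa only [Finset.mem_union, not_or] using (Finset.mem_sdiff.1 hy).2
  have hzX : z ∉ X := fun hzX =>
    hyXN.2 (mem_extNbhd.2 ⟨hyXN.1, z, hzX, by rwa [Sym2.eq_swap]⟩)
  by_contra hzE
  exact hzY (Finset.mem_sdiff.2 ⟨hzC, by simp [hzX, hzE]⟩)

/-- The edges of `E` with both endpoints in `X`. -/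
def edgesWithin (E : Finset (Sym2 V)) (X : Finset V) : Finset (Sym2 V) :=
  E.filter fun e => ∀ v ∈ e, v ∈ X

theorem edgesWithin_mono {E F : Finset (Sym2 V)} (h : E ⊆ F) (X : Finset V) :
    edgesWithin E X ⊆ edgesWithin F X :=
  Finset.filter_subset_filter _ h

/-- The degree of `v` in the graph with edge set `E`. -/
def edgeDegree (E : Finset (Sym2 V)) (v : V) : ℕ := (E.filter fun e => v ∈ e).card

omit [Fintype V] in
theorem edgeDegree_mono {E F : Finset (Sym2 V)} (h : E ⊆ F) (v : V) :
    edgeDegree E v ≤ edgeDegree F v :=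
  Finset.card_le_card (Finset.filter_subset_filter _ h)

theorem sum_edgeDegree_le {H : Finset (Sym2 V)} (hH : ∀ e ∈ H, ¬ e.IsDiag) (A : Finset V) :
    ∑ v ∈ A, edgeDegree H v ≤
      (edgesWithin H (A ∪ extNbhd H A)).card + (edgesWithin H A).card := by
  have hcount : ∑ v ∈ A, edgeDegree H v = ∑ e ∈ H, (A.filter fun v => v ∈ e).card :=
    Finset.sum_card_bipartiteAbove_eq_sum_card_bipartiteBelow fun v e => v ∈ e
  rw [hcount, edgesWithin, edgesWithin, Finset.card_filter, Finset.card_filter,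
    ← Finset.sum_add_distrib]
  refine Finset.sum_le_sum fun e he => ?_
  induction e using Sym2.ind with
  | _ a b =>
    have hab : a ≠ b := by simpa using hH _ he
    have hends : A.filter (fun v => v ∈ s(a, b)) = A.filter (fun v => v ∈ ({a, b} : Finset V)) := by
      simp
    have ha : b ∈ A → a ∉ A → a ∈ extNbhd H A := fun hb ha =>
      mem_extNbhd.2 ⟨ha, b, hb, by rwa [Sym2.eq_swap]⟩
    have hb : a ∈ A → b ∉ A → b ∈ extNbhd H A := fun ha hb => mem_extNbhd.2 ⟨hb, a, ha, he⟩
    rw [hends, Finset.filter_mem_eq_inter]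
    by_cases haA : a ∈ A <;> by_cases hbA : b ∈ A <;>
      simp_all [Finset.inter_insert_of_mem, Finset.inter_insert_of_notMem]

/-- Every nonempty set of at most `g` vertices spans fewer edges than it has vertices; for a
simple graph this says that the girth exceeds `g`. -/
def IsLocallySparse (g : ℕ) (H : Finset (Sym2 V)) : Prop :=
  ∀ X : Finset V, X.Nonempty → X.card ≤ g → (edgesWithin H X).card + 1 ≤ X.card

/-- If `A` had fewer than `d` neighbours, then `A` and `A ∪ N(A)` would both be sparse, so the
degrees in `A` would sum to at most `2 |A| + d - 3 < d |A|`. -/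
theorem IsLocallySparse.le_card_extNbhd {d g : ℕ} (hd : 2 ≤ d) {H : Finset (Sym2 V)}
    (hH : IsLocallySparse g H) (hdiag : ∀ e ∈ H, ¬ e.IsDiag) (hdeg : ∀ v, d ≤ edgeDegree H v)
    {A : Finset V} (hA : A.Nonempty) (hAg : A.card + d ≤ g) : d ≤ (extNbhd H A).card := by
  by_contra! hsmall
  have hcard : (A ∪ extNbhd H A).card = A.card + (extNbhd H A).card :=
    Finset.card_union_of_disjoint (disjoint_extNbhd H A)
  have hsparse := hH A hA (by omega)
  have hsparse' := hH (A ∪ extNbhd H A) (hA.mono Finset.subset_union_left) (by omega)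
  have hsum : A.card * d ≤ ∑ v ∈ A, edgeDegree H v :=
    Finset.card_nsmul_le_sum _ _ _ fun v _ => hdeg v
  have hle := sum_edgeDegree_le hdiag A
  obtain ⟨d, rfl⟩ := Nat.exists_eq_add_of_le hd
  nlinarith [hA.card_pos]

end Expansion

theorem exists_independent_subset {α : Type*} {D : ℕ} {r : α → α → Prop}
    (hr : ∀ v w, r v w → r w v) (U : Finset α) (hD : ∀ v ∈ U, (U.filter (r v)).card ≤ D) :
    ∃ I ⊆ U, (∀ v ∈ I, ∀ w ∈ I, v ≠ w → ¬ r v w) ∧ U.card ≤ (D + 1) * I.card := by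
  obtain ⟨I, hI, hmax⟩ := Finset.exists_max_image
    (U.powerset.filter fun I => ∀ v ∈ I, ∀ w ∈ I, v ≠ w → ¬ r v w) Finset.card
    ⟨∅, by simp⟩
  simp only [Finset.mem_filter, Finset.mem_powerset] at hI hmax
  refine ⟨I, hI.1, hI.2, ?_⟩
  have hcover : U ⊆ I.biUnion fun v => insert v (U.filter (r v)) := by
    intro u hu
    by_contra hfree
    simp only [Finset.mem_biUnion, Finset.mem_insert, Finset.mem_filter, not_exists, not_and,
      not_or] at hfree
    have huI : u ∉ I := fun h => (hfree u h).1 rfl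
    have hlarger := hmax (insert u I) ⟨Finset.insert_subset hu hI.1, by grind⟩
    rw [Finset.card_insert_of_notMem huI] at hlarger
    omega
  calc U.card ≤ _ := Finset.card_le_card hcover
    _ ≤ I.card * (D + 1) := Finset.card_biUnion_le_card_mul _ _ _ fun v hv =>
        (Finset.card_insert_le _ _).trans (Nat.succ_le_succ (hD v (hI.1 hv)))
    _ = (D + 1) * I.card := Nat.mul_comm _ _

section Core

variable {V : Type*} [Fintype V] [DecidableEq V]

/-- Any two disjoint subsets of `C` with at least `r` vertices each are joined by an edge. -/
def IsJoined (r : ℕ) (E : Finset (Sym2 V)) (C : Finset V) : Prop :=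
  ∀ X Y : Finset V, X ⊆ C → Y ⊆ C → Disjoint X Y → r ≤ X.card → r ≤ Y.card →
    ∃ x ∈ X, ∃ y ∈ Y, s(x, y) ∈ E

/-- The graph induced on `C` cannot be separated by fewer than `d` of its vertices: every
nonempty `X ⊆ C` with fewer than `d` neighbours in `C` covers `C` together with its
neighbourhood. -/
def HasNoSmallCut (d : ℕ) (E : Finset (Sym2 V)) (C : Finset V) : Prop :=
  ∀ X ⊆ C, X.Nonempty → (extNbhd E X ∩ C).card < d → C ⊆ X ∪ extNbhd E X

theorem HasNoSmallCut.mono {d : ℕ} {E F : Finset (Sym2 V)} {C : Finset V}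
    (hE : HasNoSmallCut d E C) (hEF : E ⊆ F) : HasNoSmallCut d F C := fun X hXC hX hN =>
  (hE X hXC hX ((Finset.card_le_card (Finset.inter_subset_inter_right
    (extNbhd_mono hEF X))).trans_lt hN)).trans
    (Finset.union_subset_union_right (extNbhd_mono hEF X))

theorem IsJoined.card_lt {r : ℕ} {E : Finset (Sym2 V)} {C W : Finset V} (hE : IsJoined r E C)
    (hWC : W ⊆ C) (hW : r ≤ W.card) :
    C.card < W.card + (extNbhd E W ∩ C).card + r := by
  set Y := C \ (W ∪ extNbhd E W) with hY
  have hdisj : Disjoint W Y :=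
    Finset.disjoint_sdiff.mono_left Finset.subset_union_left
  have hYr : Y.card < r := by
    by_contra! hYr
    obtain ⟨x, hx, y, hy, hxy⟩ := hE W Y hWC Finset.sdiff_subset hdisj hW hYr
    have hyW : y ∉ W := fun h => Finset.disjoint_left.1 hdisj h hy
    exact (Finset.mem_sdiff.1 hy).2
      (Finset.mem_union_right _ (mem_extNbhd.2 ⟨hyW, x, hx, hxy⟩))
  have hcover : C ⊆ (W ∪ extNbhd E W ∩ C) ∪ Y := by
    intro y
    simp only [hY, Finset.mem_union, Finset.mem_inter, Finset.mem_sdiff]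
    tauto
  have hcard := Finset.card_le_card hcover
  have hsplit := Finset.card_union_le (W ∪ extNbhd E W ∩ C) Y
  have hsplit' := Finset.card_union_le W (extNbhd E W ∩ C)
  omega

/-- `Z` is a set of at most `r` vertices of `C` which has on average fewer than `d` neighbours
per vertex in `C`. Removing a largest such set from a joined set leaves a set without small
cuts. -/
def IsPoorExpander (d r : ℕ) (E : Finset (Sym2 V)) (C Z : Finset V) : Prop :=
  Z ⊆ C ∧ Z.card ≤ r ∧ (extNbhd E Z ∩ C).card ≤ (d - 1) * Z.card

theorem exists_largest_isPoorExpander (d r : ℕ) (E : Finset (Sym2 V)) (C : Finset V) :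
    ∃ Z, IsPoorExpander d r E C Z ∧ ∀ W, IsPoorExpander d r E C W → W.card ≤ Z.card := by
  obtain ⟨Z, hZ, hmax⟩ := Finset.exists_max_image
    (Finset.univ.filter (IsPoorExpander d r E C)) Finset.card
    ⟨∅, by simp [IsPoorExpander, extNbhd]⟩
  simp only [Finset.mem_filter, Finset.mem_univ, true_and] at hZ hmax
  exact ⟨Z, hZ, hmax⟩

theorem IsJoined.le_card_extNbhd_sdiff {d r : ℕ} (hd : 1 ≤ d) (hr : 1 ≤ r) {E : Finset (Sym2 V)}
    {C Z X : Finset V} (hE : IsJoined r E C) (hC : 4 * (d + 1) * r ≤ C.card)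
    (hZ : IsPoorExpander d r E C Z) (hmax : ∀ W, IsPoorExpander d r E C W → W.card ≤ Z.card)
    (hXZ : X ⊆ C \ Z) (hX : X.Nonempty) (hXC : 2 * X.card ≤ C.card) :
    d ≤ (extNbhd E X ∩ (C \ Z)).card := by
  by_contra! hN
  obtain ⟨hZC, hZr, hZN⟩ := hZ
  have hWC : Z ∪ X ⊆ C := Finset.union_subset hZC (hXZ.trans Finset.sdiff_subset)
  have hW : (Z ∪ X).card = Z.card + X.card :=
    Finset.card_union_of_disjoint (Finset.disjoint_sdiff.mono_right hXZ)
  have hsub : extNbhd E (Z ∪ X) ∩ C ⊆ (extNbhd E Z ∩ C) ∪ (extNbhd E X ∩ (C \ Z)) := by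
    intro y
    simp only [Finset.mem_inter, mem_extNbhd, Finset.mem_union, Finset.mem_sdiff]
    grind
  have hWN : (extNbhd E (Z ∪ X) ∩ C).card ≤ (d - 1) * (Z.card + 1) := by
    have := (Finset.card_le_card hsub).trans (Finset.card_union_le _ _)
    rw [Nat.mul_succ]
    omega
  have hXpos : 1 ≤ X.card := hX.card_pos
  have hlarge : r < (Z ∪ X).card := by
    by_contra! hWr
    have := hmax (Z ∪ X) ⟨hWC, hWr, hWN.trans (Nat.mul_le_mul_left _ (by omega))⟩
    omega
  have hlt := hE.card_lt hWC hlarge.le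
  have hZr' : (d - 1) * (Z.card + 1) ≤ (d - 1) * (2 * r) := Nat.mul_le_mul_left _ (by omega)
  obtain ⟨d, rfl⟩ := Nat.exists_eq_add_of_le' hd
  rw [Nat.add_sub_cancel] at hZr' hWN
  nlinarith

theorem IsJoined.exists_hasNoSmallCut {d r : ℕ} (hd : 1 ≤ d) (hr : 1 ≤ r) {E : Finset (Sym2 V)}
    {C₀ : Finset V} (hE : IsJoined r E C₀) (hC₀ : 4 * (d + 1) * r ≤ C₀.card) :
    ∃ C ⊆ C₀, C₀.card ≤ C.card + r ∧ HasNoSmallCut d E C := by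
  obtain ⟨Z, hZ, hmax⟩ := exists_largest_isPoorExpander d r E C₀
  have hexpand : ∀ X ⊆ C₀ \ Z, X.Nonempty → 2 * X.card ≤ C₀.card →
      d ≤ (extNbhd E X ∩ (C₀ \ Z)).card := fun X hXZ hX hXC =>
    hE.le_card_extNbhd_sdiff hd hr hC₀ hZ hmax hXZ hX hXC
  refine ⟨C₀ \ Z, Finset.sdiff_subset, ?_, fun X hXC hX hN => ?_⟩
  · have := Finset.card_sdiff_add_card_inter C₀ Z
    have := Finset.card_le_card (Finset.inter_subset_right : C₀ ∩ Z ⊆ Z)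
    have := hZ.2.1
    omega
  by_contra hcover
  set Y := (C₀ \ Z) \ (X ∪ extNbhd E X)
  have hYne : Y.Nonempty := Finset.sdiff_nonempty.2 hcover
  have hYN : extNbhd E Y ∩ (C₀ \ Z) ⊆ extNbhd E X ∩ (C₀ \ Z) :=
    Finset.subset_inter (extNbhd_sdiff_subset E X _) Finset.inter_subset_right
  have hcard : X.card + Y.card ≤ C₀.card := by
    rw [← Finset.card_union_of_disjoint
      (Finset.disjoint_sdiff.mono_left Finset.subset_union_left)]
    exact Finset.card_le_card
      ((Finset.union_subset hXC Finset.sdiff_subset).trans Finset.sdiff_subset)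
  rcases le_total X.card Y.card with h | h
  · exact hN.not_ge (hexpand X hXC hX (by omega))
  · exact hN.not_ge ((hexpand Y Finset.sdiff_subset hYne (by omega)).trans
      (Finset.card_le_card hYN))

end Core

section TightSets

variable {V : Type*} [Fintype V] [DecidableEq V]

/-- Every nonempty set of vertices outside `C` has at least `k` neighbours. -/
def ExpandsOutside (k : ℕ) (E : Finset (Sym2 V)) (C : Finset V) : Prop :=
  ∀ A : Finset V, A.Nonempty → Disjoint A C → k ≤ (extNbhd E A).card

/-- The inclusion-minimal nonempty sets outside `C` with at most `k` neighbours. They are the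
obstructions to raising the expansion outside `C` from `k` to `k + 1`. -/
def minimalTightSets (k : ℕ) (E : Finset (Sym2 V)) (C : Finset V) : Finset (Finset V) :=
  Finset.univ.filter
    (Minimal fun A => A.Nonempty ∧ Disjoint A C ∧ (extNbhd E A).card ≤ k)

variable {E F : Finset (Sym2 V)} {A B C : Finset V} {d k : ℕ}

theorem mem_minimalTightSets : A ∈ minimalTightSets k E C ↔
    Minimal (fun A => A.Nonempty ∧ Disjoint A C ∧ (extNbhd E A).card ≤ k) A := by
  simp [minimalTightSets]

/-- By submodularity of the neighbourhood size, the intersection of two meeting tight sets would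
again be tight, against minimality. -/
theorem ExpandsOutside.disjoint_of_mem_minimalTightSets (hE : ExpandsOutside k E C)
    (hA : A ∈ minimalTightSets k E C) (hB : B ∈ minimalTightSets k E C) (hAB : A ≠ B) :
    Disjoint A B := by
  rw [mem_minimalTightSets] at hA hB
  obtain ⟨hAne, hAC, hAk⟩ := hA.prop
  obtain ⟨-, hBC, hBk⟩ := hB.prop
  by_contra hmeet
  have hne : (A ∩ B).Nonempty := Finset.not_disjoint_iff_nonempty_inter.1 hmeet
  have hsubmod := card_extNbhd_inter_add_card_extNbhd_union_le E A B
  have hunion := hE (A ∪ B) (hAne.mono Finset.subset_union_left)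
    (Finset.disjoint_union_left.2 ⟨hAC, hBC⟩)
  have htight : (A ∩ B).Nonempty ∧ Disjoint (A ∩ B) C ∧ (extNbhd E (A ∩ B)).card ≤ k :=
    ⟨hne, hAC.mono_left Finset.inter_subset_left, by omega⟩
  exact hAB ((hA.eq_of_le htight Finset.inter_subset_left).symm.trans
    (hB.eq_of_le htight Finset.inter_subset_right))

theorem ExpandsOutside.card_minimalTightSets_mul_le (hE : ExpandsOutside k E C) {M : ℕ}
    (hM : ∀ A ∈ minimalTightSets k E C, M ≤ A.card) :
    (minimalTightSets k E C).card * M ≤ Fintype.card V :=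
  calc (minimalTightSets k E C).card * M
      ≤ ∑ A ∈ minimalTightSets k E C, A.card := Finset.card_nsmul_le_sum _ _ _ hM
    _ = ((minimalTightSets k E C).biUnion id).card :=
        (Finset.card_biUnion fun _ hA _ hB => hE.disjoint_of_mem_minimalTightSets hA hB).symm
    _ ≤ Fintype.card V := Finset.card_le_univ _

theorem exists_mem_minimalTightSets_subset (hB : B.Nonempty) (hBC : Disjoint B C)
    (hk : (extNbhd E B).card ≤ k) : ∃ A ∈ minimalTightSets k E C, A ⊆ B := by
  obtain ⟨A, hAB, hA⟩ := exists_minimal_le_of_wellFoundedLT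
    (fun A : Finset V => A.Nonempty ∧ Disjoint A C ∧ (extNbhd E A).card ≤ k) B ⟨hB, hBC, hk⟩
  exact ⟨A, mem_minimalTightSets.2 hA, hAB⟩

theorem ExpandsOutside.succ_of_minimalTightSets (hEF : E ⊆ F) (hkd : k < d)
    (hF : ∀ A ∈ minimalTightSets k E C, d ≤ (extNbhd F A ∩ C).card) :
    ExpandsOutside (k + 1) F C := by
  intro B hB hBC
  by_contra! hBk
  have hBE : (extNbhd E B).card ≤ k :=
    (Finset.card_le_card (extNbhd_mono hEF B)).trans (by omega)
  obtain ⟨A, hA, hAB⟩ := exists_mem_minimalTightSets_subset hB hBC hBE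
  have hsub : extNbhd F A ∩ C ⊆ extNbhd F B := by
    intro y hy
    obtain ⟨hyN, hyC⟩ := Finset.mem_inter.1 hy
    obtain ⟨-, x, hx, hxy⟩ := mem_extNbhd.1 hyN
    exact mem_extNbhd.2 ⟨fun h => Finset.disjoint_left.1 hBC h hyC, x, hAB hx, hxy⟩
  have hcard := Finset.card_le_card hsub
  have hAd := hF A hA
  omega

/-- A cut of the whole graph either restricts to a cut of `C` or has a side disjoint from `C`. -/
theorem HasNoSmallCut.univ_of_expandsOutside (hC : HasNoSmallCut d E C)
    (hE : ExpandsOutside d E C) : HasNoSmallCut d E Finset.univ := by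
  intro X _ hX hN
  rw [Finset.inter_univ] at hN
  by_contra hcover
  set Y := Finset.univ \ (X ∪ extNbhd E X)
  have hYne : Y.Nonempty := Finset.sdiff_nonempty.2 hcover
  have hYN : extNbhd E Y ⊆ extNbhd E X := by
    simpa only [Finset.inter_univ] using extNbhd_sdiff_subset E X Finset.univ
  have hXC : (X ∩ C).Nonempty :=
    Finset.not_disjoint_iff_nonempty_inter.1 fun h => hN.not_ge (hE X hX h)
  have hcoverC : C ⊆ X ∪ extNbhd E X :=
    calc C ⊆ (X ∩ C ∪ extNbhd E (X ∩ C)) ∩ C :=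
          Finset.subset_inter (hC (X ∩ C) Finset.inter_subset_right hXC
            ((Finset.card_le_card (extNbhd_inter_subset E X C)).trans_lt hN)) subset_rfl
      _ ⊆ X ∪ extNbhd E X := by
          rw [Finset.union_inter_distrib_right]
          exact Finset.union_subset_union (Finset.inter_subset_left.trans
            Finset.inter_subset_left) (extNbhd_inter_subset E X C)
  have hYC : Disjoint Y C := Finset.sdiff_disjoint.mono_right hcoverC
  exact hN.not_ge ((hE Y hYne hYC).trans (Finset.card_le_card hYN))

/-- The component of a vertex of `G - S` has all its neighbours in `S`, so there are fewer than
`d` of them. -/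
theorem HasNoSmallCut.isKConnected (hd : 1 ≤ d) (hE : HasNoSmallCut d E Finset.univ)
    (hV : d + 1 ≤ Fintype.card V) {G : SimpleGraph V}
    (hG : ∀ u v, u ≠ v → s(u, v) ∈ E → G.Adj u v) : IsKConnected d G := by
  refine ⟨hV, fun S hS => ?_⟩
  obtain ⟨v, hvS⟩ : ∃ v, v ∈ (S : Set V)ᶜ := by
    obtain ⟨v, hv⟩ := Finset.exists_mem_notMem_of_card_lt_card
      (show S.card < Finset.univ.card by rw [Finset.card_univ]; omega)
    exact ⟨v, by simpa using hv.2⟩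
  set K := G.induce (S : Set V)ᶜ
  set X : Finset V :=
    Finset.univ.filter fun w => ∃ hw : w ∈ (S : Set V)ᶜ, K.Reachable ⟨v, hvS⟩ ⟨w, hw⟩ with hX
  have hvX : v ∈ X := by simpa [hX] using hvS
  have hNS : extNbhd E X ⊆ S := by
    intro y hy
    obtain ⟨hyX, x, hx, hxy⟩ := mem_extNbhd.1 hy
    by_contra hyS
    have hne : x ≠ y := fun h => hyX (h ▸ hx)
    obtain ⟨hxS, hvx⟩ := (Finset.mem_filter.1 hx).2
    have hadj : K.Adj ⟨x, hxS⟩ ⟨y, by simpa using hyS⟩ := hG x y hne hxy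
    exact hyX (Finset.mem_filter.2 ⟨Finset.mem_univ y, _, hvx.trans hadj.reachable⟩)
  have hcover := hE X (Finset.subset_univ X) ⟨v, hvX⟩ (by
    rw [Finset.inter_univ]
    have := Finset.card_le_card hNS
    omega)
  have hreach : ∀ w : ((S : Set V)ᶜ : Set V), K.Reachable ⟨v, hvS⟩ w := by
    rintro ⟨w, hw⟩
    rcases Finset.mem_union.1 (hcover (Finset.mem_univ w)) with hwX | hwN
    · exact (Finset.mem_filter.1 hwX).2.2
    · exact absurd (hNS hwN) hw
  exact (connected_iff _).2 ⟨fun a b => (hreach a).symm.trans (hreach b), ⟨⟨v, hvS⟩⟩⟩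

end TightSets

section LocalSparsity

variable {V : Type*} [Fintype V] [DecidableEq V] {g : ℕ} {H : Finset (Sym2 V)} {X Y : Finset V}

theorem isLocallySparse_empty (g : ℕ) : IsLocallySparse g (∅ : Finset (Sym2 V)) := fun X hX _ => by
  simpa [edgesWithin] using hX.card_pos

theorem IsLocallySparse.exists_of_not_insert (hH : IsLocallySparse g H) {x : Sym2 V}
    (hx : ¬ IsLocallySparse g (insert x H)) :
    ∃ X : Finset V, X.card ≤ g ∧ (∀ v ∈ x, v ∈ X) ∧ X.card ≤ (edgesWithin H X).card + 1 := by
  simp only [IsLocallySparse, not_forall, not_le, Nat.lt_succ_iff] at hx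
  obtain ⟨X, hX, hXg, hXc⟩ := hx
  have hXH := hH X hX hXg
  rw [edgesWithin, Finset.filter_insert] at hXc
  split_ifs at hXc with hin
  · exact ⟨X, hXg, hin, hXc.trans (Finset.card_insert_le _ _)⟩
  · exact absurd hXc (Nat.not_le.2 hXH)

theorem IsLocallySparse.card_union_le (hH : IsLocallySparse g H) (hXg : X.card ≤ g)
    (hX : X.card ≤ (edgesWithin H X).card + 1) (hY : Y.card ≤ (edgesWithin H Y).card + 1)
    (hXY : (X ∩ Y).Nonempty) : (X ∪ Y).card ≤ (edgesWithin H (X ∪ Y)).card + 1 := by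
  have hsparse := hH _ hXY ((Finset.card_le_card Finset.inter_subset_left).trans hXg)
  have hinter : edgesWithin H X ∩ edgesWithin H Y = edgesWithin H (X ∩ Y) := by
    ext x
    simp only [edgesWithin, Finset.mem_inter, Finset.mem_filter]
    grind
  have hunion : edgesWithin H X ∪ edgesWithin H Y ⊆ edgesWithin H (X ∪ Y) := by
    intro x
    simp only [edgesWithin, Finset.mem_union, Finset.mem_filter]
    grind
  have hvertices := Finset.card_union_add_card_inter X Y
  have hedges := Finset.card_union_add_card_inter (edgesWithin H X) (edgesWithin H Y)
  have hle := Finset.card_le_card hunion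
  rw [hinter] at hedges
  omega

end LocalSparsity

section OnlineRule

variable {V : Type*}

/-- The edges proposed in the rounds `a, …, b - 1` of the sequence of proposals `e`. -/
def proposed [DecidableEq V] (e : ℕ → Sym2 V) (a b : ℕ) : Finset (Sym2 V) :=
  (Finset.Ico a b).image e

theorem mem_proposed [DecidableEq V] {e : ℕ → Sym2 V} {a b : ℕ} {x : Sym2 V} :
    x ∈ proposed e a b ↔ ∃ i, (a ≤ i ∧ i < b) ∧ e i = x := by
  simp [proposed]

/-- An acceptance rule for a sequence of proposals: whether the edge `x` proposed in round `s` is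
accepted may depend on `s`, on `x` and on the graphs `h i` built before the rounds `i ≤ s`. -/
abbrev OnlineRule (V : Type*) : Type _ := ℕ → (ℕ → Finset (Sym2 V)) → Sym2 V → Prop

namespace OnlineRule

variable [DecidableEq V] (R : OnlineRule V) {e e' : ℕ → Sym2 V} {s t i : ℕ} {x : Sym2 V}

/-- `R.snapshots e s i` is the graph built before round `i`, as known before round `s`. It is empty
for `i > s`, which makes it definable by recursion on `s`. -/
def snapshots (e : ℕ → Sym2 V) : ℕ → ℕ → Finset (Sym2 V)
  | 0 => fun _ => ∅
  | s + 1 => Function.update (snapshots e s) (s + 1)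
      (if R s (snapshots e s) (e s) then insert (e s) (snapshots e s s) else snapshots e s s)

/-- The set of edges accepted before round `s`. -/
def graph (e : ℕ → Sym2 V) (s : ℕ) : Finset (Sym2 V) := R.snapshots e s s

/-- The edge proposed in round `s` is accepted. -/
def Accepts (e : ℕ → Sym2 V) (s : ℕ) : Prop := R s (R.snapshots e s) (e s)

theorem snapshots_eq_graph (e : ℕ → Sym2 V) (h : i ≤ s) : R.snapshots e s i = R.graph e i := by
  induction s with
  | zero => rw [Nat.le_zero.1 h, graph]
  | succ s ih =>
    rcases h.eq_or_lt with rfl | h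
    · rfl
    · rw [snapshots, Function.update_of_ne h.ne, ih (Nat.lt_succ_iff.1 h)]

theorem snapshots_congr (h : ∀ i < s, e i = e' i) : R.snapshots e s = R.snapshots e' s := by
  induction s with
  | zero => rfl
  | succ s ih => rw [snapshots, snapshots, ih fun i hi => h i (by omega), h s s.lt_succ_self]

theorem graph_congr (h : ∀ i < s, e i = e' i) : R.graph e s = R.graph e' s :=
  congrFun (R.snapshots_congr h) s

theorem accepts_congr (h : ∀ i ≤ s, e i = e' i) : R.Accepts e s ↔ R.Accepts e' s := by
  rw [Accepts, Accepts, R.snapshots_congr fun i hi => h i hi.le, h s le_rfl]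

theorem graph_zero (e : ℕ → Sym2 V) : R.graph e 0 = ∅ := rfl

theorem graph_succ (e : ℕ → Sym2 V) (s : ℕ) :
    R.graph e (s + 1) = if R.Accepts e s then insert (e s) (R.graph e s) else R.graph e s := by
  rw [graph, snapshots, Function.update_self]
  rfl

theorem graph_mono (e : ℕ → Sym2 V) : Monotone (R.graph e) :=
  monotone_nat_of_le_succ fun s => by
    rw [graph_succ]
    split_ifs
    · exact Finset.subset_insert _ _
    · exact le_rfl

theorem mem_graph : x ∈ R.graph e s ↔ ∃ i < s, e i = x ∧ R.Accepts e i := by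
  induction s with
  | zero => simp [graph_zero]
  | succ s ih =>
    rw [Nat.exists_lt_succ_right, ← ih, graph_succ]
    split_ifs with hacc <;> simp [hacc, or_comm, eq_comm]

theorem graph_subset_proposed (e : ℕ → Sym2 V) (s : ℕ) : R.graph e s ⊆ proposed e 0 s := by
  intro x hx
  obtain ⟨i, hi, rfl, -⟩ := R.mem_graph.1 hx
  exact mem_proposed.2 ⟨i, ⟨i.zero_le, hi⟩, rfl⟩

theorem notMem_graph {N : ℕ} (he : Set.InjOn e (Set.Iio N)) (hi : i < N) (hs : s ≤ i) :
    e i ∉ R.graph e s := by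
  intro h
  obtain ⟨j, hj, hji, -⟩ := R.mem_graph.1 h
  exact (hj.trans_le hs).ne (he (hj.trans_le (hs.trans hi.le)) hi hji)

theorem accepts_of_mem_graph {N : ℕ} (he : Set.InjOn e (Set.Iio N)) (hi : i < N) (hs : s ≤ N)
    (h : e i ∈ R.graph e s) : R.Accepts e i := by
  obtain ⟨j, hj, hji, hacc⟩ := R.mem_graph.1 h
  rwa [← he (hj.trans_le hs) hi hji]

end OnlineRule

end OnlineRule

/-- The parameters of Builder's strategy. The rounds are divided into a core phase, which ends at
`coreEnd` and plays on the vertex set `base`, a pairing phase of length `pairLen`, a filling phase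
of length `fillLen` and `d` levels of length `levelLen`. Vertex sets of size at most `m` are made to
expand by local sparsity, and two disjoint sets of `r` vertices are joined by a proposed edge. -/
structure StrategyParams (V : Type*) where
  d : ℕ
  m : ℕ
  r : ℕ
  coreEnd : ℕ
  pairLen : ℕ
  fillLen : ℕ
  levelLen : ℕ
  base : Finset V

namespace StrategyParams

section Times

variable {V : Type*} (p : StrategyParams V)

/-- The end of the pairing phase. -/
def pairEnd : ℕ := p.coreEnd + p.pairLen

/-- The end of the filling phase. -/
def fillEnd : ℕ := p.pairEnd + p.fillLen

/-- The first round of level `k`. -/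
def levelStart (k : ℕ) : ℕ := p.fillEnd + k * p.levelLen

/-- The number of rounds in which the strategy accepts edges. -/
def horizon : ℕ := p.levelStart p.d

theorem coreEnd_le_pairEnd : p.coreEnd ≤ p.pairEnd := Nat.le_add_right _ _

theorem pairEnd_le_fillEnd : p.pairEnd ≤ p.fillEnd := Nat.le_add_right _ _

theorem coreEnd_le_fillEnd : p.coreEnd ≤ p.fillEnd :=
  p.coreEnd_le_pairEnd.trans p.pairEnd_le_fillEnd

theorem fillEnd_le_levelStart (k : ℕ) : p.fillEnd ≤ p.levelStart k := Nat.le_add_right _ _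

theorem fillEnd_le_horizon : p.fillEnd ≤ p.horizon := p.fillEnd_le_levelStart p.d

theorem levelStart_zero : p.levelStart 0 = p.fillEnd := by simp [levelStart]

theorem levelStart_succ (k : ℕ) : p.levelStart (k + 1) = p.levelStart k + p.levelLen := by
  rw [levelStart, levelStart, Nat.succ_mul, Nat.add_assoc]

theorem levelStart_mono : Monotone p.levelStart :=
  monotone_nat_of_le_succ fun k => (p.levelStart_succ k).symm ▸ Nat.le_add_right _ _

theorem levelStart_succ_le_horizon {k : ℕ} (hk : k < p.d) : p.levelStart (k + 1) ≤ p.horizon :=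
  p.levelStart_mono hk

end Times

section Rule

variable {V : Type*} [Fintype V] [DecidableEq V] (p : StrategyParams V) {e : ℕ → Sym2 V} {s i : ℕ}

/-- A subset of `base` of almost full size in which the graph with edge set `E` has no small cut,
if there is one. -/
def pickCore (E : Finset (Sym2 V)) : Finset V :=
  if h : ∃ C ⊆ p.base, p.base.card ≤ C.card + p.r ∧ HasNoSmallCut p.d E C then h.choose else ∅

/-- Builder's acceptance rule. In the core phase all edges inside `base` are accepted. In the
pairing and filling phases Builder constructs the *bulk*, a locally sparse graph; she accepts an
edge whose endpoints both have bulk degree below `d` in the pairing phase, and one with at least one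
such endpoint in the filling phase. In level `k` she accepts an edge that joins a minimal tight set
with fewer than `d` neighbours in the core to a new vertex of the core. -/
def rule : OnlineRule V := fun s h x =>
  if s < p.coreEnd then ∀ v ∈ x, v ∈ p.base
  else if s < p.pairEnd then
    (∀ v ∈ x, edgeDegree (h s \ h p.coreEnd) v < p.d) ∧
      IsLocallySparse (p.m + p.d) (insert x (h s \ h p.coreEnd))
  else if s < p.fillEnd then
    (∃ v ∈ x, edgeDegree (h s \ h p.coreEnd) v < p.d) ∧
      IsLocallySparse (p.m + p.d) (insert x (h s \ h p.coreEnd))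
  else if s < p.horizon then
    ∃ A ∈ minimalTightSets ((s - p.fillEnd) / p.levelLen)
        (h (p.levelStart ((s - p.fillEnd) / p.levelLen))) (p.pickCore (h p.coreEnd)),
      ∃ a ∈ A, ∃ c ∈ p.pickCore (h p.coreEnd), x = s(a, c) ∧ c ∉ extNbhd (h s) A ∧
        (extNbhd (h s) A ∩ p.pickCore (h p.coreEnd)).card < p.d
  else False

/-- The core chosen at the end of the core phase. -/
def core (e : ℕ → Sym2 V) : Finset V := p.pickCore (p.rule.graph e p.coreEnd)

/-- The edges accepted after the core phase and before round `s`. -/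
def bulk (e : ℕ → Sym2 V) (s : ℕ) : Finset (Sym2 V) :=
  p.rule.graph e s \ p.rule.graph e p.coreEnd

variable {p}

theorem accepts_iff_of_lt_coreEnd (hs : s < p.coreEnd) :
    p.rule.Accepts e s ↔ ∀ v ∈ e s, v ∈ p.base := by
  rw [OnlineRule.Accepts, rule, if_pos hs]

theorem accepts_iff_of_lt_pairEnd (hs : p.coreEnd ≤ s) (hs' : s < p.pairEnd) :
    p.rule.Accepts e s ↔ (∀ v ∈ e s, edgeDegree (p.bulk e s) v < p.d) ∧
      IsLocallySparse (p.m + p.d) (insert (e s) (p.bulk e s)) := by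
  rw [OnlineRule.Accepts, rule, if_neg hs.not_gt, if_pos hs',
    p.rule.snapshots_eq_graph e le_rfl, p.rule.snapshots_eq_graph e hs, bulk]

theorem accepts_iff_of_lt_fillEnd (hs : p.pairEnd ≤ s) (hs' : s < p.fillEnd) :
    p.rule.Accepts e s ↔ (∃ v ∈ e s, edgeDegree (p.bulk e s) v < p.d) ∧
      IsLocallySparse (p.m + p.d) (insert (e s) (p.bulk e s)) := by
  have hcore : p.coreEnd ≤ s := p.coreEnd_le_pairEnd.trans hs
  rw [OnlineRule.Accepts, rule, if_neg hcore.not_gt, if_neg hs.not_gt, if_pos hs',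
    p.rule.snapshots_eq_graph e le_rfl, p.rule.snapshots_eq_graph e hcore, bulk]

theorem accepts_iff_of_level {k : ℕ} (hk : k < p.d) (hs : p.levelStart k ≤ s)
    (hs' : s < p.levelStart (k + 1)) :
    p.rule.Accepts e s ↔ ∃ A ∈ minimalTightSets k (p.rule.graph e (p.levelStart k)) (p.core e),
      ∃ a ∈ A, ∃ c ∈ p.core e, e s = s(a, c) ∧ c ∉ extNbhd (p.rule.graph e s) A ∧
        (extNbhd (p.rule.graph e s) A ∩ p.core e).card < p.d := by
  have hfill : p.fillEnd ≤ s := (p.fillEnd_le_levelStart k).trans hs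
  have hpair : p.pairEnd ≤ s := p.pairEnd_le_fillEnd.trans hfill
  have hcore : p.coreEnd ≤ s := p.coreEnd_le_pairEnd.trans hpair
  have hdiv : (s - p.fillEnd) / p.levelLen = k := by
    simp only [levelStart] at hs hs'
    exact Nat.div_eq_of_lt_le (by omega) (by omega)
  rw [OnlineRule.Accepts, rule, if_neg hcore.not_gt, if_neg hpair.not_gt, if_neg hfill.not_gt,
    if_pos (hs'.trans_le (p.levelStart_succ_le_horizon hk)), hdiv,
    p.rule.snapshots_eq_graph e le_rfl, p.rule.snapshots_eq_graph e hcore,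
    p.rule.snapshots_eq_graph e hs, core]

theorem isLocallySparse_of_accepts (hs : p.coreEnd ≤ s) (hs' : s < p.fillEnd)
    (hacc : p.rule.Accepts e s) : IsLocallySparse (p.m + p.d) (insert (e s) (p.bulk e s)) := by
  rcases lt_or_ge s p.pairEnd with hpair | hpair
  · exact ((accepts_iff_of_lt_pairEnd hs hpair).1 hacc).2
  · exact ((accepts_iff_of_lt_fillEnd hpair hs').1 hacc).2

theorem bulk_coreEnd : p.bulk e p.coreEnd = ∅ := Finset.sdiff_self _

theorem bulk_mono : Monotone (p.bulk e) := fun _ _ h =>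
  Finset.sdiff_subset_sdiff (p.rule.graph_mono e h) le_rfl

theorem bulk_subset_graph : p.bulk e s ⊆ p.rule.graph e s := Finset.sdiff_subset

theorem bulk_succ_of_accepts (he : Set.InjOn e (Set.Iio p.horizon)) (hs : p.coreEnd ≤ s)
    (hs' : s < p.horizon) (hacc : p.rule.Accepts e s) :
    p.bulk e (s + 1) = insert (e s) (p.bulk e s) := by
  rw [bulk, bulk, OnlineRule.graph_succ, if_pos hacc,
    Finset.insert_sdiff_of_notMem _ (p.rule.notMem_graph he hs' hs)]

theorem bulk_succ_of_not_accepts (hacc : ¬ p.rule.Accepts e s) : p.bulk e (s + 1) = p.bulk e s := by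
  rw [bulk, bulk, OnlineRule.graph_succ, if_neg hacc]

theorem mem_bulk_of_accepts (he : Set.InjOn e (Set.Iio p.horizon)) (hi : p.coreEnd ≤ i)
    (hi' : i < p.horizon) (his : i < s) (hacc : p.rule.Accepts e i) : e i ∈ p.bulk e s :=
  bulk_mono his ((bulk_succ_of_accepts he hi hi' hacc).symm ▸ Finset.mem_insert_self _ _)

theorem isLocallySparse_bulk (he : Set.InjOn e (Set.Iio p.horizon)) (hs : p.coreEnd ≤ s)
    (hs' : s ≤ p.fillEnd) : IsLocallySparse (p.m + p.d) (p.bulk e s) := by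
  induction s, hs using Nat.le_induction with
  | base => exact bulk_coreEnd (e := e) ▸ isLocallySparse_empty _
  | succ s hs ih =>
    by_cases hacc : p.rule.Accepts e s
    · rw [bulk_succ_of_accepts he hs (hs'.trans p.fillEnd_le_horizon) hacc]
      exact isLocallySparse_of_accepts hs hs' hacc
    · rw [bulk_succ_of_not_accepts hacc]
      exact ih (Nat.le_of_succ_le hs')

end Rule

end StrategyParams

namespace StrategyParams

section Good

variable {V : Type*} [Fintype V] [DecidableEq V]

/-- The inequalities between the parameters under which the strategy works. -/
structure Admissible (p : StrategyParams V) : Prop where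
  two_le_d : 2 ≤ p.d
  one_le_r : 1 ≤ p.r
  le_card_base : 4 * (p.d + 1) * p.r ≤ p.base.card

/-- Level `k` joins every minimal tight set with at least `m` vertices to the core, even if `d - 1`
core vertices must be avoided. -/
def HitsTightSets (p : StrategyParams V) (k : ℕ) (e : ℕ → Sym2 V) : Prop :=
  ∀ A ∈ minimalTightSets k (p.rule.graph e (p.levelStart k)) (p.core e), p.m ≤ A.card →
    ∀ D ⊆ p.core e, D.card = p.d - 1 →
      ∃ a ∈ A, ∃ c ∈ p.core e, c ∉ D ∧
        s(a, c) ∈ proposed e (p.levelStart k) (p.levelStart (k + 1))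

/-- The properties of a sequence of proposals that make Builder succeed; a random sequence has them
with high probability. The number `β` bounds the number of edges accepted in the core phase. -/
structure IsGood (p : StrategyParams V) (β : ℕ) (e : ℕ → Sym2 V) : Prop where
  injOn : Set.InjOn e (Set.Iio p.horizon)
  not_isDiag : ∀ i < p.horizon, ¬ (e i).IsDiag
  joined_base : IsJoined p.r (proposed e 0 p.coreEnd) p.base
  joined_univ : IsJoined p.r (proposed e p.coreEnd p.pairEnd) Finset.univ
  degree_fill : ∀ v, p.d + 1 ≤ edgeDegree (proposed e p.pairEnd p.fillEnd) v
  sparse : ∀ X : Finset V, X.card ≤ 2 * (p.m + p.d) →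
    (edgesWithin (proposed e 0 p.fillEnd) X).card ≤ X.card
  card_base : (edgesWithin (proposed e 0 p.coreEnd) p.base).card ≤ β
  hits : ∀ k < p.d, ExpandsOutside k (p.rule.graph e (p.levelStart k)) (p.core e) →
    p.HitsTightSets k e

variable {p : StrategyParams V} {β : ℕ} {e : ℕ → Sym2 V} {s i j : ℕ} {v : V}

theorem edgesWithin_proposed_base_subset :
    edgesWithin (proposed e 0 p.coreEnd) p.base ⊆ p.rule.graph e p.coreEnd := by
  intro x hx
  obtain ⟨hx, hbase⟩ := Finset.mem_filter.1 hx
  obtain ⟨i, hi, rfl⟩ := mem_proposed.1 hx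
  exact p.rule.mem_graph.2 ⟨i, hi.2, rfl, (accepts_iff_of_lt_coreEnd hi.2).2 hbase⟩

theorem graph_coreEnd_subset :
    p.rule.graph e p.coreEnd ⊆ edgesWithin (proposed e 0 p.coreEnd) p.base := by
  intro x hx
  obtain ⟨i, hi, rfl, hacc⟩ := p.rule.mem_graph.1 hx
  exact Finset.mem_filter.2
    ⟨mem_proposed.2 ⟨i, ⟨i.zero_le, hi⟩, rfl⟩, (accepts_iff_of_lt_coreEnd hi).1 hacc⟩

/-- The vertices of bulk degree below `d` at the end of the pairing phase. -/
def unsaturated (p : StrategyParams V) (e : ℕ → Sym2 V) : Finset V :=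
  Finset.univ.filter fun v => edgeDegree (p.bulk e p.pairEnd) v < p.d

theorem mem_unsaturated : v ∈ p.unsaturated e ↔ edgeDegree (p.bulk e p.pairEnd) v < p.d :=
  Finset.mem_filter_univ v

theorem Admissible.core_spec (hp : p.Admissible)
    (hproposed : IsJoined p.r (proposed e 0 p.coreEnd) p.base) :
    p.core e ⊆ p.base ∧ p.base.card ≤ (p.core e).card + p.r ∧
      HasNoSmallCut p.d (p.rule.graph e p.coreEnd) (p.core e) := by
  have hjoined : IsJoined p.r (p.rule.graph e p.coreEnd) p.base := by
    intro X Y hX hY hXY hXr hYr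
    obtain ⟨x, hx, y, hy, hxy⟩ := hproposed X Y hX hY hXY hXr hYr
    refine ⟨x, hx, y, hy, edgesWithin_proposed_base_subset (Finset.mem_filter.2 ⟨hxy, ?_⟩)⟩
    simp [hX hx, hY hy]
  have hcore := hjoined.exists_hasNoSmallCut (one_le_two.trans hp.two_le_d) hp.one_le_r
    hp.le_card_base
  rw [core, pickCore, dif_pos hcore]
  exact hcore.choose_spec

namespace IsGood

variable (hgood : p.IsGood β e)
include hgood

theorem core_spec (hp : p.Admissible) : p.core e ⊆ p.base ∧ p.base.card ≤ (p.core e).card + p.r ∧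
    HasNoSmallCut p.d (p.rule.graph e p.coreEnd) (p.core e) :=
  hp.core_spec hgood.joined_base

theorem d_le_card_core (hp : p.Admissible) : p.d ≤ (p.core e).card := by
  have hcard := (hgood.core_spec hp).2.1
  have hbase := hp.le_card_base
  have hr := hp.one_le_r
  nlinarith

theorem card_graph_coreEnd_le : (p.rule.graph e p.coreEnd).card ≤ β :=
  (Finset.card_le_card graph_coreEnd_subset).trans hgood.card_base

theorem not_isDiag_of_mem_graph (hs : s ≤ p.horizon) :
    ∀ x ∈ p.rule.graph e s, ¬ x.IsDiag := by
  intro x hx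
  obtain ⟨i, hi, rfl, -⟩ := p.rule.mem_graph.1 hx
  exact hgood.not_isDiag i (hi.trans_le hs)

theorem notMem_bulk_of_not_isLocallySparse (hi : p.coreEnd ≤ i) (hi' : i < p.fillEnd)
    (hrej : ¬ IsLocallySparse (p.m + p.d) (insert (e i) (p.bulk e i))) :
    e i ∉ p.bulk e p.fillEnd := fun hmem =>
  hrej (isLocallySparse_of_accepts hi hi' (p.rule.accepts_of_mem_graph hgood.injOn
    (hi'.trans_le p.fillEnd_le_horizon) p.fillEnd_le_horizon (bulk_subset_graph hmem)))

theorem exists_obstruction (hi : p.coreEnd ≤ i) (hi' : i < p.fillEnd)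
    (hrej : ¬ IsLocallySparse (p.m + p.d) (insert (e i) (p.bulk e i))) :
    ∃ X : Finset V, X.card ≤ p.m + p.d ∧ (∀ v ∈ e i, v ∈ X) ∧
      X.card ≤ (edgesWithin (p.bulk e p.fillEnd) X).card + 1 := by
  obtain ⟨X, hX, hiX, hXcard⟩ :=
    (isLocallySparse_bulk hgood.injOn hi hi'.le).exists_of_not_insert hrej
  have hle := Finset.card_le_card (edgesWithin_mono (bulk_mono (p := p) (e := e) hi'.le) X)
  exact ⟨X, hX, hiX, by omega⟩

/-- Two rejected edges at `v` would come with two obstructions whose union spans, together with the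
two edges, more edges than vertices. -/
theorem eq_of_not_isLocallySparse (hi : p.coreEnd ≤ i) (hi' : i < p.fillEnd) (hj : p.coreEnd ≤ j)
    (hj' : j < p.fillEnd) (hvi : v ∈ e i) (hvj : v ∈ e j)
    (hirej : ¬ IsLocallySparse (p.m + p.d) (insert (e i) (p.bulk e i)))
    (hjrej : ¬ IsLocallySparse (p.m + p.d) (insert (e j) (p.bulk e j))) : e i = e j := by
  by_contra hne
  obtain ⟨X, hXg, hiX, hX⟩ := hgood.exists_obstruction hi hi' hirej
  obtain ⟨Y, hYg, hjY, hY⟩ := hgood.exists_obstruction hj hj' hjrej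
  have hbulk := isLocallySparse_bulk hgood.injOn p.coreEnd_le_fillEnd le_rfl
  have hunion := hbulk.card_union_le hXg hX hY ⟨v, Finset.mem_inter.2 ⟨hiX v hvi, hjY v hvj⟩⟩
  have hibulk := hgood.notMem_bulk_of_not_isLocallySparse hi hi' hirej
  have hjbulk := hgood.notMem_bulk_of_not_isLocallySparse hj hj' hjrej
  have hsub : insert (e i) (insert (e j) (edgesWithin (p.bulk e p.fillEnd) (X ∪ Y))) ⊆
      edgesWithin (proposed e 0 p.fillEnd) (X ∪ Y) := by
    refine Finset.insert_subset (Finset.mem_filter.2 ⟨mem_proposed.2 ⟨i, ⟨i.zero_le, hi'⟩, rfl⟩,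
      fun u hu => Finset.mem_union_left _ (hiX u hu)⟩) (Finset.insert_subset (Finset.mem_filter.2
      ⟨mem_proposed.2 ⟨j, ⟨j.zero_le, hj'⟩, rfl⟩, fun u hu => Finset.mem_union_right _ (hjY u hu)⟩)
      (edgesWithin_mono (bulk_subset_graph.trans (p.rule.graph_subset_proposed e _)) _))
  have hcard : (insert (e i) (insert (e j) (edgesWithin (p.bulk e p.fillEnd) (X ∪ Y)))).card =
      (edgesWithin (p.bulk e p.fillEnd) (X ∪ Y)).card + 2 := by
    rw [Finset.card_insert_of_notMem, Finset.card_insert_of_notMem]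
    · exact fun h => hjbulk (Finset.mem_filter.1 h).1
    · simp only [Finset.mem_insert, not_or]
      exact ⟨hne, fun h => hibulk (Finset.mem_filter.1 h).1⟩
  have hle := Finset.card_le_card hsub
  have hspan := hgood.sparse (X ∪ Y) ((Finset.card_union_le X Y).trans (by omega))
  omega

/-- At most one edge at `v` is rejected for violating local sparsity. -/
theorem card_le_edgeDegree_bulk_succ (hs : s ≤ p.fillEnd) {S : Finset (Sym2 V)}
    (hv : ∀ x ∈ S, v ∈ x)
    (hS : ∀ x ∈ S, ∃ i, p.coreEnd ≤ i ∧ i < s ∧ e i = x ∧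
      (IsLocallySparse (p.m + p.d) (insert (e i) (p.bulk e i)) → p.rule.Accepts e i)) :
    S.card ≤ edgeDegree (p.bulk e s) v + 1 := by
  have hrejected : ∀ x ∈ S \ p.bulk e s, ∃ i, p.coreEnd ≤ i ∧ i < p.fillEnd ∧ e i = x ∧
      ¬ IsLocallySparse (p.m + p.d) (insert (e i) (p.bulk e i)) := by
    intro x hx
    obtain ⟨hxS, hxbulk⟩ := Finset.mem_sdiff.1 hx
    obtain ⟨i, hi, his, rfl, hacc⟩ := hS x hxS
    exact ⟨i, hi, his.trans_le hs, rfl, fun hsparse => hxbulk (mem_bulk_of_accepts hgood.injOn hi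
      (his.trans_le (hs.trans p.fillEnd_le_horizon)) his (hacc hsparse))⟩
  have hone : (S \ p.bulk e s).card ≤ 1 := by
    refine Finset.card_le_one.2 fun x hx y hy => ?_
    have hvx := hv x (Finset.mem_sdiff.1 hx).1
    have hvy := hv y (Finset.mem_sdiff.1 hy).1
    obtain ⟨i, hi, hi', rfl, hirej⟩ := hrejected x hx
    obtain ⟨j, hj, hj', rfl, hjrej⟩ := hrejected y hy
    exact hgood.eq_of_not_isLocallySparse hi hi' hj hj' hvx hvy hirej hjrej
  have hdeg : (S ∩ p.bulk e s).card ≤ edgeDegree (p.bulk e s) v :=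
    Finset.card_le_card fun x hx => Finset.mem_filter.2
      ⟨(Finset.mem_inter.1 hx).2, hv x (Finset.mem_inter.1 hx).1⟩
  have hsplit := Finset.card_inter_add_card_sdiff S (p.bulk e s)
  omega

theorem le_edgeDegree_bulk_fillEnd (v : V) : p.d ≤ edgeDegree (p.bulk e p.fillEnd) v := by
  by_contra! hlow
  have hle := hgood.card_le_edgeDegree_bulk_succ le_rfl
    (S := (proposed e p.pairEnd p.fillEnd).filter fun x => v ∈ x)
    (fun x hx => (Finset.mem_filter.1 hx).2) fun x hx => by
      obtain ⟨hx, hvx⟩ := Finset.mem_filter.1 hx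
      obtain ⟨i, ⟨hi, hi'⟩, rfl⟩ := mem_proposed.1 hx
      exact ⟨i, p.coreEnd_le_pairEnd.trans hi, hi', rfl, fun hsparse =>
        (accepts_iff_of_lt_fillEnd hi hi').2
          ⟨⟨v, hvx, (edgeDegree_mono (bulk_mono hi'.le) v).trans_lt hlow⟩, hsparse⟩⟩
  have hdeg := hgood.degree_fill v
  rw [edgeDegree] at hdeg
  omega

/-- An edge proposed in the pairing phase between two vertices that are still unsaturated at its end
is accepted unless it violates local sparsity. -/
theorem card_unsaturated_filter_le (hv : v ∈ p.unsaturated e) :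
    ((p.unsaturated e).filter fun w => s(v, w) ∈ proposed e p.coreEnd p.pairEnd).card ≤ p.d := by
  have hle := hgood.card_le_edgeDegree_bulk_succ p.pairEnd_le_fillEnd (v := v)
    (S := ((p.unsaturated e).filter fun w => s(v, w) ∈ proposed e p.coreEnd p.pairEnd).image
      fun w => s(v, w))
    (Finset.forall_mem_image.2 fun w _ => Sym2.mem_mk_left v w) fun x hx => by
      obtain ⟨w, hw, rfl⟩ := Finset.mem_image.1 hx
      obtain ⟨hwU, hvw⟩ := Finset.mem_filter.1 hw
      obtain ⟨i, ⟨hi, hi'⟩, hiw⟩ := mem_proposed.1 hvw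
      refine ⟨i, hi, hi', hiw, fun hsparse => (accepts_iff_of_lt_pairEnd hi hi').2
        ⟨fun u hu => (edgeDegree_mono (bulk_mono hi'.le) u).trans_lt ?_, hsparse⟩⟩
      rcases Sym2.mem_iff.1 (hiw ▸ hu) with rfl | rfl
      · exact mem_unsaturated.1 hv
      · exact mem_unsaturated.1 hwU
  rw [Finset.card_image_of_injective _ fun _ _ h => Sym2.congr_right.1 h] at hle
  have hdeg := mem_unsaturated.1 hv
  omega

theorem card_unsaturated_le : (p.unsaturated e).card ≤ (p.d + 1) * (2 * p.r) := by
  obtain ⟨I, -, hI, hcard⟩ := exists_independent_subset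
    (r := fun v w => s(v, w) ∈ proposed e p.coreEnd p.pairEnd)
    (fun v w h => by rwa [Sym2.eq_swap]) (p.unsaturated e)
    fun v hv => by convert hgood.card_unsaturated_filter_le hv
  refine hcard.trans (Nat.mul_le_mul_left _ ?_)
  by_contra! hlarge
  obtain ⟨X, hXI, hXcard⟩ := Finset.exists_subset_card_eq (s := I) (n := p.r) (by omega)
  have hrest := Finset.card_sdiff_of_subset hXI
  obtain ⟨x, hx, y, hy, hxy⟩ := hgood.joined_univ X (I \ X) (Finset.subset_univ _)
    (Finset.subset_univ _) Finset.disjoint_sdiff hXcard.ge (by omega)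
  have hyI := Finset.mem_sdiff.1 hy
  exact hI x (hXI hx) y hyI.1 (fun h => hyI.2 (h ▸ hx)) hxy

end IsGood

end Good

end StrategyParams

section TruncatedDegree

variable {V : Type*} [DecidableEq V] {x : Sym2 V} {H : Finset (Sym2 V)}

theorem edgeDegree_insert (hx : x ∉ H) (v : V) :
    edgeDegree (insert x H) v = edgeDegree H v + if v ∈ x then 1 else 0 := by
  rw [edgeDegree, edgeDegree, Finset.filter_insert]
  split_ifs
  · exact Finset.card_insert_of_notMem fun h => hx (Finset.mem_filter.1 h).1
  · rfl

variable [Fintype V]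

/-- The degree sum of the graph with edge set `H`, with degrees truncated at `d`. -/
def truncatedDegreeSum (d : ℕ) (H : Finset (Sym2 V)) : ℕ := ∑ v, min d (edgeDegree H v)

theorem truncatedDegreeSum_insert (d : ℕ) (hx : x ∉ H) :
    truncatedDegreeSum d (insert x H) =
      truncatedDegreeSum d H + (Finset.univ.filter fun v => v ∈ x ∧ edgeDegree H v < d).card := by
  rw [truncatedDegreeSum, truncatedDegreeSum, Finset.card_filter, ← Finset.sum_add_distrib]
  refine Finset.sum_congr rfl fun v _ => ?_
  rw [edgeDegree_insert hx]
  by_cases hvx : v ∈ x <;> by_cases hd : edgeDegree H v < d <;> simp [hvx, hd] <;> omega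

theorem truncatedDegreeSum_le (d : ℕ) (H : Finset (Sym2 V)) :
    truncatedDegreeSum d H ≤ d * Fintype.card V := by
  simpa [truncatedDegreeSum, mul_comm] using
    Finset.sum_le_card_nsmul Finset.univ (fun v => min d (edgeDegree H v)) d
      fun _ _ => min_le_left _ _

theorem le_truncatedDegreeSum_add (d : ℕ) (H : Finset (Sym2 V)) :
    d * Fintype.card V ≤
      truncatedDegreeSum d H + d * (Finset.univ.filter fun v => edgeDegree H v < d).card := by
  have hconst : ∑ _v : V, d = d * Fintype.card V := by simp [mul_comm]
  rw [truncatedDegreeSum, Finset.card_filter, Finset.mul_sum, ← Finset.sum_add_distrib, ← hconst]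
  refine Finset.sum_le_sum fun v _ => ?_
  split_ifs <;> omega

end TruncatedDegree

namespace StrategyParams.IsGood

variable {V : Type*} [Fintype V] [DecidableEq V] {p : StrategyParams V} {β : ℕ} {e : ℕ → Sym2 V}
  {s : ℕ} (hgood : p.IsGood β e)
include hgood

section BulkSize

theorem notMem_bulk (hs : s < p.fillEnd) : e s ∉ p.bulk e s := fun h =>
  p.rule.notMem_graph hgood.injOn (hs.trans_le p.fillEnd_le_horizon) le_rfl (bulk_subset_graph h)

/-- In the pairing phase each accepted edge raises two truncated degrees. -/
theorem two_mul_card_bulk_le (hs : p.coreEnd ≤ s) (hs' : s ≤ p.pairEnd) :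
    2 * (p.bulk e s).card ≤ truncatedDegreeSum p.d (p.bulk e s) := by
  induction s, hs using Nat.le_induction with
  | base => simp [bulk_coreEnd]
  | succ s hs ih =>
    have hfill : s < p.fillEnd := hs'.trans p.pairEnd_le_fillEnd
    have hhorizon := hfill.trans_le p.fillEnd_le_horizon
    specialize ih (Nat.le_of_succ_le hs')
    by_cases hacc : p.rule.Accepts e s
    · have hnew := hgood.notMem_bulk hfill
      have hlow := ((accepts_iff_of_lt_pairEnd hs hs').1 hacc).1
      have hends : (Finset.univ.filter fun v => v ∈ e s ∧ edgeDegree (p.bulk e s) v < p.d).card =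
          2 := by
        rw [← Sym2.card_toFinset_of_not_isDiag _ (hgood.not_isDiag s hhorizon)]
        congr 1
        ext v
        simpa using hlow v
      rw [bulk_succ_of_accepts hgood.injOn hs hhorizon hacc, truncatedDegreeSum_insert _ hnew,
        Finset.card_insert_of_notMem hnew, hends]
      omega
    · rwa [bulk_succ_of_not_accepts hacc]

/-- In the filling phase each accepted edge raises at least one truncated degree. -/
theorem card_bulk_add_truncatedDegreeSum_le (hs : p.pairEnd ≤ s) (hs' : s ≤ p.fillEnd) :
    (p.bulk e s).card + truncatedDegreeSum p.d (p.bulk e p.pairEnd) ≤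
      (p.bulk e p.pairEnd).card + truncatedDegreeSum p.d (p.bulk e s) := by
  induction s, hs using Nat.le_induction with
  | base => exact le_rfl
  | succ s hs ih =>
    specialize ih (Nat.le_of_succ_le hs')
    by_cases hacc : p.rule.Accepts e s
    · have hnew := hgood.notMem_bulk hs'
      obtain ⟨v, hv, hlow⟩ := ((accepts_iff_of_lt_fillEnd hs hs').1 hacc).1
      have hpos : 0 < (Finset.univ.filter fun v => v ∈ e s ∧
          edgeDegree (p.bulk e s) v < p.d).card :=
        Finset.card_pos.2 ⟨v, Finset.mem_filter.2 ⟨Finset.mem_univ v, hv, hlow⟩⟩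
      rw [bulk_succ_of_accepts hgood.injOn (p.coreEnd_le_pairEnd.trans hs)
        (hs'.trans p.fillEnd_le_horizon) hacc, truncatedDegreeSum_insert _ hnew,
        Finset.card_insert_of_notMem hnew]
      omega
    · rwa [bulk_succ_of_not_accepts hacc]

theorem two_mul_card_bulk_fillEnd_le : 2 * (p.bulk e p.fillEnd).card ≤
    p.d * Fintype.card V + 2 * (p.d * ((p.d + 1) * (2 * p.r))) := by
  have hpair := hgood.two_mul_card_bulk_le p.coreEnd_le_pairEnd le_rfl
  have hfill := hgood.card_bulk_add_truncatedDegreeSum_le p.pairEnd_le_fillEnd le_rfl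
  have hupper := truncatedDegreeSum_le p.d (p.bulk e p.fillEnd)
  have hlower := le_truncatedDegreeSum_add p.d (p.bulk e p.pairEnd)
  have hunsat := Nat.mul_le_mul_left p.d hgood.card_unsaturated_le
  rw [unsaturated] at hunsat
  omega

theorem two_mul_card_graph_fillEnd_le : 2 * (p.rule.graph e p.fillEnd).card ≤
    2 * β + p.d * Fintype.card V + 2 * (p.d * ((p.d + 1) * (2 * p.r))) := by
  have hsplit : (p.bulk e p.fillEnd).card + (p.rule.graph e p.coreEnd).card =
      (p.rule.graph e p.fillEnd).card :=
    Finset.card_sdiff_add_card_eq_card (p.rule.graph_mono e p.coreEnd_le_fillEnd)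
  have hcore := hgood.card_graph_coreEnd_le
  have hbulk := hgood.two_mul_card_bulk_fillEnd_le
  omega

end BulkSize

section Levels

variable {k : ℕ} {A : Finset V}

theorem le_card_of_mem_minimalTightSets (hp : p.Admissible) (hk : k < p.d)
    (hA : A ∈ minimalTightSets k (p.rule.graph e (p.levelStart k)) (p.core e)) :
    p.m ≤ A.card := by
  by_contra! hsmall
  obtain ⟨hne, -, htight⟩ := (mem_minimalTightSets.1 hA).prop
  have hexpand := (isLocallySparse_bulk hgood.injOn p.coreEnd_le_fillEnd le_rfl).le_card_extNbhd
    hp.two_le_d (fun x hx => hgood.not_isDiag_of_mem_graph p.fillEnd_le_horizon x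
      (bulk_subset_graph hx)) hgood.le_edgeDegree_bulk_fillEnd hne (by omega)
  have hmono := Finset.card_le_card (extNbhd_mono (bulk_subset_graph.trans
    (p.rule.graph_mono e (p.fillEnd_le_levelStart k))) A)
  omega

omit hgood in
/-- Each edge accepted in level `k` gives some minimal tight set one of at most `d` new neighbours
in the core. -/
theorem card_graph_level_le (hk : k < p.d) (hs : p.levelStart k ≤ s)
    (hs' : s ≤ p.levelStart (k + 1)) :
    (p.rule.graph e s).card ≤ (p.rule.graph e (p.levelStart k)).card +
      ∑ A ∈ minimalTightSets k (p.rule.graph e (p.levelStart k)) (p.core e),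
        min p.d (extNbhd (p.rule.graph e s) A ∩ p.core e).card := by
  induction s, hs using Nat.le_induction with
  | base => exact Nat.le_add_right _ _
  | succ s hs ih =>
    specialize ih (Nat.le_of_succ_le hs')
    rw [OnlineRule.graph_succ]
    split_ifs with hacc
    · obtain ⟨A, hA, a, ha, c, hc, hac, hcA, hlow⟩ := (accepts_iff_of_level hk hs hs').1 hacc
      have hmono : ∀ B, extNbhd (p.rule.graph e s) B ∩ p.core e ⊆
          extNbhd (insert (e s) (p.rule.graph e s)) B ∩ p.core e := fun B =>
        Finset.inter_subset_inter_right (extNbhd_mono (Finset.subset_insert _ _) B)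
      have hcA' : c ∉ A := Finset.disjoint_right.1 (mem_minimalTightSets.1 hA).prop.2.1 hc
      have hgrow : extNbhd (p.rule.graph e s) A ∩ p.core e ⊂
          extNbhd (insert (e s) (p.rule.graph e s)) A ∩ p.core e :=
        (Finset.ssubset_iff_of_subset (hmono A)).2 ⟨c, Finset.mem_inter.2 ⟨mem_extNbhd.2
          ⟨hcA', a, ha, hac ▸ Finset.mem_insert_self _ _⟩, hc⟩,
          fun h => hcA (Finset.mem_inter.1 h).1⟩
      have hmin : min p.d (extNbhd (p.rule.graph e s) A ∩ p.core e).card <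
          min p.d (extNbhd (insert (e s) (p.rule.graph e s)) A ∩ p.core e).card := by
        have := Finset.card_lt_card hgrow
        omega
      have hsum := Finset.sum_lt_sum
        (fun B _ => min_le_min (le_refl p.d) (Finset.card_le_card (hmono B))) ⟨A, hA, hmin⟩
      have hinsert := Finset.card_insert_le (e s) (p.rule.graph e s)
      omega
    · exact ih

theorem le_card_extNbhd_inter_core (hp : p.Admissible) (hk : k < p.d)
    (hE : ExpandsOutside k (p.rule.graph e (p.levelStart k)) (p.core e))
    (hA : A ∈ minimalTightSets k (p.rule.graph e (p.levelStart k)) (p.core e)) :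
    p.d ≤ (extNbhd (p.rule.graph e (p.levelStart (k + 1))) A ∩ p.core e).card := by
  by_contra! hlow
  have hcore := hgood.d_le_card_core hp
  obtain ⟨D, hsub, hDcore, hD⟩ := Finset.exists_subsuperset_card_eq (n := p.d - 1)
    (Finset.inter_subset_right :
      extNbhd (p.rule.graph e (p.levelStart (k + 1))) A ∩ p.core e ⊆ p.core e)
    (by omega) (by omega)
  obtain ⟨a, ha, c, hc, hcD, hac⟩ := hgood.hits k hk hE A hA
    (hgood.le_card_of_mem_minimalTightSets hp hk hA) D hDcore hD
  obtain ⟨i, ⟨hi, hi'⟩, hiac⟩ := mem_proposed.1 hac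
  have hcA : c ∉ A := Finset.disjoint_right.1 (mem_minimalTightSets.1 hA).prop.2.1 hc
  have hcnew : c ∉ extNbhd (p.rule.graph e (p.levelStart (k + 1))) A := fun h =>
    hcD (hsub (Finset.mem_inter.2 ⟨h, hc⟩))
  have hmono := extNbhd_mono (p.rule.graph_mono e hi'.le) A
  have hacc : p.rule.Accepts e i := (accepts_iff_of_level hk hi hi').2
    ⟨A, hA, a, ha, c, hc, hiac, fun h => hcnew (hmono h),
      (Finset.card_le_card (Finset.inter_subset_inter_right hmono)).trans_lt hlow⟩
  exact hcnew (mem_extNbhd.2 ⟨hcA, a, ha, p.rule.mem_graph.2 ⟨i, hi', hiac, hacc⟩⟩)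

theorem expandsOutside_levelStart (hp : p.Admissible) (hk : k ≤ p.d) :
    ExpandsOutside k (p.rule.graph e (p.levelStart k)) (p.core e) := by
  induction k with
  | zero => exact fun _ _ _ => Nat.zero_le _
  | succ k ih =>
    exact ExpandsOutside.succ_of_minimalTightSets
      (p.rule.graph_mono e (p.levelStart_mono k.le_succ)) hk
      fun A hA => hgood.le_card_extNbhd_inter_core hp hk (ih (Nat.le_of_succ_le hk)) hA

theorem mul_card_graph_levelStart_le (hp : p.Admissible) (hk : k ≤ p.d) :
    p.m * (p.rule.graph e (p.levelStart k)).card ≤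
      p.m * (p.rule.graph e p.fillEnd).card + k * (p.d * Fintype.card V) := by
  induction k with
  | zero => simp [levelStart_zero]
  | succ k ih =>
    specialize ih (Nat.le_of_succ_le hk)
    have hlevel := card_graph_level_le (e := e) hk (p.levelStart_mono k.le_succ) le_rfl
    have hsum := Finset.sum_le_card_nsmul
      (minimalTightSets k (p.rule.graph e (p.levelStart k)) (p.core e))
      (fun A => min p.d (extNbhd (p.rule.graph e (p.levelStart (k + 1))) A ∩ p.core e).card) p.d
      fun _ _ => min_le_left _ _
    have hnumber := (hgood.expandsOutside_levelStart hp
      (Nat.le_of_succ_le hk)).card_minimalTightSets_mul_le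
      fun A hA => hgood.le_card_of_mem_minimalTightSets hp hk hA
    rw [smul_eq_mul] at hsum
    nlinarith

theorem hasNoSmallCut_graph_horizon (hp : p.Admissible) :
    HasNoSmallCut p.d (p.rule.graph e p.horizon) Finset.univ :=
  ((hgood.core_spec hp).2.2.mono (p.rule.graph_mono e
    (p.coreEnd_le_fillEnd.trans p.fillEnd_le_horizon))).univ_of_expandsOutside
    (hgood.expandsOutside_levelStart hp le_rfl)

theorem two_mul_card_graph_horizon_le (hp : p.Admissible) :
    2 * p.m * (p.rule.graph e p.horizon).card ≤
      p.m * (2 * β + p.d * Fintype.card V + 2 * (p.d * ((p.d + 1) * (2 * p.r)))) +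
        2 * (p.d * (p.d * Fintype.card V)) := by
  have hlevels := hgood.mul_card_graph_levelStart_le hp le_rfl
  have hfill := Nat.mul_le_mul_left p.m hgood.two_mul_card_graph_fillEnd_le
  rw [horizon]
  linarith

end Levels

end StrategyParams.IsGood

section FiniteProbability

variable {Ω : Type*} [Fintype Ω]

theorem Pr_eq_card_div (P : Ω → Prop) [DecidablePred P] :
    Pr P = ((Finset.univ.filter P).card : ℝ) / Fintype.card Ω := by
  rw [Pr]
  congr!

theorem Pr_mono {P Q : Ω → Prop} (h : ∀ ω, P ω → Q ω) : Pr P ≤ Pr Q := by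
  rw [Pr, Pr]
  gcongr with ω
  exact h ω

theorem Pr_le_one (P : Ω → Prop) : Pr P ≤ 1 :=
  div_le_one_of_le₀ (by exact_mod_cast Finset.card_le_univ _) (by positivity)

theorem one_sub_Pr_not_le [Nonempty Ω] (P : Ω → Prop) : 1 - Pr (fun ω => ¬ P ω) ≤ Pr P := by
  have hΩ : (0 : ℝ) < Fintype.card Ω := by exact_mod_cast Fintype.card_pos
  have hcard : (Finset.univ.filter P).card + (Finset.univ.filter (fun ω => ¬ P ω)).card =
      Fintype.card Ω := Finset.card_filter_add_card_filter_not P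
  rw [Pr_eq_card_div fun ω => ¬ P ω, Pr, sub_le_iff_le_add, ← add_div, le_div_iff₀ hΩ, one_mul]
  exact_mod_cast hcard.ge

theorem Pr_or_le (P Q : Ω → Prop) : Pr (fun ω => P ω ∨ Q ω) ≤ Pr P + Pr Q := by
  rw [Pr_eq_card_div fun ω => P ω ∨ Q ω, Pr, Pr, ← add_div, Finset.filter_or]
  gcongr
  exact_mod_cast Finset.card_union_le _ _

theorem Pr_exists_mem_le {ι : Type*} (S : Finset ι) (P : ι → Ω → Prop) {q : ℝ}
    (h : ∀ i ∈ S, Pr (P i) ≤ q) : Pr (fun ω => ∃ i ∈ S, P i ω) ≤ S.card * q := by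
  induction S using Finset.induction_on with
  | empty => simp [Pr]
  | insert a S ha ih =>
    rw [Finset.forall_mem_insert] at h
    simp only [Finset.exists_mem_insert]
    calc Pr (fun ω => P a ω ∨ ∃ i ∈ S, P i ω) ≤ Pr (P a) + Pr (fun ω => ∃ i ∈ S, P i ω) :=
          Pr_or_le _ _
      _ ≤ q + S.card * q := add_le_add h.1 (ih h.2)
      _ = (insert a S).card * q := by rw [Finset.card_insert_of_notMem ha]; push_cast; ring

theorem Pr_le_of_fiberwise {κ : Type*} (key : Ω → κ) (P : Ω → Prop) {q : ℝ} (hq : 0 ≤ q)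
    (h : ∀ ω₀, ((Finset.univ.filter (fun ω => key ω = key ω₀ ∧ P ω)).card : ℝ) ≤
      q * (Finset.univ.filter (fun ω => key ω = key ω₀)).card) : Pr P ≤ q := by
  refine div_le_of_le_mul₀ (by positivity) hq ?_
  rw [← Finset.card_univ, Finset.card_eq_sum_card_fiberwise (s := Finset.univ.filter P) (f := key)
      (t := Finset.univ.image key) (by intro ω _; simp),
    Finset.card_eq_sum_card_fiberwise (s := Finset.univ) (f := key)
      (t := Finset.univ.image key) (by intro ω _; simp)]
  push_cast
  rw [Finset.mul_sum]
  refine Finset.sum_le_sum fun k hk => ?_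
  obtain ⟨ω₀, _, rfl⟩ := Finset.mem_image.1 hk
  simpa only [Finset.filter_filter, and_comm] using h ω₀

end FiniteProbability

section RandomBijections

variable {α β : Type*} [DecidableEq α] [DecidableEq β]

/-- A family `B` of bijections is closed under exchanging the values at any two points outside
`D`. This is the symmetry that survives conditioning a uniform bijection on its values on `D`. -/
def IsSwapInvariantOff (D : Finset α) (B : Finset (α ≃ β)) : Prop :=
  ∀ σ ∈ B, ∀ x ∉ D, ∀ y ∉ D, (Equiv.swap x y).trans σ ∈ B

namespace IsSwapInvariantOff

omit [DecidableEq β] in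
theorem filter {D : Finset α} {B : Finset (α ≃ β)} (hB : IsSwapInvariantOff D B)
    (Q : Finset α) (P : α → β → Prop)
    [DecidablePred fun σ : α ≃ β => ∀ q ∈ Q, P q (σ q)] :
    IsSwapInvariantOff (D ∪ Q) (B.filter fun σ => ∀ q ∈ Q, P q (σ q)) := by
  intro σ hσ x hx y hy
  rw [Finset.mem_union, not_or] at hx hy
  rw [Finset.mem_filter] at hσ ⊢
  refine ⟨hB σ hσ.1 x hx.1 y hy.1, fun q hq => ?_⟩
  have hfix : Equiv.swap x y q = q :=
    Equiv.swap_apply_of_ne_of_ne (ne_of_mem_of_not_mem hq hx.2) (ne_of_mem_of_not_mem hq hy.2)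
  rw [Equiv.trans_apply, hfix]
  exact hσ.2 q hq

variable [Fintype α] {D : Finset α} {B : Finset (α ≃ β)}

omit [Fintype α] in
theorem card_filter_mem_eq (hB : IsSwapInvariantOff D B) (T : Finset β) {x y : α} (hx : x ∉ D)
    (hy : y ∉ D) : (B.filter fun σ => σ x ∈ T).card = (B.filter fun σ => σ y ∈ T).card := by
  refine Finset.card_nbij' (fun σ => (Equiv.swap x y).trans σ) (fun σ => (Equiv.swap x y).trans σ)
    ?_ ?_ (fun σ _ => by ext z; simp) (fun σ _ => by ext z; simp)
  · intro σ hσ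
    rw [Finset.mem_coe, Finset.mem_filter] at hσ ⊢
    exact ⟨hB σ hσ.1 x hx y hy, by simpa using hσ.2⟩
  · intro σ hσ
    rw [Finset.mem_coe, Finset.mem_filter] at hσ ⊢
    exact ⟨hB σ hσ.1 x hx y hy, by simpa using hσ.2⟩

theorem mul_card_filter_mem (hB : IsSwapInvariantOff D B) (T : Finset β) {x : α} (hx : x ∉ D) :
    (Fintype.card α - D.card) * (B.filter fun σ => σ x ∈ T).card =
      ∑ σ ∈ B, (Dᶜ.filter fun y => σ y ∈ T).card := by
  simp only [Finset.card_filter _ Dᶜ]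
  rw [Finset.sum_comm]
  simp only [← Finset.card_filter _ B]
  rw [Finset.sum_congr rfl fun y hy =>
    hB.card_filter_mem_eq T (Finset.mem_compl.1 hy) hx, Finset.sum_const, smul_eq_mul,
    Finset.card_compl]

theorem mul_card_filter_insert_le (hB : IsSwapInvariantOff D B) {T : Finset β} {c : ℕ}
    (hc : ∀ σ ∈ B, (Dᶜ.filter fun y => σ y ∈ T).card ≤ c) {x : α} {Q : Finset α}
    (hQ : Disjoint Q D) (hxD : x ∉ D) (hxQ : x ∉ Q) :
    (Fintype.card α - D.card) * (B.filter fun σ => ∀ q ∈ insert x Q, σ q ∈ T).card ≤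
      c * (B.filter fun σ => ∀ q ∈ Q, σ q ∈ T).card := by
  set B' := B.filter fun σ => ∀ q ∈ Q, σ q ∈ T with hB'
  have hsplit : B.filter (fun σ => ∀ q ∈ insert x Q, σ q ∈ T) = B'.filter fun σ => σ x ∈ T := by
    rw [hB', Finset.filter_filter]
    simp only [Finset.forall_mem_insert, and_comm]
  have hcount : ∀ σ ∈ B', ((D ∪ Q)ᶜ.filter fun y => σ y ∈ T).card + Q.card ≤ c := by
    intro σ hσ
    rw [hB', Finset.mem_filter] at hσ
    have hdisj : Disjoint ((D ∪ Q)ᶜ.filter fun y => σ y ∈ T) Q :=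
      Finset.disjoint_left.2 fun y hy hyQ => by simp_all
    rw [← Finset.card_union_of_disjoint hdisj]
    refine (Finset.card_le_card fun y hy => ?_).trans (hc σ hσ.1)
    rw [Finset.mem_filter, Finset.mem_compl]
    rcases Finset.mem_union.1 hy with hy | hy
    · simp_all
    · exact ⟨Finset.disjoint_left.1 hQ hy, hσ.2 y hy⟩
  have hsum : (Fintype.card α - (D ∪ Q).card) * (B'.filter fun σ => σ x ∈ T).card +
      B'.card * Q.card ≤ B'.card * c := by
    have hinv : IsSwapInvariantOff (D ∪ Q) B' := hB.filter Q fun _ b => b ∈ T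
    rw [hinv.mul_card_filter_mem T (by simp [hxD, hxQ])]
    simpa only [Finset.sum_add_distrib, Finset.sum_const, smul_eq_mul]
      using Finset.sum_le_card_nsmul B' _ c hcount
  have hfilter : (B'.filter fun σ => σ x ∈ T).card ≤ B'.card := Finset.card_filter_le _ _
  have hcard : Fintype.card α - D.card = Fintype.card α - (D ∪ Q).card + Q.card := by
    have := Finset.card_le_univ (D ∪ Q)
    rw [Finset.card_union_of_disjoint hQ.symm] at this ⊢
    omega
  rw [hsplit, hcard, add_mul]
  nlinarith

theorem pow_mul_card_filter_le (hB : IsSwapInvariantOff D B) {T : Finset β} {c : ℕ}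
    (hc : ∀ σ ∈ B, (Dᶜ.filter fun y => σ y ∈ T).card ≤ c) {Q : Finset α} (hQ : Disjoint Q D) :
    (Fintype.card α - D.card) ^ Q.card * (B.filter fun σ => ∀ q ∈ Q, σ q ∈ T).card ≤
      c ^ Q.card * B.card := by
  induction Q using Finset.induction_on with
  | empty => simp
  | insert x Q hxQ ih =>
    rw [Finset.disjoint_insert_left] at hQ
    have hinsert := hB.mul_card_filter_insert_le hc hQ.2 hQ.1 hxQ
    rw [Finset.card_insert_of_notMem hxQ, pow_succ, pow_succ, mul_assoc]
    calc _ ≤ (Fintype.card α - D.card) ^ Q.card *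
            (c * (B.filter fun σ => ∀ q ∈ Q, σ q ∈ T).card) := by gcongr
      _ = c * ((Fintype.card α - D.card) ^ Q.card *
            (B.filter fun σ => ∀ q ∈ Q, σ q ∈ T).card) := by ring
      _ ≤ c * (c ^ Q.card * B.card) := by exact Nat.mul_le_mul_left c (ih hQ.2)
      _ = _ := by ring

end IsSwapInvariantOff

theorem one_sub_div_pow_le_exp {k M N : ℝ} (hk : 0 ≤ k) (hkM : k ≤ M) (hM : 0 < M) (hMN : M ≤ N)
    (q : ℕ) : ((M - k) / M) ^ q ≤ Real.exp (-(k * q / N)) := by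
  have hbase : (M - k) / M ≤ Real.exp (-(k / N)) := by
    rw [sub_div, div_self hM.ne']
    have : k / N ≤ k / M := div_le_div_of_nonneg_left hk hM hMN
    linarith [Real.one_sub_le_exp_neg (k / N)]
  calc ((M - k) / M) ^ q ≤ Real.exp (-(k / N)) ^ q := by
        have := sub_nonneg.2 hkM
        gcongr
    _ = Real.exp (-(k * q / N)) := by rw [← Real.exp_nat_mul]; congr 1; ring

theorem IsSwapInvariantOff.card_filter_avoid_le [Fintype α] {D : Finset α} {B : Finset (α ≃ β)}
    (hB : IsSwapInvariantOff D B) {I : Finset β} {k : ℕ}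
    (hk : ∀ σ ∈ B, k ≤ (Dᶜ.filter fun y => σ y ∈ I).card) {Q : Finset α} (hQ : Disjoint Q D) :
    ((B.filter fun σ => ∀ q ∈ Q, σ q ∉ I).card : ℝ) ≤
      Real.exp (-((k : ℝ) * Q.card / Fintype.card α)) * B.card := by
  rcases B.eq_empty_or_nonempty with rfl | ⟨σ₀, hσ₀⟩
  · simp
  rcases Q.eq_empty_or_nonempty with rfl | ⟨q₀, hq₀⟩
  · simp
  have hD : D.card < Fintype.card α :=
    Finset.card_lt_univ_of_notMem (Finset.disjoint_left.1 hQ hq₀)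
  have hkD : k ≤ Fintype.card α - D.card := by
    rw [← Finset.card_compl]
    exact (hk σ₀ hσ₀).trans (Finset.card_filter_le _ _)
  have : Fintype β := Fintype.ofEquiv α σ₀
  have hcount : ∀ σ ∈ B, (Dᶜ.filter fun y => σ y ∈ Iᶜ).card ≤ Fintype.card α - D.card - k := by
    intro σ hσ
    have hsplit := Finset.card_filter_add_card_filter_not (s := Dᶜ) fun y => σ y ∈ I
    simp only [Finset.mem_compl]
    rw [Finset.card_compl] at hsplit
    have := hk σ hσ
    omega
  have hpow := hB.pow_mul_card_filter_le hcount hQ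
  simp only [Finset.mem_compl] at hpow
  have hM : (0 : ℝ) < (Fintype.card α - D.card : ℕ) := by exact_mod_cast Nat.sub_pos_of_lt hD
  calc ((B.filter fun σ => ∀ q ∈ Q, σ q ∉ I).card : ℝ)
      ≤ ((Fintype.card α - D.card : ℕ) - k : ℝ) ^ Q.card /
          (Fintype.card α - D.card : ℕ) ^ Q.card * B.card := by
        rw [div_mul_eq_mul_div, le_div_iff₀ (by positivity), mul_comm, ← Nat.cast_sub hkD]
        exact_mod_cast hpow
    _ ≤ _ := by
        rw [← div_pow]
        gcongr
        exact one_sub_div_pow_le_exp k.cast_nonneg (by exact_mod_cast hkD) hM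
          (by exact_mod_cast Nat.sub_le _ _) _

omit [DecidableEq α] in
theorem card_filter_apply_mem [Fintype α] (σ : α ≃ β) (I : Finset β) :
    (Finset.univ.filter fun x => σ x ∈ I).card = I.card := by
  rw [← Finset.card_map σ.symm.toEmbedding]
  congr 1
  ext x
  simp

variable [Fintype α] [Fintype β]

theorem isSwapInvariantOff_univ : IsSwapInvariantOff ∅ (Finset.univ : Finset (α ≃ β)) :=
  fun _ _ _ _ _ _ => Finset.mem_univ _

theorem Pr_forall_mem_le (I : Finset β) (J : Finset α) :
    Pr (fun σ : α ≃ β => ∀ q ∈ J, σ q ∈ I) ≤ ((I.card : ℝ) / Fintype.card α) ^ J.card := by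
  rcases J.eq_empty_or_nonempty with rfl | ⟨x, -⟩
  · simpa using Pr_le_one _
  have : 0 < Fintype.card α := Fintype.card_pos_iff.2 ⟨x⟩
  have h := isSwapInvariantOff_univ.pow_mul_card_filter_le (α := α) (β := β) (T := I)
    (fun σ _ => by rw [Finset.compl_empty, card_filter_apply_mem]) (Finset.disjoint_empty_right J)
  rw [Finset.card_empty, Nat.sub_zero, Finset.card_univ] at h
  rw [Pr_eq_card_div, div_pow]
  refine div_le_of_le_mul₀ (by positivity) (by positivity) ?_
  rw [div_mul_eq_mul_div, le_div_iff₀ (by positivity), mul_comm]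
  exact_mod_cast h

theorem Pr_forall_mem_and_forall_notMem_le (I : Finset β) {J Q : Finset α} (hJQ : Disjoint Q J) :
    Pr (fun σ : α ≃ β => (∀ q ∈ J, σ q ∈ I) ∧ ∀ q ∈ Q, σ q ∉ I) ≤
      ((I.card : ℝ) / Fintype.card α) ^ J.card *
        Real.exp (-(((I.card - J.card : ℕ) : ℝ) * Q.card / Fintype.card α)) := by
  set B := Finset.univ.filter fun σ : α ≃ β => ∀ q ∈ J, σ q ∈ I with hB
  have hinv : IsSwapInvariantOff J B := by
    simpa only [Finset.empty_union] using isSwapInvariantOff_univ.filter J fun _ b => b ∈ I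
  have hcount : ∀ σ ∈ B, I.card - J.card ≤ (Jᶜ.filter fun y => σ y ∈ I).card := by
    intro σ _
    rw [← card_filter_apply_mem σ I]
    refine (Finset.le_card_sdiff J _).trans (Finset.card_le_card fun y hy => ?_)
    simpa [and_comm] using hy
  have havoid := hinv.card_filter_avoid_le hcount hJQ
  have hinto := Pr_forall_mem_le I J
  rw [Pr_eq_card_div, ← hB] at hinto
  rw [Pr_eq_card_div, ← Finset.filter_filter, ← hB]
  calc _ ≤ Real.exp (-(((I.card - J.card : ℕ) : ℝ) * Q.card / Fintype.card α)) * B.card /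
          (Fintype.card (α ≃ β) : ℝ) := by gcongr
    _ = (B.card : ℝ) / Fintype.card (α ≃ β) *
          Real.exp (-(((I.card - J.card : ℕ) : ℝ) * Q.card / Fintype.card α)) := by ring
    _ ≤ _ := by gcongr

theorem Pr_forall_notMem_le (I : Finset β) (Q : Finset α) :
    Pr (fun σ : α ≃ β => ∀ q ∈ Q, σ q ∉ I) ≤
      Real.exp (-((I.card : ℝ) * Q.card / Fintype.card α)) := by
  simpa using Pr_forall_mem_and_forall_notMem_le I (Finset.disjoint_empty_right Q)

theorem Pr_le_card_filter_apply_mem_le (I : Finset β) (Q : Finset α) (L : ℕ) :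
    Pr (fun σ : α ≃ β => L ≤ (Q.filter fun q => σ q ∈ I).card) ≤
      Real.exp (Real.exp 1 * ((Q.card : ℝ) * I.card / Fintype.card α) - L) := by
  set x : ℝ := (Q.card : ℝ) * I.card / Fintype.card α with hx
  have hunion : Pr (fun σ : α ≃ β => L ≤ (Q.filter fun q => σ q ∈ I).card) ≤
      (Q.card.choose L : ℕ) * ((I.card : ℝ) / Fintype.card α) ^ L := by
    rw [← Finset.card_powersetCard]
    refine (Pr_mono fun σ hσ => ?_).trans (Pr_exists_mem_le _ (fun J σ => ∀ q ∈ J, σ q ∈ I) ?_)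
    · obtain ⟨J, hJ, hJcard⟩ := Finset.exists_subset_card_eq hσ
      exact ⟨J, Finset.mem_powersetCard.2 ⟨hJ.trans (Finset.filter_subset _ _), hJcard⟩,
        fun q hq => (Finset.mem_filter.1 (hJ hq)).2⟩
    · intro J hJ
      rw [← (Finset.mem_powersetCard.1 hJ).2]
      exact Pr_forall_mem_le I J
  have hexp := Real.pow_div_factorial_le_exp (Real.exp 1 * x) (by positivity) L
  rw [mul_pow, ← Real.exp_nat_mul, mul_one] at hexp
  calc _ ≤ (Q.card.choose L : ℕ) * ((I.card : ℝ) / Fintype.card α) ^ L := hunion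
    _ ≤ (Q.card : ℝ) ^ L / L.factorial * ((I.card : ℝ) / Fintype.card α) ^ L := by
        gcongr
        exact Nat.choose_le_pow_div L Q.card
    _ = x ^ L / L.factorial := by rw [hx, div_mul_eq_mul_div, ← mul_pow, mul_div_assoc]
    _ = Real.exp L * x ^ L / L.factorial * Real.exp (-L) := by rw [Real.exp_neg]; field_simp
    _ ≤ Real.exp (Real.exp 1 * x) * Real.exp (-L) := by gcongr
    _ = Real.exp (Real.exp 1 * x - L) := by rw [← Real.exp_add, sub_eq_add_neg]

theorem card_filter_eqOn_avoid_le (σ₀ : α ≃ β) {D Q : Finset α} {I : Finset β}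
    (hI : ∀ x ∈ D, σ₀ x ∉ I) (hQ : Disjoint Q D) :
    ((Finset.univ.filter fun σ : α ≃ β =>
        (∀ x ∈ D, σ x = σ₀ x) ∧ ∀ q ∈ Q, σ q ∉ I).card : ℝ) ≤
      Real.exp (-((I.card : ℝ) * Q.card / Fintype.card α)) *
        (Finset.univ.filter fun σ : α ≃ β => ∀ x ∈ D, σ x = σ₀ x).card := by
  have hinv : IsSwapInvariantOff D
      (Finset.univ.filter fun σ : α ≃ β => ∀ x ∈ D, σ x = σ₀ x) := by
    simpa only [Finset.empty_union] using isSwapInvariantOff_univ.filter D fun x b => b = σ₀ x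
  rw [← Finset.filter_filter]
  refine hinv.card_filter_avoid_le (fun σ hσ => ?_) hQ
  rw [← card_filter_apply_mem σ I]
  refine Finset.card_le_card fun x hx => ?_
  rw [Finset.mem_filter] at hx hσ
  refine Finset.mem_filter.2 ⟨Finset.mem_compl.2 fun hxD => hI x hxD ?_, hx.2⟩
  rw [← hσ.2 x hxD]
  exact hx.2

end RandomBijections

section EdgeOrderings

variable {n : ℕ}

/-- The edges of the complete graph on `Fin n`. -/
abbrev KnEdge (n : ℕ) : Type := (completeGraph (Fin n)).edgeSet

theorem card_knEdge (n : ℕ) : Fintype.card (KnEdge n) = numEdges n := rfl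

theorem two_mul_numEdges (n : ℕ) : 2 * numEdges n = n * (n - 1) := by
  have hchoose : numEdges n = n.choose 2 := by
    rw [← Fintype.card_fin n, ← card_edgeFinset_top_eq_card_choose_two, edgeFinset,
      Set.toFinset_card, Fintype.card_fin]
    rfl
  rw [hchoose, Nat.choose_two_right]
  exact Nat.mul_div_cancel' (Nat.even_mul_pred_self n).two_dvd

instance (n : ℕ) : Nonempty (EdgeOrdering n) := ⟨Fintype.equivFinOfCardEq rfl⟩

theorem KnEdge.not_isDiag (x : KnEdge n) : ¬ (x : Sym2 (Fin n)).IsDiag :=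
  SimpleGraph.not_isDiag_of_mem_edgeSet _ x.2

/-- The infinite sequence of proposals given by an edge ordering. Once the edges are exhausted, it
continues with an arbitrary diagonal element. -/
def proposals [NeZero n] (σ : EdgeOrdering n) (i : ℕ) : Sym2 (Fin n) :=
  if h : i < numEdges n then (σ.symm ⟨i, h⟩ : KnEdge n) else s(0, 0)

/-- The rounds from `a` to `b - 1`. -/
def window (n a b : ℕ) : Finset (Fin (numEdges n)) :=
  Finset.univ.filter fun i => a ≤ (i : ℕ) ∧ (i : ℕ) < b

theorem mem_window {a b : ℕ} {i : Fin (numEdges n)} :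
    i ∈ window n a b ↔ a ≤ (i : ℕ) ∧ (i : ℕ) < b :=
  Finset.mem_filter_univ i

theorem card_window {a b : ℕ} (hb : b ≤ numEdges n) : (window n a b).card = b - a := by
  rw [← Nat.card_Ico, ← Finset.card_map Fin.valEmbedding]
  congr 1
  ext i
  simp only [Finset.mem_map, mem_window, Finset.mem_Ico, Fin.valEmbedding_apply]
  exact ⟨fun ⟨_, hj, hji⟩ => hji ▸ hj, fun h => ⟨⟨i, by omega⟩, h, rfl⟩⟩

section Proposals

variable [NeZero n] (σ : EdgeOrdering n)

theorem proposals_of_lt {i : ℕ} (h : i < numEdges n) :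
    proposals σ i = (σ.symm ⟨i, h⟩ : KnEdge n) := dif_pos h

theorem proposals_apply (x : KnEdge n) : proposals σ (σ x) = x := by
  rw [proposals_of_lt σ (σ x).2, Fin.eta, Equiv.symm_apply_apply]

theorem injOn_proposals : Set.InjOn (proposals σ) (Set.Iio (numEdges n)) := by
  intro i hi _ hj hij
  rw [proposals_of_lt σ hi, proposals_of_lt σ hj] at hij
  exact Fin.mk.inj (σ.symm.injective (Subtype.ext hij))

theorem not_isDiag_proposals {i : ℕ} (hi : i < numEdges n) : ¬ (proposals σ i).IsDiag := by
  rw [proposals_of_lt σ hi]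
  exact KnEdge.not_isDiag _

theorem coe_mem_proposed {a b : ℕ} (x : KnEdge n) :
    (x : Sym2 (Fin n)) ∈ proposed (proposals σ) a b ↔ σ x ∈ window n a b := by
  rw [mem_proposed, mem_window]
  refine ⟨fun ⟨i, hi, hix⟩ => ?_, fun h => ⟨σ x, h, proposals_apply σ x⟩⟩
  by_cases hlt : i < numEdges n
  · rw [proposals_of_lt σ hlt, SetCoe.ext_iff, Equiv.symm_apply_eq] at hix
    rwa [← hix]
  · rw [proposals, dif_neg hlt] at hix
    exact (x.not_isDiag (hix ▸ by simp)).elim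

theorem card_filter_proposed {a b : ℕ} (hb : b ≤ numEdges n) (P : Sym2 (Fin n) → Prop)
    [DecidablePred P] : ((proposed (proposals σ) a b).filter P).card =
      ((Finset.univ.filter fun x : KnEdge n => P x).filter fun x => σ x ∈ window n a b).card := by
  rw [← Finset.card_map (Function.Embedding.subtype _)]
  congr 1
  ext e
  simp only [Finset.mem_filter, Finset.mem_map, Finset.mem_univ, true_and, ← coe_mem_proposed,
    Function.Embedding.subtype_apply]
  refine ⟨fun ⟨he, hP⟩ => ?_, fun ⟨x, ⟨hP, hx⟩, hxe⟩ => hxe ▸ ⟨hx, hP⟩⟩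
  obtain ⟨i, hi, rfl⟩ := mem_proposed.1 he
  have hlt : i < numEdges n := hi.2.trans_le hb
  exact ⟨σ.symm ⟨i, hlt⟩, by simp [← proposals_of_lt σ hlt, he, hP], (proposals_of_lt σ hlt).symm⟩

end Proposals

/-- The edges with one end in `X` and the other in `Y`. -/
def crossEdges (X Y : Finset (Fin n)) : Finset (KnEdge n) :=
  Finset.univ.filter fun e => ∃ x ∈ X, ∃ y ∈ Y, (e : Sym2 (Fin n)) = s(x, y)

/-- The edges with both ends in `X`. -/
def innerEdges (X : Finset (Fin n)) : Finset (KnEdge n) :=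
  Finset.univ.filter fun e => ∀ v ∈ (e : Sym2 (Fin n)), v ∈ X

/-- The edges at the vertex `v`. -/
def incidentEdges (v : Fin n) : Finset (KnEdge n) :=
  Finset.univ.filter fun e => v ∈ (e : Sym2 (Fin n))

theorem edgeDegree_proposed [NeZero n] (σ : EdgeOrdering n) {a b : ℕ} (hb : b ≤ numEdges n)
    (v : Fin n) : edgeDegree (proposed (proposals σ) a b) v =
      ((incidentEdges v).filter fun x => σ x ∈ window n a b).card :=
  card_filter_proposed σ hb _

theorem card_edgesWithin_proposed [NeZero n] (σ : EdgeOrdering n) {a b : ℕ} (hb : b ≤ numEdges n)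
    (X : Finset (Fin n)) : (edgesWithin (proposed (proposals σ) a b) X).card =
      ((innerEdges X).filter fun x => σ x ∈ window n a b).card := by
  rw [edgesWithin, innerEdges, card_filter_proposed σ hb]
  congr!

theorem card_mul_card_le_card_crossEdges {X Y : Finset (Fin n)} (h : Disjoint X Y) :
    X.card * Y.card ≤ (crossEdges X Y).card := by
  have hne : ∀ q ∈ X ×ˢ Y, q.1 ≠ q.2 := fun q hq hq' => by
    rw [Finset.mem_product] at hq
    exact Finset.disjoint_left.1 h hq.1 (hq' ▸ hq.2)
  have hinj : Set.InjOn (fun q : Fin n × Fin n => s(q.1, q.2)) (X ×ˢ Y : Finset _) := by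
    rintro ⟨x, y⟩ hq ⟨x', y'⟩ hq' hqq'
    simp only [Finset.mem_coe, Finset.mem_product] at hq hq'
    rcases Sym2.eq_iff.1 hqq' with ⟨hx, hy⟩ | ⟨rfl, -⟩
    · exact Prod.ext hx hy
    · exact (Finset.disjoint_left.1 h hq.1 hq'.2).elim
  rw [← Finset.card_product, ← Finset.card_image_of_injOn hinj,
    ← Finset.card_map (Function.Embedding.subtype _)]
  refine Finset.card_le_card fun e he => ?_
  obtain ⟨q, hq, rfl⟩ := Finset.mem_image.1 he
  have hq' := Finset.mem_product.1 hq
  exact Finset.mem_map.2 ⟨⟨s(q.1, q.2), by simpa using hne q hq⟩,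
    (Finset.mem_filter_univ _).2 ⟨q.1, hq'.1, q.2, hq'.2, rfl⟩, rfl⟩

theorem card_innerEdges_le (X : Finset (Fin n)) : (innerEdges X).card ≤ X.card ^ 2 := by
  rw [← Finset.card_map (Function.Embedding.subtype _), pow_two, ← Finset.card_product]
  refine (Finset.card_le_card (t := X.sym2) fun e he => ?_).trans
    (Finset.sym2_eq_image (s := X) ▸ Finset.card_image_le)
  obtain ⟨x, hx, rfl⟩ := Finset.mem_map.1 he
  rw [Finset.mem_sym2_iff]
  exact (Finset.mem_filter_univ x).1 hx

theorem card_incidentEdges (v : Fin n) : (incidentEdges v).card = n - 1 := by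
  have hmap : (incidentEdges v).map (Function.Embedding.subtype _) =
      (completeGraph (Fin n)).incidenceFinset v := by
    ext e
    simp [incidentEdges, mem_incidenceFinset, incidenceSet, and_comm]
  rw [← Finset.card_map (Function.Embedding.subtype _), hmap, card_incidenceFinset_eq_degree,
    complete_graph_degree, Fintype.card_fin]

end EdgeOrderings

theorem choose_mul_pow_le_one_add_pow {n j d : ℕ} {p : ℝ} (hp : 0 ≤ p) (hjd : j ≤ d) :
    (n.choose j : ℝ) * p ^ j ≤ (1 + n * p) ^ d :=
  calc (n.choose j : ℝ) * p ^ j ≤ (n : ℝ) ^ j * p ^ j := by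
        gcongr
        exact_mod_cast Nat.choose_le_pow n j
    _ = (n * p) ^ j := (mul_pow _ _ _).symm
    _ ≤ (1 + n * p) ^ j := by gcongr; linarith
    _ ≤ (1 + n * p) ^ d := pow_le_pow_right₀ (by nlinarith [mul_nonneg n.cast_nonneg hp]) hjd

section UnionBounds

variable {n : ℕ} [NeZero n] {a b : ℕ}

theorem Pr_not_isJoined_le (hb : b ≤ numEdges n) (C : Finset (Fin n)) (r : ℕ) :
    Pr (fun σ : EdgeOrdering n => ¬ IsJoined r (proposed (proposals σ) a b) C) ≤
      4 ^ C.card * Real.exp (-(((b - a : ℕ) : ℝ) * r ^ 2 / numEdges n)) := by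
  set S := (C.powerset ×ˢ C.powerset).filter
    (fun q => Disjoint q.1 q.2 ∧ r ≤ q.1.card ∧ r ≤ q.2.card) with hS
  have hpair : ∀ q ∈ S,
      Pr (fun σ : EdgeOrdering n => ∀ x ∈ crossEdges q.1 q.2, σ x ∉ window n a b) ≤
        Real.exp (-(((b - a : ℕ) : ℝ) * r ^ 2 / numEdges n)) := by
    intro q hq
    obtain ⟨hdisj, hX, hY⟩ := (Finset.mem_filter.1 hq).2
    have hcross : (r : ℝ) ^ 2 ≤ (crossEdges q.1 q.2).card := by
      rw [pow_two]
      exact_mod_cast (Nat.mul_le_mul hX hY).trans (card_mul_card_le_card_crossEdges hdisj)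
    refine (Pr_forall_notMem_le _ _).trans ?_
    rw [card_window hb, card_knEdge]
    gcongr
  have hcard : S.card ≤ 4 ^ C.card := (Finset.card_filter_le _ _).trans_eq <| by
    rw [Finset.card_product, Finset.card_powerset, ← mul_pow]; rfl
  refine (Pr_mono fun σ h => ?_).trans ((Pr_exists_mem_le S _ hpair).trans
    (by gcongr; exact_mod_cast hcard))
  simp only [IsJoined, not_forall, not_exists, not_and] at h
  obtain ⟨X, Y, hX, hY, hdisj, hrX, hrY, hno⟩ := h
  refine ⟨(X, Y), by simp [*], fun e he hwin => ?_⟩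
  obtain ⟨x, hx, y, hy, hxy⟩ := (Finset.mem_filter.1 he).2
  exact hno x hx y hy (hxy ▸ (coe_mem_proposed σ e).2 hwin)

theorem Pr_not_forall_edgeDegree_le (hb : b ≤ numEdges n) (L : ℕ) :
    Pr (fun σ : EdgeOrdering n => ¬ ∀ v, edgeDegree (proposed (proposals σ) a b) v ≤ L) ≤
      n * Real.exp (Real.exp 1 * (((n - 1 : ℕ) : ℝ) * ((b - a : ℕ) : ℝ) / numEdges n) - L) := by
  have hvertex : ∀ v ∈ (Finset.univ : Finset (Fin n)),
      Pr (fun σ : EdgeOrdering n => L ≤ edgeDegree (proposed (proposals σ) a b) v) ≤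
        Real.exp (Real.exp 1 * (((n - 1 : ℕ) : ℝ) * ((b - a : ℕ) : ℝ) / numEdges n) - L) := by
    intro v _
    have := Pr_le_card_filter_apply_mem_le (window n a b) (incidentEdges v) L
    simp only [edgeDegree_proposed _ hb]
    rwa [card_incidentEdges, card_window hb, card_knEdge] at this
  refine (Pr_mono fun σ h => ?_).trans ((Pr_exists_mem_le _ _ hvertex).trans_eq ?_)
  · push Not at h
    obtain ⟨v, hv⟩ := h
    exact ⟨v, Finset.mem_univ v, hv.le⟩
  · rw [Finset.card_univ, Fintype.card_fin]

theorem Pr_not_card_edgesWithin_le (hb : b ≤ numEdges n) (C : Finset (Fin n)) (L : ℕ) :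
    Pr (fun σ : EdgeOrdering n => ¬ (edgesWithin (proposed (proposals σ) a b) C).card ≤ L) ≤
      Real.exp (Real.exp 1 * ((C.card : ℝ) ^ 2 * ((b - a : ℕ) : ℝ) / numEdges n) - L) := by
  have hinner : ((innerEdges C).card : ℝ) ≤ (C.card : ℝ) ^ 2 := by
    exact_mod_cast card_innerEdges_le C
  refine (Pr_mono fun σ h => ?_).trans
    ((Pr_le_card_filter_apply_mem_le (window n a b) (innerEdges C) L).trans ?_)
  · rw [← card_edgesWithin_proposed σ hb]
    exact (not_le.1 h).le
  · rw [card_window hb, card_knEdge]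
    gcongr

omit [NeZero n] in
theorem Pr_exists_incidentEdges_window_le (hb : b ≤ numEdges n) {d j : ℕ} (hjd : j ≤ d)
    (v : Fin n) :
    Pr (fun σ : EdgeOrdering n => ∃ J ∈ (incidentEdges v).powersetCard j,
        (∀ q ∈ J, σ q ∈ window n a b) ∧ ∀ q ∈ incidentEdges v \ J, σ q ∉ window n a b) ≤
      (1 + n * (((b - a : ℕ) : ℝ) / numEdges n)) ^ d *
        Real.exp (-(((b - a - d : ℕ) : ℝ) * ((n - 1 - d : ℕ) : ℝ) / numEdges n)) := by
  set p : ℝ := ((b - a : ℕ) : ℝ) / numEdges n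
  set ex := Real.exp (-(((b - a - d : ℕ) : ℝ) * ((n - 1 - d : ℕ) : ℝ) / numEdges n)) with hex
  have hp0 : 0 ≤ p := by positivity
  have hJ : ∀ J ∈ (incidentEdges v).powersetCard j,
      Pr (fun σ : EdgeOrdering n => (∀ q ∈ J, σ q ∈ window n a b) ∧
        ∀ q ∈ incidentEdges v \ J, σ q ∉ window n a b) ≤ p ^ j * ex := by
    intro J hJ
    obtain ⟨hJsub, hJcard⟩ := Finset.mem_powersetCard.1 hJ
    refine (Pr_forall_mem_and_forall_notMem_le _ Finset.sdiff_disjoint).trans ?_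
    rw [card_window hb, hJcard, Finset.card_sdiff_of_subset hJsub, card_incidentEdges, hJcard,
      card_knEdge, hex]
    gcongr
  refine (Pr_exists_mem_le _ _ hJ).trans ?_
  rw [Finset.card_powersetCard, card_incidentEdges, ← mul_assoc]
  gcongr
  refine (choose_mul_pow_le_one_add_pow hp0 hjd).trans ?_
  gcongr
  exact Nat.sub_le n 1

theorem Pr_not_forall_lt_edgeDegree_le (hb : b ≤ numEdges n) (d : ℕ) :
    Pr (fun σ : EdgeOrdering n => ¬ ∀ v, d + 1 ≤ edgeDegree (proposed (proposals σ) a b) v) ≤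
      n * ((d + 1) * ((1 + n * (((b - a : ℕ) : ℝ) / numEdges n)) ^ d *
        Real.exp (-(((b - a - d : ℕ) : ℝ) * ((n - 1 - d : ℕ) : ℝ) / numEdges n)))) := by
  have hvertex (v : Fin n) := Pr_exists_mem_le (Finset.range (d + 1)) _ fun j hj =>
    Pr_exists_incidentEdges_window_le (a := a) hb (Finset.mem_range_succ_iff.1 hj) v
  refine (Pr_mono fun σ h => ?_).trans
    ((Pr_exists_mem_le Finset.univ _ fun v _ => hvertex v).trans_eq (by simp))
  push Not at h
  obtain ⟨v, hv⟩ := h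
  rw [edgeDegree_proposed σ hb] at hv
  refine ⟨v, Finset.mem_univ v, _, Finset.mem_range.2 hv,
    (incidentEdges v).filter (fun q => σ q ∈ window n a b),
    Finset.mem_powersetCard.2 ⟨Finset.filter_subset _ _, rfl⟩,
    fun q hq => (Finset.mem_filter.1 hq).2, fun q hq hwin => ?_⟩
  rw [Finset.mem_sdiff, Finset.mem_filter] at hq
  exact hq.2 ⟨hq.1, hwin⟩

omit [NeZero n] in
theorem Pr_exists_innerEdges_window_le (hb : b ≤ numEdges n) {g x : ℕ} (hxg : x ≤ g) :
    Pr (fun σ : EdgeOrdering n => ∃ X ∈ (Finset.univ : Finset (Fin n)).powersetCard x,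
        ∃ J ∈ (innerEdges X).powersetCard (x + 1), ∀ q ∈ J, σ q ∈ window n a b) ≤
      2 ^ g ^ 2 * (1 + n * (((b - a : ℕ) : ℝ) / numEdges n)) ^ g *
        (((b - a : ℕ) : ℝ) / numEdges n) := by
  set p : ℝ := ((b - a : ℕ) : ℝ) / numEdges n
  have hp0 : 0 ≤ p := by positivity
  have hJ (X : Finset (Fin n)) : ∀ J ∈ (innerEdges X).powersetCard (x + 1),
      Pr (fun σ : EdgeOrdering n => ∀ q ∈ J, σ q ∈ window n a b) ≤ p ^ (x + 1) := by
    intro J hJ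
    refine (Pr_forall_mem_le _ _).trans_eq ?_
    rw [card_window hb, (Finset.mem_powersetCard.1 hJ).2, card_knEdge]
  have hX : ∀ X ∈ (Finset.univ : Finset (Fin n)).powersetCard x,
      Pr (fun σ : EdgeOrdering n =>
        ∃ J ∈ (innerEdges X).powersetCard (x + 1), ∀ q ∈ J, σ q ∈ window n a b) ≤
      2 ^ g ^ 2 * p ^ (x + 1) := by
    intro X hX
    have hinner : (innerEdges X).card ≤ g ^ 2 := (card_innerEdges_le X).trans <|
      Nat.pow_le_pow_left ((Finset.mem_powersetCard.1 hX).2.trans_le hxg) 2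
    have hcard : ((innerEdges X).powersetCard (x + 1)).card ≤ 2 ^ g ^ 2 := by
      rw [Finset.card_powersetCard]
      exact (Nat.choose_le_two_pow _ _).trans (Nat.pow_le_pow_right two_pos hinner)
    refine (Pr_exists_mem_le _ _ (hJ X)).trans ?_
    gcongr
    exact_mod_cast hcard
  refine (Pr_exists_mem_le _ _ hX).trans ?_
  rw [Finset.card_powersetCard, Finset.card_univ, Fintype.card_fin]
  calc (n.choose x : ℝ) * (2 ^ g ^ 2 * p ^ (x + 1))
      = 2 ^ g ^ 2 * ((n.choose x : ℝ) * p ^ x) * p := by ring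
    _ ≤ 2 ^ g ^ 2 * (1 + n * p) ^ g * p := by
        gcongr
        exact choose_mul_pow_le_one_add_pow hp0 hxg

theorem Pr_not_isSparse_le (hb : b ≤ numEdges n) (g : ℕ) :
    Pr (fun σ : EdgeOrdering n => ¬ ∀ X : Finset (Fin n), X.card ≤ g →
        (edgesWithin (proposed (proposals σ) a b) X).card ≤ X.card) ≤
      (g + 1) * (2 ^ g ^ 2 * (1 + n * (((b - a : ℕ) : ℝ) / numEdges n)) ^ g *
        (((b - a : ℕ) : ℝ) / numEdges n)) := by
  refine (Pr_mono fun σ h => ?_).trans ((Pr_exists_mem_le (Finset.range (g + 1)) _ fun x hx =>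
    Pr_exists_innerEdges_window_le (a := a) hb (Finset.mem_range_succ_iff.1 hx)).trans_eq
      (by simp))
  push Not at h
  obtain ⟨X, hX, hlt⟩ := h
  rw [card_edgesWithin_proposed σ hb] at hlt
  obtain ⟨J, hJ, hJcard⟩ := Finset.exists_subset_card_eq (Nat.succ_le_of_lt hlt)
  exact ⟨X.card, Finset.mem_range_succ_iff.2 hX, X, by simp, J,
    Finset.mem_powersetCard.2 ⟨hJ.trans (Finset.filter_subset _ _), hJcard⟩,
    fun q hq => (Finset.mem_filter.1 (hJ hq)).2⟩

end UnionBounds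

section Exposure

variable {n : ℕ} [NeZero n] {s : ℕ}

theorem proposals_eq_before_iff {σ σ₀ : EdgeOrdering n} :
    (∀ i < s, proposals σ i = proposals σ₀ i) ↔ ∀ x, (σ₀ x : ℕ) < s → σ x = σ₀ x := by
  constructor
  · intro h x hx
    have hprop : proposals σ (σ x) = proposals σ (σ₀ x) := by
      rw [h _ hx, proposals_apply, proposals_apply]
    exact Fin.ext (injOn_proposals σ (σ x).2 (σ₀ x).2 hprop)
  · intro h i hi
    by_cases hN : i < numEdges n
    · have hx := h (σ₀.symm ⟨i, hN⟩) (by rwa [Equiv.apply_symm_apply])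
      rw [Equiv.apply_symm_apply, ← Equiv.eq_symm_apply] at hx
      rw [proposals_of_lt σ hN, proposals_of_lt σ₀ hN, hx]
    · rw [proposals, proposals, dif_neg hN, dif_neg hN]

theorem card_filter_proposals_eq_before_avoid_le {b : ℕ} (hb : b ≤ numEdges n)
    (σ₀ : EdgeOrdering n) {Q : Finset (KnEdge n)}
    (hQ : ∀ x ∈ Q, (x : Sym2 (Fin n)) ∉ proposed (proposals σ₀) 0 s) :
    ((Finset.univ.filter fun σ : EdgeOrdering n =>
        (∀ i < s, proposals σ i = proposals σ₀ i) ∧ ∀ x ∈ Q, σ x ∉ window n s b).card : ℝ) ≤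
      Real.exp (-(((b - s : ℕ) : ℝ) * Q.card / numEdges n)) *
        (Finset.univ.filter fun σ : EdgeOrdering n =>
          ∀ i < s, proposals σ i = proposals σ₀ i).card := by
  have h := card_filter_eqOn_avoid_le σ₀ (D := Finset.univ.filter fun x => (σ₀ x : ℕ) < s)
    (Q := Q) (I := window n s b)
    (fun x hx hwin => (mem_window.1 hwin).1.not_gt (Finset.mem_filter.1 hx).2)
    (Finset.disjoint_left.2 fun x hxQ hx => hQ x hxQ <|
      (coe_mem_proposed σ₀ x).2 (mem_window.2 ⟨Nat.zero_le _, (Finset.mem_filter.1 hx).2⟩))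
  rw [card_window hb, card_knEdge] at h
  simp only [Finset.mem_filter_univ, ← proposals_eq_before_iff] at h
  convert h

/-- The targets `Q e i` are determined by the first `s` proposals and have not been proposed yet, so
conditionally on these proposals each of the next `b - s` rounds hits them with probability at least
`q / N`. -/
theorem Pr_exists_mem_forall_notMem_window_le {ι : Type*} {b M q : ℕ} (hb : b ≤ numEdges n)
    {S : (ℕ → Sym2 (Fin n)) → Finset ι} {Q : (ℕ → Sym2 (Fin n)) → ι → Finset (KnEdge n)}
    (hS : ∀ e e', (∀ i < s, e i = e' i) → S e = S e')
    (hQ : ∀ e e', (∀ i < s, e i = e' i) → Q e = Q e')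
    (hM : ∀ e, (S e).card ≤ M)
    (hq : ∀ σ, ∀ i ∈ S (proposals σ), q ≤ (Q (proposals σ) i).card)
    (hnew : ∀ e, ∀ i, ∀ x ∈ Q e i, (x : Sym2 (Fin n)) ∉ proposed e 0 s) :
    Pr (fun σ : EdgeOrdering n =>
        ∃ i ∈ S (proposals σ), ∀ x ∈ Q (proposals σ) i, σ x ∉ window n s b) ≤
      M * Real.exp (-(((b - s : ℕ) : ℝ) * q / numEdges n)) := by
  refine Pr_le_of_fiberwise (fun σ (i : Fin s) => proposals σ i) _ (by positivity) fun σ₀ => ?_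
  simp only [funext_iff, Fin.forall_iff]
  set decay := Real.exp (-(((b - s : ℕ) : ℝ) * q / numEdges n)) with hdecay
  set fiber := Finset.univ.filter fun σ : EdgeOrdering n =>
    ∀ i < s, proposals σ i = proposals σ₀ i
  set avoiding : ι → Finset (EdgeOrdering n) := fun i => Finset.univ.filter fun σ =>
    (∀ i < s, proposals σ i = proposals σ₀ i) ∧ ∀ x ∈ Q (proposals σ₀) i, σ x ∉ window n s b
  have havoiding : ∀ i ∈ S (proposals σ₀), ((avoiding i).card : ℝ) ≤ decay * fiber.card := by
    intro i hi
    refine (card_filter_proposals_eq_before_avoid_le hb σ₀ (hnew _ i)).trans ?_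
    rw [hdecay]
    gcongr
    exact hq σ₀ i hi
  calc _ ≤ (((S (proposals σ₀)).biUnion avoiding).card : ℝ) := by
        gcongr
        intro σ hσ
        obtain ⟨hagree, i, hi, hno⟩ := (Finset.mem_filter.1 hσ).2
        rw [hS _ _ hagree] at hi
        rw [hQ _ _ hagree] at hno
        exact Finset.mem_biUnion.2 ⟨i, hi, Finset.mem_filter.2 ⟨Finset.mem_univ σ, hagree, hno⟩⟩
    _ ≤ ∑ i ∈ S (proposals σ₀), ((avoiding i).card : ℝ) := by
        exact_mod_cast Finset.card_biUnion_le
    _ ≤ (S (proposals σ₀)).card * (decay * fiber.card) := by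
        rw [← nsmul_eq_mul]
        exact Finset.sum_le_card_nsmul _ _ _ havoiding
    _ ≤ M * decay * fiber.card := by
        rw [← mul_assoc]
        gcongr
        exact hM _

end Exposure

namespace StrategyParams

section Levels

variable {n : ℕ} {p : StrategyParams (Fin n)} {k : ℕ} {e e' : ℕ → Sym2 (Fin n)}

/-- The properties of the proposals before level `k` that make it likely that every large minimal
tight set is hit in this level. -/
structure IsLevelReady (p : StrategyParams (Fin n)) (k : ℕ) (e : ℕ → Sym2 (Fin n)) : Prop where
  card_core : p.d - 1 + 2 * p.r ≤ (p.core e).card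
  degree : ∀ v, edgeDegree (proposed e 0 (p.levelStart k)) v ≤ p.r
  expands : ExpandsOutside k (p.rule.graph e (p.levelStart k)) (p.core e)

/-- The pairs of a large minimal tight set `A` and a set `D` of `d - 1` vertices of the core; level
`k` must propose an edge from `A` to the core outside `D`. -/
def levelTasks (p : StrategyParams (Fin n)) (k : ℕ) (e : ℕ → Sym2 (Fin n)) :
    Finset (Finset (Fin n) × Finset (Fin n)) :=
  if p.IsLevelReady k e then
    (minimalTightSets k (p.rule.graph e (p.levelStart k)) (p.core e)).filter (p.m ≤ ·.card) ×ˢ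
      (p.core e).powersetCard (p.d - 1)
  else ∅

/-- The edges from `q.1` to the core outside `q.2` that are proposed in level `k` or later. -/
def levelTargets (p : StrategyParams (Fin n)) (k : ℕ) (e : ℕ → Sym2 (Fin n))
    (q : Finset (Fin n) × Finset (Fin n)) : Finset (KnEdge n) :=
  (crossEdges q.1 (p.core e \ q.2)).filter fun x => (x : Sym2 (Fin n)) ∉
    proposed e 0 (p.levelStart k)

theorem core_congr (h : ∀ i < p.levelStart k, e i = e' i) : p.core e = p.core e' := by
  rw [core, core, p.rule.graph_congr fun i hi => h i (hi.trans_le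
    (p.coreEnd_le_fillEnd.trans (p.fillEnd_le_levelStart k)))]

theorem proposed_congr {a b : ℕ} (h : ∀ i < b, e i = e' i) : proposed e a b = proposed e' a b :=
  Finset.image_congr fun i hi => h i (Finset.mem_Ico.1 hi).2

theorem IsLevelReady.congr (h : ∀ i < p.levelStart k, e i = e' i) (hready : p.IsLevelReady k e) :
    p.IsLevelReady k e' where
  card_core := core_congr h ▸ hready.card_core
  degree := proposed_congr h ▸ hready.degree
  expands := core_congr h ▸ p.rule.graph_congr h ▸ hready.expands

theorem levelTasks_congr (h : ∀ i < p.levelStart k, e i = e' i) :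
    p.levelTasks k e = p.levelTasks k e' := by
  have hready : p.IsLevelReady k e ↔ p.IsLevelReady k e' :=
    ⟨.congr h, .congr fun i hi => (h i hi).symm⟩
  rw [levelTasks, levelTasks, core_congr h, p.rule.graph_congr h]
  simp only [hready]

theorem levelTargets_congr (h : ∀ i < p.levelStart k, e i = e' i) :
    p.levelTargets k e = p.levelTargets k e' := by
  funext q
  simp only [levelTargets, core_congr h, proposed_congr h]

/-- The minimal tight sets are disjoint, so there are at most `n` of them. -/
theorem card_levelTasks_le (hd : 1 ≤ p.d) : (p.levelTasks k e).card ≤ n ^ p.d := by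
  rw [levelTasks]
  split_ifs with hready
  · have htight := hready.expands.card_minimalTightSets_mul_le (M := 1) fun A hA =>
      (mem_minimalTightSets.1 hA).prop.1.card_pos
    rw [mul_one, Fintype.card_fin] at htight
    have hcore : (p.core e).card ≤ n := by simpa using (p.core e).card_le_univ
    rw [Finset.card_product, Finset.card_powersetCard, ← Nat.sub_add_cancel hd, pow_succ',
      Nat.add_sub_cancel]
    exact Nat.mul_le_mul ((Finset.card_filter_le _ _).trans htight)
      ((Nat.choose_le_pow _ _).trans (Nat.pow_le_pow_left hcore _))
  · exact Nat.zero_le _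

variable [NeZero n]

theorem le_card_levelTargets {σ : EdgeOrdering n} (hs : p.levelStart k ≤ numEdges n)
    {q : Finset (Fin n) × Finset (Fin n)} (hq : q ∈ p.levelTasks k (proposals σ)) :
    p.m * p.r ≤ (p.levelTargets k (proposals σ) q).card := by
  have hready : p.IsLevelReady k (proposals σ) := by
    by_contra h
    simp [levelTasks, h] at hq
  rw [levelTasks, if_pos hready, Finset.mem_product, Finset.mem_filter,
    Finset.mem_powersetCard] at hq
  obtain ⟨⟨hA, hAm⟩, hD, hDcard⟩ := hq
  have hdisj := (mem_minimalTightSets.1 hA).prop.2.1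
  have hrest : 2 * p.r ≤ (p.core (proposals σ) \ q.2).card := by
    have := hready.card_core
    rw [Finset.card_sdiff_of_subset hD, hDcard]
    omega
  have hall := card_mul_card_le_card_crossEdges (hdisj.mono_right (Finset.sdiff_subset (t := q.2)))
  have hearly : ((crossEdges q.1 (p.core (proposals σ) \ q.2)).filter fun x : KnEdge n =>
      (x : Sym2 (Fin n)) ∈ proposed (proposals σ) 0 (p.levelStart k)).card ≤ q.1.card * p.r := by
    refine (Finset.card_le_card (t := q.1.biUnion fun a => (incidentEdges a).filter fun x =>
      σ x ∈ window n 0 (p.levelStart k)) fun x hx => ?_).trans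
      (Finset.card_biUnion_le_card_mul _ _ _ fun a _ =>
        (edgeDegree_proposed σ hs a).symm.trans_le (hready.degree a))
    obtain ⟨hx, hwin⟩ := Finset.mem_filter.1 hx
    obtain ⟨a, ha, c, -, hac⟩ := (Finset.mem_filter.1 hx).2
    exact Finset.mem_biUnion.2 ⟨a, ha, Finset.mem_filter.2
      ⟨(Finset.mem_filter_univ x).2 (hac ▸ Sym2.mem_mk_left a c), (coe_mem_proposed σ x).1 hwin⟩⟩
  have hsplit := Finset.card_filter_add_card_filter_not
    (s := crossEdges q.1 (p.core (proposals σ) \ q.2))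
    (fun x : KnEdge n => (x : Sym2 (Fin n)) ∈ proposed (proposals σ) 0 (p.levelStart k))
  rw [levelTargets]
  nlinarith [Nat.mul_le_mul_left q.1.card hrest, Nat.mul_le_mul_right p.r hAm]

theorem Pr_isLevelReady_and_not_hitsTightSets_le (hd : 1 ≤ p.d)
    (hb : p.levelStart (k + 1) ≤ numEdges n) :
    Pr (fun σ : EdgeOrdering n =>
        p.IsLevelReady k (proposals σ) ∧ ¬ p.HitsTightSets k (proposals σ)) ≤
      n ^ p.d * Real.exp (-((p.levelLen : ℝ) * (p.m * p.r) / numEdges n)) := by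
  have hstart : p.levelStart k ≤ numEdges n := (p.levelStart_mono k.le_succ).trans hb
  have h := Pr_exists_mem_forall_notMem_window_le hb
    (S := p.levelTasks k) (Q := p.levelTargets k)
    (fun _ _ => levelTasks_congr) (fun _ _ => levelTargets_congr)
    (fun _ => card_levelTasks_le hd) (fun _ _ => le_card_levelTargets hstart)
    fun _ _ _ hx => (Finset.mem_filter.1 hx).2
  rw [levelStart_succ, Nat.add_sub_cancel_left] at h
  push_cast at h
  refine (Pr_mono fun σ => ?_).trans h
  rintro ⟨hready, hmiss⟩
  simp only [HitsTightSets, not_forall, not_exists, not_and] at hmiss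
  obtain ⟨A, hA, hAm, D, hD, hDcard, hno⟩ := hmiss
  refine ⟨(A, D), ?_, fun x hx hwin => ?_⟩
  · rw [levelTasks, if_pos hready]
    exact Finset.mem_product.2 ⟨Finset.mem_filter.2 ⟨hA, hAm⟩,
      Finset.mem_powersetCard.2 ⟨hD, hDcard⟩⟩
  · obtain ⟨a, ha, c, hc, hac⟩ := (Finset.mem_filter.1 (Finset.mem_filter.1 hx).1).2
    rw [Finset.mem_sdiff] at hc
    exact hno a ha c hc.1 hc.2
      (hac ▸ levelStart_succ p k ▸ (coe_mem_proposed σ x).2 hwin)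

end Levels

end StrategyParams

namespace StrategyParams

section GoodOrderings

variable {n : ℕ} [NeZero n] {p : StrategyParams (Fin n)} {β : ℕ} {σ : EdgeOrdering n}

theorem Admissible.isLevelReady (hp : p.Admissible)
    (hjoined : IsJoined p.r (proposed (proposals σ) 0 p.coreEnd) p.base)
    (hdegree : ∀ v, edgeDegree (proposed (proposals σ) 0 p.horizon) v ≤ p.r) {k : ℕ} (hk : k < p.d)
    (hexpands : ExpandsOutside k (p.rule.graph (proposals σ) (p.levelStart k))
      (p.core (proposals σ))) : p.IsLevelReady k (proposals σ) where
  card_core := by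
    have hcore := (hp.core_spec hjoined).2.1
    have hbase := hp.le_card_base
    nlinarith [Nat.le_mul_of_pos_right p.d hp.one_le_r, Nat.sub_le p.d 1]
  degree v := by
    refine (edgeDegree_mono (fun x hx => ?_) v).trans (hdegree v)
    obtain ⟨i, hi, rfl⟩ := mem_proposed.1 hx
    exact mem_proposed.2 ⟨i, ⟨i.zero_le, hi.2.trans_le (p.levelStart_mono hk.le)⟩, rfl⟩
  expands := hexpands

theorem Admissible.isGood_proposals (hp : p.Admissible) (hN : p.horizon ≤ numEdges n)
    (joined_base : IsJoined p.r (proposed (proposals σ) 0 p.coreEnd) p.base)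
    (joined_univ : IsJoined p.r (proposed (proposals σ) p.coreEnd p.pairEnd) Finset.univ)
    (degree_fill : ∀ v, p.d + 1 ≤ edgeDegree (proposed (proposals σ) p.pairEnd p.fillEnd) v)
    (sparse : ∀ X : Finset (Fin n), X.card ≤ 2 * (p.m + p.d) →
      (edgesWithin (proposed (proposals σ) 0 p.fillEnd) X).card ≤ X.card)
    (card_base : (edgesWithin (proposed (proposals σ) 0 p.coreEnd) p.base).card ≤ β)
    (degree : ∀ v, edgeDegree (proposed (proposals σ) 0 p.horizon) v ≤ p.r)
    (hits : ∀ k < p.d, p.IsLevelReady k (proposals σ) → p.HitsTightSets k (proposals σ)) :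
    p.IsGood β (proposals σ) where
  injOn := (injOn_proposals σ).mono (Set.Iio_subset_Iio hN)
  not_isDiag _ hi := not_isDiag_proposals σ (hi.trans_le hN)
  joined_base := joined_base
  joined_univ := joined_univ
  degree_fill := degree_fill
  sparse := sparse
  card_base := card_base
  hits k hk hexpands := hits k hk (hp.isLevelReady joined_base degree hk hexpands)

theorem Admissible.Pr_not_isGood_le (hp : p.Admissible) (hN : p.horizon ≤ numEdges n) (β : ℕ) :
    Pr (fun σ : EdgeOrdering n => ¬ p.IsGood β (proposals σ)) ≤
      Pr (fun σ : EdgeOrdering n =>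
        ¬ IsJoined p.r (proposed (proposals σ) 0 p.coreEnd) p.base) +
      (Pr (fun σ : EdgeOrdering n =>
        ¬ IsJoined p.r (proposed (proposals σ) p.coreEnd p.pairEnd) Finset.univ) +
      (Pr (fun σ : EdgeOrdering n =>
        ¬ ∀ v, p.d + 1 ≤ edgeDegree (proposed (proposals σ) p.pairEnd p.fillEnd) v) +
      (Pr (fun σ : EdgeOrdering n => ¬ ∀ X : Finset (Fin n), X.card ≤ 2 * (p.m + p.d) →
        (edgesWithin (proposed (proposals σ) 0 p.fillEnd) X).card ≤ X.card) +
      (Pr (fun σ : EdgeOrdering n =>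
        ¬ (edgesWithin (proposed (proposals σ) 0 p.coreEnd) p.base).card ≤ β) +
      (Pr (fun σ : EdgeOrdering n =>
        ¬ ∀ v, edgeDegree (proposed (proposals σ) 0 p.horizon) v ≤ p.r) +
      Pr (fun σ : EdgeOrdering n => ∃ k ∈ Finset.range p.d,
        p.IsLevelReady k (proposals σ) ∧ ¬ p.HitsTightSets k (proposals σ))))))) := by
  refine le_trans (Pr_mono fun σ hσ => ?_) <| (Pr_or_le _ _).trans <| add_le_add_right
    ((Pr_or_le _ _).trans <| add_le_add_right ((Pr_or_le _ _).trans <| add_le_add_right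
    ((Pr_or_le _ _).trans <| add_le_add_right ((Pr_or_le _ _).trans <| add_le_add_right
    (Pr_or_le _ _) _) _) _) _) _
  contrapose! hσ
  obtain ⟨h₁, h₂, h₃, h₄, h₅, h₆, h₇⟩ := hσ
  exact hp.isGood_proposals hN h₁ h₂ h₃ h₄ h₅ h₆ fun k hk => h₇ k (Finset.mem_range.2 hk)

end GoodOrderings

end StrategyParams

section Asymptotics

variable {n : ℕ}

theorem two_mul_cast_numEdges (n : ℕ) : 2 * (numEdges n : ℝ) = n * (n - 1) := by
  obtain rfl | hn := n.eq_zero_or_pos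
  · have := two_mul_numEdges 0
    norm_num at this ⊢
    exact this
  · rw [← Nat.cast_pred hn]
    exact_mod_cast two_mul_numEdges n

theorem two_mul_numEdges_le_sq (n : ℕ) : 2 * (numEdges n : ℝ) ≤ n ^ 2 := by
  rw [two_mul_cast_numEdges]
  nlinarith [(n.cast_nonneg : (0 : ℝ) ≤ n)]

theorem sq_le_four_mul_numEdges (hn : 2 ≤ n) : (n : ℝ) ^ 2 ≤ 4 * numEdges n := by
  have hn' : (2 : ℝ) ≤ n := by exact_mod_cast hn
  nlinarith [two_mul_cast_numEdges n]

theorem numEdges_pos (hn : 2 ≤ n) : (0 : ℝ) < numEdges n := by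
  have hn' : (2 : ℝ) ≤ n := by exact_mod_cast hn
  nlinarith [sq_le_four_mul_numEdges hn]

theorem mul_div_numEdges_le (hn : 2 ≤ n) {T : ℝ} (hT : T ≤ n * Real.log n) :
    n * (T / numEdges n) ≤ 4 * Real.log n := by
  rw [← mul_div_assoc, div_le_iff₀ (numEdges_pos hn)]
  calc n * T ≤ n * (n * Real.log n) := by gcongr
    _ = Real.log n * n ^ 2 := by ring
    _ ≤ Real.log n * (4 * numEdges n) :=
      mul_le_mul_of_nonneg_left (sq_le_four_mul_numEdges hn) (Real.log_natCast_nonneg n)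
    _ = 4 * Real.log n * numEdges n := by ring

theorem four_pow_le_exp (m : ℕ) : (4 : ℝ) ^ m ≤ Real.exp (3 / 2 * m) := by
  have h4 : (4 : ℝ) ≤ Real.exp (3 / 2) := by
    rw [← Real.log_le_iff_le_exp (by norm_num), show (4 : ℝ) = 2 ^ 2 by norm_num, Real.log_pow]
    linarith [Real.log_two_lt_d9]
  rw [mul_comm, Real.exp_nat_mul]
  exact pow_le_pow_left₀ (by norm_num) h4 m

variable [NeZero n] {a b : ℕ}

theorem Pr_not_isJoined_le_exp (hn : 2 ≤ n) (hb : b ≤ numEdges n) {C : Finset (Fin n)} {r : ℕ}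
    (hlen : 2 * (C.card : ℝ) * numEdges n ≤ ((b - a : ℕ) : ℝ) * r ^ 2) :
    Pr (fun σ : EdgeOrdering n => ¬ IsJoined r (proposed (proposals σ) a b) C) ≤
      Real.exp (-((C.card : ℝ) / 2)) := by
  rw [← le_div_iff₀ (numEdges_pos hn)] at hlen
  calc _ ≤ _ := Pr_not_isJoined_le hb C r
    _ ≤ Real.exp (3 / 2 * C.card) * Real.exp (-(2 * C.card)) := by
      gcongr
      exact four_pow_le_exp _
    _ = Real.exp (-(C.card / 2)) := by
      rw [← Real.exp_add]
      ring_nf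

theorem Pr_not_forall_lt_edgeDegree_le_exp (hn : 2 ≤ n) (hb : b ≤ numEdges n) {d : ℕ} {δ : ℝ}
    (hδ : 0 < δ) (hδ1 : δ ≤ 1) (hlen : (1 + δ / 2) * n * Real.log n / 2 ≤ ((b - a : ℕ) : ℝ))
    (hlen' : ((b - a : ℕ) : ℝ) ≤ n * Real.log n) (hdlog : d ≤ δ * (n * Real.log n) / 12)
    (hdn : 8 * (d : ℝ) ≤ δ * (n - 1)) :
    Pr (fun σ : EdgeOrdering n =>
        ¬ ∀ v, d + 1 ≤ edgeDegree (proposed (proposals σ) a b) v) ≤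
      (d + 1) * (1 + 4 * Real.log n) ^ d * Real.exp (-(δ * Real.log n / 6)) := by
  have hn' : (2 : ℝ) ≤ n := by exact_mod_cast hn
  have hlen_sub : (1 + δ / 3) * (n * Real.log n) / 2 ≤ ((b - a - d : ℕ) : ℝ) := by
    have : ((b - a : ℕ) : ℝ) ≤ ((b - a - d : ℕ) : ℝ) + d := by exact_mod_cast le_tsub_add
    nlinarith
  have hn_sub : (1 - δ / 8) * (n - 1) ≤ ((n - 1 - d : ℕ) : ℝ) := by
    have : (n : ℝ) ≤ ((n - 1 - d : ℕ) : ℝ) + d + 1 := by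
      norm_cast
      omega
    linarith
  have hexponent : (1 + δ / 6) * Real.log n ≤
      ((b - a - d : ℕ) : ℝ) * ((n - 1 - d : ℕ) : ℝ) / numEdges n := by
    rw [le_div_iff₀ (numEdges_pos hn)]
    calc (1 + δ / 6) * Real.log n * numEdges n
        ≤ (1 + δ / 3) * (1 - δ / 8) * Real.log n * numEdges n := by
          gcongr
          nlinarith
      _ = (1 + δ / 3) * (n * Real.log n) / 2 * ((1 - δ / 8) * (n - 1)) := by
          linear_combination (1 + δ / 3) * (1 - δ / 8) * Real.log n / 2 * two_mul_cast_numEdges n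
      _ ≤ _ := mul_le_mul hlen_sub hn_sub (mul_nonneg (by linarith) (by linarith))
          (Nat.cast_nonneg _)
  calc _ ≤ _ := Pr_not_forall_lt_edgeDegree_le hb d
    _ ≤ n * ((d + 1) * ((1 + 4 * Real.log n) ^ d * Real.exp (-((1 + δ / 6) * Real.log n)))) := by
      gcongr n * ((d + 1) * ((1 + ?_) ^ d * Real.exp (-?_)))
      exact mul_div_numEdges_le hn hlen'
    _ = (d + 1) * (1 + 4 * Real.log n) ^ d * (n * Real.exp (-((1 + δ / 6) * Real.log n))) := by ring
    _ = _ := by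
      nth_rewrite 2 [← Real.exp_log (show (0 : ℝ) < n by linarith)]
      rw [← Real.exp_add]
      ring_nf

theorem Pr_not_isSparse_le_log (hn : 2 ≤ n) (hb : b ≤ numEdges n)
    (hlen : ((b - a : ℕ) : ℝ) ≤ n * Real.log n) (g : ℕ) :
    Pr (fun σ : EdgeOrdering n => ¬ ∀ X : Finset (Fin n), X.card ≤ g →
        (edgesWithin (proposed (proposals σ) a b) X).card ≤ X.card) ≤
      (g + 1) * (2 ^ g ^ 2 * (1 + 4 * Real.log n) ^ g * (4 * Real.log n / n)) := by
  have hn0 : (0 : ℝ) < n := by exact_mod_cast (by omega : 0 < n)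
  have hmean := mul_div_numEdges_le hn hlen
  refine (Pr_not_isSparse_le hb g).trans ?_
  gcongr (g + 1) * (2 ^ g ^ 2 * (1 + ?_) ^ g * ?_)
  rwa [le_div_iff₀' hn0]

theorem Pr_not_card_edgesWithin_le_exp (hn : 2 ≤ n) (hb : b ≤ numEdges n) {C : Finset (Fin n)}
    {K : ℝ} (hK : 0 ≤ K) (hlen : (C.card : ℝ) ^ 2 * ((b - a : ℕ) : ℝ) ≤ K * n ^ 3) (L : ℕ) :
    Pr (fun σ : EdgeOrdering n => ¬ (edgesWithin (proposed (proposals σ) a b) C).card ≤ L) ≤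
      Real.exp (12 * K * n - L) := by
  refine (Pr_not_card_edgesWithin_le hb C L).trans ?_
  have hmean : (C.card : ℝ) ^ 2 * ((b - a : ℕ) : ℝ) / numEdges n ≤ 4 * K * n := by
    rw [div_le_iff₀ (numEdges_pos hn)]
    calc _ ≤ K * n ^ 3 := hlen
      _ = K * n * n ^ 2 := by ring
      _ ≤ K * n * (4 * numEdges n) := by
        gcongr
        exact sq_le_four_mul_numEdges hn
      _ = 4 * K * n * numEdges n := by ring
  gcongr Real.exp (?_ - L)
  calc _ ≤ 3 * (4 * K * n) :=
        mul_le_mul Real.exp_one_lt_three.le hmean (by positivity) (by norm_num)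
    _ = 12 * K * n := by ring

theorem Pr_not_forall_edgeDegree_le_pow (hn : 2 ≤ n) (hb : b ≤ numEdges n)
    (hlen : ((b - a : ℕ) : ℝ) ≤ n * Real.log n) (L : ℕ) :
    Pr (fun σ : EdgeOrdering n => ¬ ∀ v, edgeDegree (proposed (proposals σ) a b) v ≤ L) ≤
      n ^ 7 * Real.exp (-L) := by
  have hn0 : (0 : ℝ) < n := by exact_mod_cast (by omega : 0 < n)
  have hmean : ((n - 1 : ℕ) : ℝ) * ((b - a : ℕ) : ℝ) / numEdges n ≤ 2 * Real.log n := by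
    rw [div_le_iff₀ (numEdges_pos hn), Nat.cast_pred (by omega)]
    calc ((n : ℝ) - 1) * ((b - a : ℕ) : ℝ) ≤ (n - 1) * (n * Real.log n) := by
          gcongr
          exact sub_nonneg.2 (by exact_mod_cast (by omega : 1 ≤ n))
      _ = 2 * Real.log n * numEdges n := by
          linear_combination -Real.log n * two_mul_cast_numEdges n
  calc _ ≤ _ := Pr_not_forall_edgeDegree_le hb L
    _ ≤ n * Real.exp (3 * (2 * Real.log n) - L) := by
      gcongr
      exact Real.exp_one_lt_three.le
    _ = n ^ 7 * Real.exp (-L) := by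
      rw [sub_eq_add_neg, Real.exp_add, ← mul_assoc, ← mul_assoc,
        show (3 : ℝ) * 2 * Real.log n = (6 : ℕ) * Real.log n by norm_num, Real.exp_nat_mul,
        Real.exp_log hn0]
      ring

theorem StrategyParams.Pr_exists_not_hitsTightSets_le {p : StrategyParams (Fin n)} (hn : 2 ≤ n)
    (hd : 1 ≤ p.d) (hhorizon : p.horizon ≤ numEdges n)
    (hlen : (p.d + 1) * Real.log n * numEdges n ≤ (p.levelLen : ℝ) * (p.m * p.r)) :
    Pr (fun σ : EdgeOrdering n => ∃ k ∈ Finset.range p.d,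
        p.IsLevelReady k (proposals σ) ∧ ¬ p.HitsTightSets k (proposals σ)) ≤ p.d / n := by
  have hn0 : (0 : ℝ) < n := by exact_mod_cast (by omega : 0 < n)
  rw [← le_div_iff₀ (numEdges_pos hn)] at hlen
  have hlevel : ∀ k ∈ Finset.range p.d, Pr (fun σ : EdgeOrdering n =>
      p.IsLevelReady k (proposals σ) ∧ ¬ p.HitsTightSets k (proposals σ)) ≤ 1 / n := by
    intro k hk
    have hend := (p.levelStart_succ_le_horizon (Finset.mem_range.1 hk)).trans hhorizon
    calc _ ≤ _ := Pr_isLevelReady_and_not_hitsTightSets_le hd hend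
      _ ≤ n ^ p.d * Real.exp (-((p.d + 1) * Real.log n)) := by gcongr
      _ = 1 / n := by
        rw [Real.exp_neg, ← Nat.cast_succ, Real.exp_nat_mul, Real.exp_log hn0, pow_succ]
        field_simp
  simpa [div_eq_mul_inv] using Pr_exists_mem_le _ _ hlevel

end Asymptotics

section ParameterChoice

/-- The conditions on the constants of the parameter choice: `R` is large compared with `d / δ`, and
`m` is large compared with `d * R / δ`. -/
structure SuitableConstants (d m R : ℕ) (δ : ℝ) : Prop where
  two_le_d : 2 ≤ d
  pos : 0 < δ
  le_one : δ ≤ 1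
  le_R : 24576 * ((d : ℝ) + 1) ^ 3 ≤ δ * R
  le_m : 8 * (d : ℝ) * R * (d + 1) ≤ δ * m

theorem exists_suitableConstants {d : ℕ} {δ : ℝ} (hd : 2 ≤ d) (hδ : 0 < δ) (hδ1 : δ ≤ 1) :
    ∃ m R, SuitableConstants d m R δ := by
  obtain ⟨R, hR⟩ := exists_nat_ge (24576 * ((d : ℝ) + 1) ^ 3 / δ)
  obtain ⟨m, hm⟩ := exists_nat_ge (8 * (d : ℝ) * R * (d + 1) / δ)
  exact ⟨m, R, hd, hδ, hδ1, (div_le_iff₀' hδ).1 hR, (div_le_iff₀' hδ).1 hm⟩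

/-- The conditions on the number of vertices under which the failure probability is estimated. -/
structure IsLarge (d R : ℕ) (δ : ℝ) (n : ℕ) : Prop where
  add_two_le : d + 2 ≤ n
  R_le : R ≤ n
  linear_le : (8 * ((d : ℝ) + 1) * R + 4 * R ^ 2) * n + 1 + 2 * d ≤ δ * (n * Real.log n) / 8
  mul_d_le : 8 * (d : ℝ) ≤ δ * (n - 1)
  log_le : (1 + δ) * Real.log n ≤ n - 1

theorem IsLarge.two_le {d R n : ℕ} {δ : ℝ} (hn : IsLarge d R δ n) : 2 ≤ n :=
  (Nat.le_add_left 2 d).trans hn.add_two_le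

theorem tendsto_log_natCast_atTop : Tendsto (fun n : ℕ => Real.log n) atTop atTop :=
  Real.tendsto_log_atTop.comp tendsto_natCast_atTop_atTop

theorem eventually_isLarge (d R : ℕ) {δ : ℝ} (hδ : 0 < δ) : ∀ᶠ n in atTop, IsLarge d R δ n := by
  have hlog : ∀ᶠ n : ℕ in atTop, (1 + δ) * Real.log n ≤ n - 1 := by
    have hsmall := (Real.isLittleO_log_id_atTop.bound
      (show (0 : ℝ) < 1 / (2 * (1 + δ)) by positivity)).filter_mono
        (tendsto_natCast_atTop_atTop (R := ℝ))
    filter_upwards [Filter.eventually_map.1 hsmall, eventually_ge_atTop 2] with n hn hn2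
    have hn2' : (2 : ℝ) ≤ n := by exact_mod_cast hn2
    rw [id, Real.norm_of_nonneg (Real.log_natCast_nonneg n), Real.norm_natCast, div_mul_eq_mul_div,
      one_mul, le_div_iff₀ (by positivity)] at hn
    linarith
  filter_upwards [eventually_ge_atTop (d + 2), eventually_ge_atTop R, hlog,
    tendsto_log_natCast_atTop.eventually_ge_atTop
      (8 * (8 * ((d : ℝ) + 1) * R + 4 * R ^ 2 + 1 + 2 * d) / δ),
    (tendsto_natCast_atTop_atTop (R := ℝ)).eventually_ge_atTop (8 * d / δ + 1)]
    with n hn hR hlog hlinear hdn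
  rw [div_le_iff₀ hδ] at hlinear
  rw [← le_sub_iff_add_le, div_le_iff₀ hδ] at hdn
  refine ⟨hn, hR, ?_, by linarith, hlog⟩
  have hn1 : (1 : ℝ) ≤ n := by exact_mod_cast (by omega : 1 ≤ n)
  calc (8 * ((d : ℝ) + 1) * R + 4 * R ^ 2) * n + 1 + 2 * d
      ≤ (8 * ((d : ℝ) + 1) * R + 4 * R ^ 2) * n + 1 * n + 2 * d * n := by
        rw [one_mul]
        exact add_le_add (by gcongr) (le_mul_of_one_le_right (by positivity) hn1)
    _ = 8 * (8 * ((d : ℝ) + 1) * R + 4 * R ^ 2 + 1 + 2 * d) * n / 8 := by ring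
    _ ≤ Real.log n * δ * n / 8 := by gcongr
    _ = δ * (n * Real.log n) / 8 := by ring

/-- The parameters with which Builder plays on `n` vertices. The filling phase takes up nearly all
of the rounds. -/
def chosenParams (d m R : ℕ) (δ : ℝ) (n : ℕ) : StrategyParams (Fin n) where
  d := d
  m := m
  r := n / R
  coreEnd := 8 * (d + 1) * R * n
  pairLen := 4 * R ^ 2 * n
  fillLen := ⌈(1 + δ / 2) * n * Real.log n / 2⌉₊
  levelLen := ⌈δ / (8 * d) * (n * Real.log n)⌉₊
  base := Finset.univ.filter fun i : Fin n => (i : ℕ) < 4 * (d + 1) * (n / R)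

namespace SuitableConstants

variable {d m R n : ℕ} {δ : ℝ}

variable (hc : SuitableConstants d m R δ)
include hc

theorem d_pos : 0 < d := two_pos.trans_le hc.two_le_d

theorem four_mul_le_R : 4 * (d + 1) ≤ R := by
  have hcube : (d : ℝ) + 1 ≤ (d + 1) ^ 3 := le_self_pow₀ (by simp) (by norm_num)
  have hδR : δ * R ≤ R := mul_le_of_le_one_left (by positivity) hc.le_one
  have hR : ((4 * (d + 1) : ℕ) : ℝ) ≤ R := by
    push_cast
    linarith [hc.le_R, (by positivity : (0 : ℝ) ≤ d)]
  exact_mod_cast hR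

theorem R_pos : 0 < R := by
  have := hc.four_mul_le_R
  omega

theorem m_pos : 0 < m := by
  have hd := hc.d_pos
  have hR := hc.R_pos
  refine Nat.pos_of_ne_zero fun hm => ?_
  have hle := hc.le_m
  rw [hm, Nat.cast_zero, mul_zero] at hle
  exact hle.not_gt (by positivity)

theorem card_base_chosenParams (n : ℕ) :
    (chosenParams d m R δ n).base.card = 4 * (d + 1) * (n / R) := by
  have hle : 4 * (d + 1) * (n / R) ≤ n :=
    (Nat.mul_le_mul_right _ hc.four_mul_le_R).trans (Nat.mul_div_le n R)
  rw [chosenParams, Fin.card_filter_val_lt, min_eq_right hle]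

theorem cast_le_of_two_mul_m_mul_le {β x : ℕ} (hβ : (β : ℝ) ≤ δ * n / 8)
    (hx : 2 * m * x ≤ m * (2 * β + d * n + 2 * (d * ((d + 1) * (2 * (n / R))))) +
      2 * (d * (d * n))) : (x : ℝ) ≤ (1 + δ) * d * n / 2 := by
  have hx' : 2 * (m : ℝ) * x ≤ m * (2 * β + d * n + 2 * (d * ((d + 1) * (2 * (n / R : ℕ))))) +
      2 * (d * (d * n)) := by exact_mod_cast hx
  have hm : (0 : ℝ) < m := by exact_mod_cast hc.m_pos
  have hR : (1 : ℝ) ≤ R := by exact_mod_cast hc.R_pos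
  have hd : (2 : ℝ) ≤ d := by exact_mod_cast hc.two_le_d
  have hδ := hc.pos
  have hfill : 4 * (d : ℝ) * (d + 1) * (n / R : ℕ) ≤ δ * n / 4 := by
    have hdR : 16 * (d : ℝ) * (d + 1) ≤ δ * R := by
      refine le_trans ?_ hc.le_R
      nlinarith [sq_nonneg (d : ℝ), pow_nonneg (by linarith : (0 : ℝ) ≤ d) 3]
    have hRr : (R : ℝ) * (n / R : ℕ) ≤ n := by exact_mod_cast Nat.mul_div_le n R
    nlinarith [mul_le_mul_of_nonneg_right hdR (Nat.cast_nonneg (α := ℝ) (n / R)),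
      mul_le_mul_of_nonneg_left hRr hδ.le]
  have hlevels : 2 * ((d : ℝ) * (d * n)) ≤ m * (δ * n / 4) := by
    have hdm : 8 * (d : ℝ) * d ≤ δ * m := by
      refine le_trans ?_ hc.le_m
      rw [mul_assoc _ (R : ℝ)]
      gcongr
      nlinarith
    nlinarith [mul_le_mul_of_nonneg_right hdm (Nat.cast_nonneg (α := ℝ) n)]
  have hδn : δ * n * 2 ≤ δ * n * d := by gcongr
  have hmul : m * (2 * (x : ℝ)) ≤ m * ((1 + δ) * d * n) := by
    calc m * (2 * (x : ℝ)) = 2 * m * x := by ring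
      _ ≤ _ := hx'
      _ ≤ m * (2 * (δ * n / 8) + d * n + δ * n / 4) + m * (δ * n / 4) :=
        add_le_add (mul_le_mul_of_nonneg_left (by linarith) hm.le) hlevels
      _ = m * (d * n + δ * n * 3 / 4) := by ring
      _ ≤ m * ((1 + δ) * d * n) :=
        mul_le_mul_of_nonneg_left (by nlinarith [mul_nonneg hδ.le n.cast_nonneg]) hm.le
  linarith [le_of_mul_le_mul_left hmul hm]

variable (hn : IsLarge d R δ n)
include hn

theorem one_le_r : 1 ≤ n / R := (Nat.one_le_div_iff hc.R_pos).2 hn.R_le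

theorem le_two_mul_R_mul_r : (n : ℝ) ≤ 2 * R * (n / R : ℕ) := by
  have hlt := Nat.lt_mul_div_succ n hc.R_pos
  have hle : R ≤ R * (n / R) := Nat.le_mul_of_pos_right _ (hc.one_le_r hn)
  have hn2 : n ≤ 2 * R * (n / R) := by
    rw [Nat.mul_succ] at hlt
    rw [mul_assoc]
    omega
  exact_mod_cast hn2

theorem admissible_chosenParams : (chosenParams d m R δ n).Admissible where
  two_le_d := hc.two_le_d
  one_le_r := hc.one_le_r hn
  le_card_base := (hc.card_base_chosenParams n).ge

theorem horizon_chosenParams_le :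
    ((chosenParams d m R δ n).horizon : ℝ) ≤ (1 + δ) * n * Real.log n / 2 := by
  have hd : (0 : ℝ) < d := by exact_mod_cast hc.d_pos
  have hδ := hc.pos
  have hfill : (⌈(1 + δ / 2) * n * Real.log n / 2⌉₊ : ℝ) ≤ (1 + δ / 2) * n * Real.log n / 2 + 1 :=
    (Nat.ceil_lt_add_one (by positivity)).le
  have hlevel : d * (⌈δ / (8 * d) * (n * Real.log n)⌉₊ : ℝ) ≤ δ * (n * Real.log n) / 8 + d := by
    calc d * (⌈δ / (8 * d) * (n * Real.log n)⌉₊ : ℝ)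
        ≤ d * (δ / (8 * d) * (n * Real.log n) + 1) := by
          gcongr
          exact (Nat.ceil_lt_add_one (by positivity)).le
      _ = δ * (n * Real.log n) / 8 + d := by field_simp
  simp only [StrategyParams.horizon, StrategyParams.levelStart, StrategyParams.fillEnd,
    StrategyParams.pairEnd, chosenParams]
  push_cast
  linarith [hn.linear_le]

theorem horizon_chosenParams_le_numEdges : (chosenParams d m R δ n).horizon ≤ numEdges n := by
  have hle : ((chosenParams d m R δ n).horizon : ℝ) ≤ numEdges n := by
    nlinarith [hc.horizon_chosenParams_le hn, two_mul_cast_numEdges n,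
      mul_le_mul_of_nonneg_left hn.log_le (Nat.cast_nonneg (α := ℝ) n)]
  exact_mod_cast hle

theorem horizon_chosenParams_le_mul_log :
    ((chosenParams d m R δ n).horizon : ℝ) ≤ n * Real.log n := by
  refine (hc.horizon_chosenParams_le hn).trans ?_
  have : δ * (n * Real.log n) ≤ 1 * (n * Real.log n) := by
    gcongr
    exact hc.le_one
  linarith

end SuitableConstants

end ParameterChoice

namespace SuitableConstants

variable {d m R n : ℕ} [NeZero n] {δ : ℝ}

variable (hc : SuitableConstants d m R δ) (hn : IsLarge d R δ n)
include hc hn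

theorem Pr_not_isJoined_base_le :
    Pr (fun σ : EdgeOrdering n => ¬ IsJoined (chosenParams d m R δ n).r
        (proposed (proposals σ) 0 (chosenParams d m R δ n).coreEnd)
        (chosenParams d m R δ n).base) ≤ Real.exp (-(1 / (2 * R) * n)) := by
  have hR : (0 : ℝ) < R := by exact_mod_cast hc.R_pos
  have hr := hc.le_two_mul_R_mul_r hn
  have hN : (numEdges n : ℝ) ≤ R * n * (n / R : ℕ) := by
    nlinarith [two_mul_numEdges_le_sq n, n.cast_nonneg (α := ℝ)]
  refine (Pr_not_isJoined_le_exp hn.two_le ?_ ?_).trans (Real.exp_le_exp.2 (neg_le_neg ?_))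
  · exact ((chosenParams d m R δ n).coreEnd_le_fillEnd.trans
      (chosenParams d m R δ n).fillEnd_le_horizon).trans (hc.horizon_chosenParams_le_numEdges hn)
  · rw [hc.card_base_chosenParams, Nat.sub_zero, chosenParams]
    push_cast
    calc 2 * (4 * ((d : ℝ) + 1) * (n / R : ℕ)) * numEdges n
        ≤ 2 * (4 * (d + 1) * (n / R : ℕ)) * (R * n * (n / R : ℕ)) := by gcongr
      _ = 8 * (d + 1) * R * n * (n / R : ℕ) ^ 2 := by ring
  · rw [hc.card_base_chosenParams, one_div_mul_eq_div, div_le_iff₀ (by positivity)]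
    push_cast
    nlinarith [(by positivity : (0 : ℝ) ≤ d * R * (n / R : ℕ)),
      (by positivity : (0 : ℝ) ≤ R * (n / R : ℕ))]

theorem Pr_not_isJoined_univ_le :
    Pr (fun σ : EdgeOrdering n => ¬ IsJoined (chosenParams d m R δ n).r
        (proposed (proposals σ) (chosenParams d m R δ n).coreEnd
          (chosenParams d m R δ n).pairEnd) Finset.univ) ≤ Real.exp (-(1 / 2 * n)) := by
  have hsq : (n : ℝ) ^ 2 ≤ (2 * R * (n / R : ℕ)) ^ 2 := by
    gcongr
    exact hc.le_two_mul_R_mul_r hn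
  refine (Pr_not_isJoined_le_exp hn.two_le ?_ ?_).trans (Real.exp_le_exp.2 (neg_le_neg ?_))
  · exact ((chosenParams d m R δ n).pairEnd_le_fillEnd.trans
      (chosenParams d m R δ n).fillEnd_le_horizon).trans (hc.horizon_chosenParams_le_numEdges hn)
  · rw [Finset.card_univ, Fintype.card_fin, StrategyParams.pairEnd, Nat.add_sub_cancel_left,
      chosenParams]
    push_cast
    calc 2 * (n : ℝ) * numEdges n = n * (2 * numEdges n) := by ring
      _ ≤ n * (2 * R * (n / R : ℕ)) ^ 2 := by
        gcongr
        exact (two_mul_numEdges_le_sq n).trans hsq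
      _ = 4 * R ^ 2 * n * (n / R : ℕ) ^ 2 := by ring
  · rw [Finset.card_univ, Fintype.card_fin, one_div_mul_eq_div]

theorem Pr_not_forall_lt_edgeDegree_fill_le :
    Pr (fun σ : EdgeOrdering n => ¬ ∀ v, (chosenParams d m R δ n).d + 1 ≤ edgeDegree
        (proposed (proposals σ) (chosenParams d m R δ n).pairEnd
          (chosenParams d m R δ n).fillEnd) v) ≤
      (d + 1) * (1 + 4 * Real.log n) ^ d * Real.exp (-(δ / 6 * Real.log n)) := by
  have hfill : (chosenParams d m R δ n).fillEnd - (chosenParams d m R δ n).pairEnd =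
      ⌈(1 + δ / 2) * n * Real.log n / 2⌉₊ := by
    rw [StrategyParams.fillEnd, Nat.add_sub_cancel_left, chosenParams]
  have hend := (chosenParams d m R δ n).fillEnd_le_horizon
  rw [div_mul_eq_mul_div]
  refine Pr_not_forall_lt_edgeDegree_le_exp hn.two_le
    (hend.trans (hc.horizon_chosenParams_le_numEdges hn)) hc.pos hc.le_one ?_ ?_ ?_ hn.mul_d_le
  · rw [hfill]
    exact Nat.le_ceil _
  · refine le_trans ?_ (hc.horizon_chosenParams_le_mul_log hn)
    exact_mod_cast (Nat.sub_le _ _).trans hend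
  · have hlinear := hn.linear_le
    have : (0 : ℝ) ≤ (8 * ((d : ℝ) + 1) * R + 4 * R ^ 2) * n := by positivity
    simp only [chosenParams]
    linarith [(by positivity : (0 : ℝ) ≤ d)]

theorem Pr_not_isSparse_fill_le :
    Pr (fun σ : EdgeOrdering n => ¬ ∀ X : Finset (Fin n),
        X.card ≤ 2 * ((chosenParams d m R δ n).m + (chosenParams d m R δ n).d) →
        (edgesWithin (proposed (proposals σ) 0 (chosenParams d m R δ n).fillEnd) X).card ≤
          X.card) ≤
      ((2 * (m + d) : ℕ) + 1) * (2 ^ (2 * (m + d)) ^ 2 *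
        (1 + 4 * Real.log n) ^ (2 * (m + d)) * (4 * Real.log n / n)) := by
  have hend := (chosenParams d m R δ n).fillEnd_le_horizon
  refine Pr_not_isSparse_le_log hn.two_le (hend.trans (hc.horizon_chosenParams_le_numEdges hn)) ?_
    (2 * (m + d))
  refine le_trans ?_ (hc.horizon_chosenParams_le_mul_log hn)
  exact_mod_cast (Nat.sub_le _ _).trans hend

theorem Pr_not_card_edgesWithin_base_le :
    Pr (fun σ : EdgeOrdering n => ¬ (edgesWithin (proposed (proposals σ) 0
        (chosenParams d m R δ n).coreEnd) (chosenParams d m R δ n).base).card ≤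
          ⌊δ * n / 8⌋₊) ≤ Real.exp 1 * Real.exp (-(δ / 16 * n)) := by
  have hR : (0 : ℝ) < R := by exact_mod_cast hc.R_pos
  have hK : 12 * (128 * ((d : ℝ) + 1) ^ 3 / R) ≤ δ / 16 := by
    rw [← mul_div_assoc, div_le_iff₀ hR]
    linarith [hc.le_R]
  have hRr : (R : ℝ) * (n / R : ℕ) ≤ n := by exact_mod_cast Nat.mul_div_le n R
  refine (Pr_not_card_edgesWithin_le_exp (K := 128 * ((d : ℝ) + 1) ^ 3 / R) hn.two_le ?_
    (by positivity) ?_ _).trans ?_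
  · exact ((chosenParams d m R δ n).coreEnd_le_fillEnd.trans
      (chosenParams d m R δ n).fillEnd_le_horizon).trans (hc.horizon_chosenParams_le_numEdges hn)
  · rw [hc.card_base_chosenParams, Nat.sub_zero, chosenParams]
    push_cast
    calc (4 * ((d : ℝ) + 1) * (n / R : ℕ)) ^ 2 * (8 * ((d : ℝ) + 1) * R * n)
        = 128 * ((d : ℝ) + 1) ^ 3 / R * (n * (R * (n / R : ℕ)) ^ 2) := by
          field_simp
          ring
      _ ≤ 128 * ((d : ℝ) + 1) ^ 3 / R * (n * n ^ 2) := by gcongr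
      _ = 128 * ((d : ℝ) + 1) ^ 3 / R * n ^ 3 := by ring
  · rw [← Real.exp_add]
    gcongr
    nlinarith [mul_le_mul_of_nonneg_right hK n.cast_nonneg, Nat.lt_floor_add_one (δ * n / 8)]

theorem Pr_not_forall_edgeDegree_le_r_le :
    Pr (fun σ : EdgeOrdering n => ¬ ∀ v, edgeDegree (proposed (proposals σ) 0
        (chosenParams d m R δ n).horizon) v ≤ (chosenParams d m R δ n).r) ≤
      n ^ 7 * Real.exp (-(1 / (2 * R) * n)) := by
  have hR : (0 : ℝ) < R := by exact_mod_cast hc.R_pos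
  refine (Pr_not_forall_edgeDegree_le_pow hn.two_le (hc.horizon_chosenParams_le_numEdges hn)
    (hc.horizon_chosenParams_le_mul_log hn) (n / R)).trans ?_
  gcongr
  rw [one_div_mul_eq_div, div_le_iff₀' (by positivity)]
  exact hc.le_two_mul_R_mul_r hn

theorem Pr_exists_not_hitsTightSets_le :
    Pr (fun σ : EdgeOrdering n => ∃ k ∈ Finset.range (chosenParams d m R δ n).d,
        (chosenParams d m R δ n).IsLevelReady k (proposals σ) ∧
          ¬ (chosenParams d m R δ n).HitsTightSets k (proposals σ)) ≤ d / n := by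
  have hd : (0 : ℝ) < d := by exact_mod_cast hc.d_pos
  have hδ := hc.pos
  have hmr : 8 * d * (d + 1) * (n : ℝ) ≤ 2 * (δ * m) * (n / R : ℕ) :=
    calc 8 * d * (d + 1) * (n : ℝ) ≤ 8 * d * (d + 1) * (2 * R * (n / R : ℕ)) := by
          gcongr
          exact hc.le_two_mul_R_mul_r hn
      _ = 2 * (8 * d * R * (d + 1)) * (n / R : ℕ) := by ring
      _ ≤ 2 * (δ * m) * (n / R : ℕ) := by
          gcongr 2 * ?_ * _
          exact hc.le_m
  refine StrategyParams.Pr_exists_not_hitsTightSets_le hn.two_le hc.d_pos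
    (hc.horizon_chosenParams_le_numEdges hn) ?_
  calc ((d : ℝ) + 1) * Real.log n * numEdges n
      ≤ (d + 1) * Real.log n * (n ^ 2 / 2) := by
        gcongr
        linarith [two_mul_numEdges_le_sq n]
    _ = 8 * d * (d + 1) * n * (n * Real.log n) / (16 * d) := by
        field_simp
        ring
    _ ≤ 2 * (δ * m) * (n / R : ℕ) * (n * Real.log n) / (16 * d) := by gcongr
    _ = δ / (8 * d) * (n * Real.log n) * (m * (n / R : ℕ)) := by
        field_simp
        ring
    _ ≤ ⌈δ / (8 * d) * (n * Real.log n)⌉₊ * (m * (n / R : ℕ)) := by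
        gcongr
        exact Nat.le_ceil _

end SuitableConstants

/-- An upper bound for the probability that a random edge ordering fails one of the seven
requirements that make it good for `chosenParams d m R δ n`, one summand for each of them. -/
def failureBound (d m R : ℕ) (δ : ℝ) (n : ℕ) : ℝ :=
  Real.exp (-(1 / (2 * R) * n)) + (Real.exp (-(1 / 2 * n)) +
    ((d + 1) * (1 + 4 * Real.log n) ^ d * Real.exp (-(δ / 6 * Real.log n)) +
    (((2 * (m + d) : ℕ) + 1) * (2 ^ (2 * (m + d)) ^ 2 *
      (1 + 4 * Real.log n) ^ (2 * (m + d)) * (4 * Real.log n / n)) +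
    (Real.exp 1 * Real.exp (-(δ / 16 * n)) + (n ^ 7 * Real.exp (-(1 / (2 * R) * n)) + d / n)))))

theorem SuitableConstants.Pr_not_isGood_le {d m R n : ℕ} [NeZero n] {δ : ℝ}
    (hc : SuitableConstants d m R δ) (hn : IsLarge d R δ n) :
    Pr (fun σ : EdgeOrdering n =>
      ¬ (chosenParams d m R δ n).IsGood ⌊δ * n / 8⌋₊ (proposals σ)) ≤ failureBound d m R δ n :=
  ((hc.admissible_chosenParams hn).Pr_not_isGood_le
    (hc.horizon_chosenParams_le_numEdges hn) _).trans <|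
    add_le_add (hc.Pr_not_isJoined_base_le hn) <| add_le_add (hc.Pr_not_isJoined_univ_le hn) <|
    add_le_add (hc.Pr_not_forall_lt_edgeDegree_fill_le hn) <|
    add_le_add (hc.Pr_not_isSparse_fill_le hn) <|
    add_le_add (hc.Pr_not_card_edgesWithin_base_le hn) <|
    add_le_add (hc.Pr_not_forall_edgeDegree_le_r_le hn) (hc.Pr_exists_not_hitsTightSets_le hn)

section Limits

theorem tendsto_pow_mul_exp_neg_mul_atTop_nhds_zero (k : ℕ) {c : ℝ} (hc : 0 < c) :
    Tendsto (fun x : ℝ => x ^ k * Real.exp (-(c * x))) atTop (nhds 0) := by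
  simpa [Real.rpow_natCast, neg_mul] using tendsto_rpow_mul_exp_neg_mul_atTop_nhds_zero k c hc

theorem tendsto_affine_pow_mul_exp_neg_mul_atTop_nhds_zero (k : ℕ) {c : ℝ} (hc : 0 < c) :
    Tendsto (fun x : ℝ => (1 + 4 * x) ^ k * Real.exp (-(c * x))) atTop (nhds 0) := by
  have haffine : Tendsto (fun x : ℝ => 1 + 4 * x) atTop atTop :=
    tendsto_atTop_add_const_left _ _ (tendsto_id.const_mul_atTop (by norm_num))
  have h := ((tendsto_pow_mul_exp_neg_mul_atTop_nhds_zero k (c := c / 4) (by positivity)).comp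
    haffine).mul_const (Real.exp (c / 4))
  rw [zero_mul] at h
  refine h.congr fun x => ?_
  rw [Function.comp_apply, mul_assoc, ← Real.exp_add]
  ring_nf

theorem tendsto_log_pow_mul_log_div_atTop_nhds_zero (k : ℕ) :
    Tendsto (fun n : ℕ => (1 + 4 * Real.log n) ^ k * (4 * Real.log n / n)) atTop (nhds 0) := by
  have hsub := ((tendsto_affine_pow_mul_exp_neg_mul_atTop_nhds_zero (k + 1) one_pos).sub
    (tendsto_affine_pow_mul_exp_neg_mul_atTop_nhds_zero k one_pos)).comp tendsto_log_natCast_atTop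
  rw [sub_zero] at hsub
  refine hsub.congr' ?_
  filter_upwards [eventually_gt_atTop 0] with n hn
  rw [Function.comp_apply, one_mul, Real.exp_neg, Real.exp_log (by exact_mod_cast hn)]
  ring

theorem tendsto_failureBound (d m : ℕ) {R : ℕ} {δ : ℝ} (hR : 0 < R) (hδ : 0 < δ) :
    Tendsto (failureBound d m R δ) atTop (nhds 0) := by
  have hR' : (0 : ℝ) < 1 / (2 * R) := by positivity
  have hexp {c : ℝ} (hc : 0 < c) (k : ℕ) :
      Tendsto (fun n : ℕ => (n : ℝ) ^ k * Real.exp (-(c * n))) atTop (nhds 0) :=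
    (tendsto_pow_mul_exp_neg_mul_atTop_nhds_zero k hc).comp tendsto_natCast_atTop_atTop
  have hdegree := ((tendsto_affine_pow_mul_exp_neg_mul_atTop_nhds_zero d
    (show 0 < δ / 6 by positivity)).comp tendsto_log_natCast_atTop).const_mul ((d : ℝ) + 1)
  have hsparse := ((tendsto_log_pow_mul_log_div_atTop_nhds_zero (2 * (m + d))).const_mul
    ((2 : ℝ) ^ (2 * (m + d)) ^ 2)).const_mul (((2 * (m + d) : ℕ) : ℝ) + 1)
  have hbase := (hexp (show 0 < δ / 16 by positivity) 0).const_mul (Real.exp 1)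
  have hsum := (hexp hR' 0).add ((hexp one_half_pos 0).add (hdegree.add (hsparse.add
    (hbase.add ((hexp hR' 7).add (tendsto_const_div_atTop_nhds_zero_nat (d : ℝ)))))))
  simpa only [pow_zero, one_mul, mul_zero, add_zero, Function.comp_apply, ← mul_assoc] using
    hsum.congr fun n => by simp only [failureBound, pow_zero, one_mul, Function.comp_apply,
      mul_assoc]

end Limits

theorem filter_lt_range (N t : ℕ) :
    (List.range N).filter (fun i => decide (i < t)) = List.range (min N t) := by
  induction N with
  | zero => simp
  | succ N ih =>
    rw [List.range_succ, List.filter_append, ih]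
    rcases lt_or_ge N t with h | h
    · rw [min_eq_left h.le, min_eq_left h, List.range_succ]
      simp [h]
    · rw [min_eq_right h, min_eq_right (by omega)]
      simp [h]

theorem history_eq_map_proposals {n : ℕ} [NeZero n] (σ : EdgeOrdering n) (t : ℕ) :
    history σ t = (List.range (min (numEdges n) t)).map (proposals σ) := by
  rw [← filter_lt_range, ← List.map_coe_finRange_eq_range, List.filter_map, List.map_map, history]
  congr 1
  funext i
  exact (proposals_of_lt σ i.2).symm

namespace OnlineRule

section Capped

variable {V : Type*} [DecidableEq V] (R : OnlineRule V) {b s t : ℕ}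

/-- The rule that follows `R` until `b` edges have been accepted and ignores all later proposals. -/
def capped (b : ℕ) : OnlineRule V := fun s h x => R s h x ∧ (h s).card < b

theorem card_graph_capped_le (b : ℕ) (e : ℕ → Sym2 V) (s : ℕ) :
    ((R.capped b).graph e s).card ≤ b := by
  induction s with
  | zero => simp [graph_zero]
  | succ s ih =>
    rw [graph_succ]
    split_ifs with hacc
    · exact (Finset.card_insert_le _ _).trans hacc.2
    · exact ih

theorem snapshots_capped {e : ℕ → Sym2 V} (hb : (R.graph e t).card ≤ b) (hs : s ≤ t) :
    (R.capped b).snapshots e s = R.snapshots e s := by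
  induction s with
  | zero => rfl
  | succ s ih =>
    rw [snapshots, snapshots, ih (by omega)]
    congr 1
    by_cases hacc : R s (R.snapshots e s) (e s)
    · by_cases hmem : e s ∈ R.snapshots e s s
      · simp [Finset.insert_eq_of_mem hmem]
      · have hcard : (insert (e s) (R.snapshots e s s)).card ≤ b := by
          refine (Finset.card_le_card ?_).trans hb
          have hsucc := R.graph_succ e s
          rw [Accepts, if_pos hacc, graph, graph] at hsucc
          exact hsucc ▸ R.graph_mono e hs
        rw [Finset.card_insert_of_notMem hmem] at hcard
        rw [if_pos hacc, if_pos ⟨hacc, hcard⟩]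
    · rw [if_neg hacc, if_neg fun h => hacc h.1]

end Capped

section Strategies

variable {n : ℕ} [NeZero n]

variable (R : OnlineRule (Fin n))

/-- Builder's strategy of following the rule `R`. -/
def toStrategy : Strategy n := fun l => R.Accepts (fun i => l.getD i s(0, 0)) (l.length - 1)

theorem toStrategy_history_succ (σ : EdgeOrdering n) {s : ℕ} (hs : s < numEdges n) :
    R.toStrategy (history σ (s + 1)) = true ↔ R.Accepts (proposals σ) s := by
  have hhistory : history σ (s + 1) = (List.range (s + 1)).map (proposals σ) := by
    rw [history_eq_map_proposals, min_eq_right hs]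
  rw [toStrategy, decide_eq_true_iff, hhistory, List.length_map, List.length_range,
    Nat.add_sub_cancel]
  refine R.accepts_congr fun i hi => ?_
  rw [List.getD_eq_getElem _ _ (by simpa using Nat.lt_succ_iff.2 hi), List.getElem_map,
    List.getElem_range]

theorem edgeSet_builderGraph_toStrategy (σ : EdgeOrdering n) (t : ℕ) :
    (builderGraph R.toStrategy σ t).edgeSet = R.graph (proposals σ) (min (numEdges n) t) := by
  ext x
  rw [builderGraph, edgeSet_fromEdgeSet, Finset.mem_coe, mem_graph]
  constructor
  · rintro ⟨⟨i, hit, rfl, hacc⟩, -⟩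
    exact ⟨i, lt_min i.2 hit, proposals_of_lt σ i.2, (R.toStrategy_history_succ σ i.2).1 hacc⟩
  · rintro ⟨i, hi, rfl, hacc⟩
    obtain ⟨hin, hit⟩ := lt_min_iff.1 hi
    exact ⟨⟨⟨i, hin⟩, hit, (proposals_of_lt σ hin).symm, (R.toStrategy_history_succ σ hin).2 hacc⟩,
      not_isDiag_proposals σ hin⟩

theorem numAccepted_toStrategy_capped_le (b : ℕ) (σ : EdgeOrdering n) (t : ℕ) :
    numAccepted (R.capped b).toStrategy σ t ≤ b := by
  refine (Finset.card_le_card fun x hx => ?_).trans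
    (R.card_graph_capped_le b (proposals σ) (min (numEdges n) t))
  rwa [Finset.mem_filter_univ, edgeSet_builderGraph_toStrategy] at hx

end Strategies

end OnlineRule

theorem StrategyParams.IsGood.isKConnected_builderGraph {n : ℕ} [NeZero n] {b t β : ℕ}
    {σ : EdgeOrdering n} {p : StrategyParams (Fin n)} (hp : p.Admissible)
    (hgood : p.IsGood β (proposals σ)) (hn : p.d + 1 ≤ n) (hN : p.horizon ≤ numEdges n)
    (ht : p.horizon ≤ t) (hb : (p.rule.graph (proposals σ) p.horizon).card ≤ b) :
    IsKConnected p.d (builderGraph (p.rule.capped b).toStrategy σ t) := by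
  refine (hgood.hasNoSmallCut_graph_horizon hp).isKConnected (one_le_two.trans hp.two_le_d)
    (by rwa [Fintype.card_fin]) fun u v _ huv => ?_
  rw [← mem_edgeSet, OnlineRule.edgeSet_builderGraph_toStrategy]
  refine (p.rule.capped b).graph_mono _ (le_min hN ht) ?_
  rwa [OnlineRule.graph, p.rule.snapshots_capped hb le_rfl]

/-- Builder's strategy in the theorem: follow the rule of `chosenParams d m R δ n` as long as fewer
than `b` edges have been accepted. -/
def chosenStrategy (d m R : ℕ) (δ : ℝ) (b : ℕ) : (n : ℕ) → Strategy n
  | 0 => fun _ => false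
  | n + 1 => ((chosenParams d m R δ (n + 1)).rule.capped b).toStrategy

theorem numAccepted_chosenStrategy_le (d m R : ℕ) (δ : ℝ) (b : ℕ) {n : ℕ} (σ : EdgeOrdering n)
    (t : ℕ) : numAccepted (chosenStrategy d m R δ b n) σ t ≤ b := by
  cases n with
  | zero => simp [chosenStrategy, numAccepted, builderGraph]
  | succ n => exact OnlineRule.numAccepted_toStrategy_capped_le _ b σ t

theorem SuitableConstants.one_sub_failureBound_le {d m R n t b : ℕ} {δ : ℝ}
    (hc : SuitableConstants d m R δ) (hn : IsLarge d R δ n)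
    (ht : (1 + δ) * n * Real.log n / 2 ≤ t) (hb : (1 + δ) * d * n / 2 ≤ b) :
    1 - failureBound d m R δ n ≤ Pr (fun σ : EdgeOrdering n =>
      IsKConnected d (builderGraph (chosenStrategy d m R δ b n) σ t)) := by
  obtain ⟨n, rfl⟩ : ∃ k, n = k + 1 := Nat.exists_eq_succ_of_ne_zero (two_pos.trans_le hn.two_le).ne'
  have hp := hc.admissible_chosenParams hn
  have hhorizon : (chosenParams d m R δ (n + 1)).horizon ≤ t := by
    exact_mod_cast (hc.horizon_chosenParams_le hn).trans ht
  calc 1 - failureBound d m R δ (n + 1)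
      ≤ 1 - Pr (fun σ : EdgeOrdering (n + 1) =>
          ¬ (chosenParams d m R δ (n + 1)).IsGood ⌊δ * (n + 1 : ℕ) / 8⌋₊ (proposals σ)) :=
        sub_le_sub_left (hc.Pr_not_isGood_le hn) 1
    _ ≤ _ := one_sub_Pr_not_le _
    _ ≤ _ := Pr_mono fun σ hgood => ?_
  refine hgood.isKConnected_builderGraph hp ((Nat.le_succ _).trans hn.add_two_le)
    (hc.horizon_chosenParams_le_numEdges hn) hhorizon ?_
  have hcard := hgood.two_mul_card_graph_horizon_le hp
  rw [Fintype.card_fin] at hcard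
  have hδ := hc.pos
  have hbudget := (hc.cast_le_of_two_mul_m_mul_le (Nat.floor_le (by positivity)) hcard).trans hb
  exact_mod_cast hbudget

end BuilderGame

theorem statement1_general (d : ℕ) (hd : 2 ≤ d) (ε : ℝ) (hε : 0 < ε) (t b : ℕ → ℕ)
    (ht : ∀ᶠ n : ℕ in atTop, (1 + ε) * n * Real.log n / 2 ≤ (t n : ℝ))
    (hb : ∀ᶠ n : ℕ in atTop, (1 + ε) * d * n / 2 ≤ (b n : ℝ)) :
    ∃ strat : (n : ℕ) → Strategy n,
      (∀ n (σ : EdgeOrdering n), numAccepted (strat n) σ (t n) ≤ b n) ∧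
      Tendsto (fun n =>
          Pr (fun σ : EdgeOrdering n =>
            IsKConnected d (builderGraph (strat n) σ (t n))))
        atTop (nhds 1) := by
  obtain ⟨δ, hδ, hδε, hδ1⟩ : ∃ δ : ℝ, 0 < δ ∧ δ ≤ ε ∧ δ ≤ 1 :=
    ⟨min ε 1, lt_min hε one_pos, min_le_left _ _, min_le_right _ _⟩
  obtain ⟨m, R, hc⟩ := BuilderGame.exists_suitableConstants hd hδ hδ1
  have hlower : Tendsto (fun n => 1 - BuilderGame.failureBound d m R δ n) atTop (nhds 1) := by
    simpa using (BuilderGame.tendsto_failureBound d m hc.R_pos hδ).const_sub 1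
  refine ⟨fun n => BuilderGame.chosenStrategy d m R δ (b n) n,
    fun n σ => BuilderGame.numAccepted_chosenStrategy_le d m R δ (b n) σ (t n),
    tendsto_of_tendsto_of_tendsto_of_le_of_le' hlower tendsto_const_nhds ?_
      (.of_forall fun n => BuilderGame.Pr_le_one _)⟩
  filter_upwards [BuilderGame.eventually_isLarge d R hδ, ht, hb] with n hn htn hbn
  exact hc.one_sub_failureBound_le hn (htn.trans' (by gcongr)) (hbn.trans' (by gcongr))

/-- Let `d ≥ 2` and `ε > 0` be fixed. For every choice of integers
`t = t(n)` and `b = b(n)` with `(1+ε)·n·log n/2 ≤ t ≤ n(n-1)/2` and `b ≥ (1+ε)·d·n/2`,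
Builder has a `(t,b)`-strategy such that `G_t` is a.a.s. `d`-connected. -/
theorem statement1 (d : ℕ) (hd : 2 ≤ d) (ε : ℝ) (hε : 0 < ε) (t b : ℕ → ℕ)
    (ht : ∀ n : ℕ, (1 + ε) * n * Real.log n / 2 ≤ (t n : ℝ))
    (ht' : ∀ n, t n ≤ n * (n - 1) / 2)
    (hb : ∀ n : ℕ, (1 + ε) * d * n / 2 ≤ (b n : ℝ)) :
    ∃ strat : (n : ℕ) → Strategy n,
      (∀ n (σ : EdgeOrdering n), numAccepted (strat n) σ (t n) ≤ b n) ∧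
      Tendsto (fun n =>
          Pr (fun σ : EdgeOrdering n =>
            IsKConnected d (builderGraph (strat n) σ (t n))))
        atTop (nhds 1) :=
  statement1_general d hd ε hε t b (.of_forall ht) (.of_forall hb)

end
end

section
/- Fix an integer d ≥ 1. Take d mutually independent uniformly random orderings of the edges of K_n and, for each of them, form the greedy matching obtained by scanning the first ⌊n·log n/ω⌋ edges in order and accepting an edge if and only if it shares no endpoint with a previously accepted edge of that scan. Then asymptotically almost surely the set of vertices of K_n that are left unmatched by at least one of the d greedy matchings has size at most ω³·n/(log n). -/
open Filter SimpleGraph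
open scoped Classical

noncomputable section

/-- The greedy matching obtained by scanning the list `l` of edges in order and accepting
an edge if and only if it shares no endpoint with a previously accepted edge. -/
def greedyMatching {α : Type*} (l : List (Sym2 α)) : List (Sym2 α) :=
  l.foldl (fun acc e => if ∀ f ∈ acc, ∀ x ∈ e, x ∉ f then e :: acc else acc) []

/-!
Let `U t` be the number of vertices unmatched after `t` rounds. A vertex pair inside the unmatched
set cannot have been scanned, so all such pairs are still to come, and by exchangeability round `t`
proposes one of them with probability at least `E[U t (U t - 1) / 2] / N`, where `N = numEdges n`;
when it does, `U` drops by two. Jensen's inequality turns this into the logistic recursion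
`u (t + 1) ≤ u t - u t (u t - 1) / N` for `u t = E[U t]`, whose solutions satisfy `u t ≤ 1 + N / t`.
With `t = ⌊n log n / ω⌋` this is `O(ω n / log n)`, and summing over the `d` orderings, Markov's
inequality at `ω³ n / log n` leaves a failure probability of `O(d / ω²)`.
-/

section

open Finset
open scoped BigOperators

section Greedy

variable {α : Type*}

theorem greedyMatching_append_singleton (l : List (Sym2 α)) (e : Sym2 α) :
    greedyMatching (l ++ [e]) =
      if ∀ f ∈ greedyMatching l, ∀ x ∈ e, x ∉ f then e :: greedyMatching l
      else greedyMatching l := by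
  rw [greedyMatching, List.foldl_concat]
  congr

variable [Fintype α]

/-- The set of vertices left unmatched by the greedy matching along the list `l`. -/
def unmatched (l : List (Sym2 α)) : Finset α :=
  {v | ∀ e ∈ greedyMatching l, v ∉ e}

theorem mem_unmatched {l : List (Sym2 α)} {v : α} :
    v ∈ unmatched l ↔ ∀ e ∈ greedyMatching l, v ∉ e := by
  simp only [unmatched, mem_filter, mem_univ, true_and]

theorem mem_sym2_unmatched {l : List (Sym2 α)} {e : Sym2 α} :
    e ∈ (unmatched l).sym2 ↔ ∀ f ∈ greedyMatching l, ∀ x ∈ e, x ∉ f := by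
  simp only [mem_sym2_iff, mem_unmatched]
  exact ⟨fun h f hf x hx => h x hx f hf, fun h x hx f hf => h f hf x hx⟩

theorem unmatched_append_singleton [DecidableEq α] (l : List (Sym2 α)) (e : Sym2 α) :
    unmatched (l ++ [e]) =
      if e ∈ (unmatched l).sym2 then unmatched l \ e.toFinset else unmatched l := by
  ext v
  simp only [mem_unmatched, greedyMatching_append_singleton, ← mem_sym2_unmatched]
  split_ifs
  · rw [List.forall_mem_cons, ← mem_unmatched, Finset.mem_sdiff, Sym2.mem_toFinset, and_comm]
  · exact mem_unmatched.symm

theorem unmatched_append_singleton_subset (l : List (Sym2 α)) (e : Sym2 α) :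
    unmatched (l ++ [e]) ⊆ unmatched l := by
  rw [unmatched_append_singleton]
  split_ifs
  exacts [sdiff_subset, Subset.rfl]

theorem card_unmatched_append_singleton [DecidableEq α] (l : List (Sym2 α)) {e : Sym2 α}
    (he : ¬ e.IsDiag) :
    (unmatched (l ++ [e])).card + (if e ∈ (unmatched l).sym2 then 2 else 0) =
      (unmatched l).card := by
  rw [unmatched_append_singleton]
  split_ifs with hfree
  · have hsub : e.toFinset ⊆ unmatched l := fun x hx =>
      mem_sym2_iff.1 hfree x (Sym2.mem_toFinset.1 hx)
    rw [← Sym2.card_toFinset_of_not_isDiag e he, card_sdiff_add_card_eq_card hsub]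
  · rfl

theorem notMem_sym2_unmatched_of_mem {l : List (Sym2 α)} {e : Sym2 α} (he : e ∈ l) :
    e ∉ (unmatched l).sym2 := by
  induction l using List.reverseRecOn with
  | nil => cases he
  | append_singleton l f ih =>
    intro hfree
    have hfree' : e ∈ (unmatched l).sym2 :=
      sym2_mono (unmatched_append_singleton_subset l f) hfree
    rcases List.mem_append.1 he with hel | hef
    · exact ih hel hfree'
    · obtain rfl := List.mem_singleton.1 hef
      have hout := mem_sym2_iff.1 hfree _ e.out_fst_mem
      rw [unmatched_append_singleton, if_pos hfree', Finset.mem_sdiff, Sym2.mem_toFinset] at hout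
      exact hout.2 e.out_fst_mem

end Greedy

section UniformMean

variable {α : Type*} [Fintype α]

theorem Pr_eq_expect (P : α → Prop) [DecidablePred P] :
    Pr P = 𝔼 a, if P a then (1 : ℝ) else 0 := by
  rw [Pr, Fintype.expect_eq_sum_div_card, sum_boole]
  congr

theorem Pr_le_one (P : α → Prop) : Pr P ≤ 1 :=
  div_le_one_of_le₀ (mod_cast card_le_univ _) (Nat.cast_nonneg _)

theorem Pr_eq_one_of_forall [Nonempty α] {P : α → Prop} (hP : ∀ a, P a) : Pr P = 1 := by
  simp only [Pr_eq_expect, hP, if_true, Fintype.expect_const]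

theorem one_sub_expect_div_le_Pr_le [Nonempty α] {X : α → ℝ} {a : ℝ} (hX : ∀ i, 0 ≤ X i)
    (ha : 0 < a) : 1 - (𝔼 i, X i) / a ≤ Pr (fun i => X i ≤ a) := by
  calc 1 - (𝔼 i, X i) / a = 𝔼 i, (1 - X i / a) := by
        rw [expect_sub_distrib, Fintype.expect_const, expect_div]
    _ ≤ 𝔼 i, if X i ≤ a then (1 : ℝ) else 0 := by
        refine expect_le_expect fun i _ => ?_
        split_ifs with hi
        · exact sub_le_self _ (div_nonneg (hX i) ha.le)
        · exact sub_nonpos.2 ((one_le_div ha).2 (not_le.1 hi).le)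
    _ = Pr (fun i => X i ≤ a) := (Pr_eq_expect _).symm

theorem sq_expect_le_expect_sq (f : α → ℝ) : (𝔼 i, f i) ^ 2 ≤ 𝔼 i, f i ^ 2 := by
  cases isEmpty_or_nonempty α
  · simp
  · simpa using expect_mul_sq_le_sq_mul_sq univ f 1

theorem expect_comp_eval {ι : Type*} [Fintype ι] [DecidableEq ι] [Nonempty α] (j : ι)
    (f : α → ℝ) : 𝔼 σ : ι → α, f (σ j) = 𝔼 a, f a := by
  calc 𝔼 σ : ι → α, f (σ j) = 𝔼 p : α × ({i // i ≠ j} → α), f p.1 :=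
        Fintype.expect_equiv (Equiv.funSplitAt j α) _ _ fun _ => rfl
    _ = 𝔼 a, f a := by
        simp only [← univ_product_univ, expect_product, Fintype.expect_const]

end UniformMean

section History

variable {n : ℕ}

instance : Nonempty (EdgeOrdering n) := ⟨Fintype.equivFin _⟩

theorem numEdges_le_sq_div_two (n : ℕ) : (numEdges n : ℝ) ≤ (n : ℝ) ^ 2 / 2 := by
  have hcard : numEdges n = n.choose 2 := by
    rw [numEdges, ← edgeFinset_card]
    simpa using card_edgeFinset_top_eq_card_choose_two (V := Fin n)
  simpa [hcard] using Nat.choose_le_pow_div (α := ℝ) 2 n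

theorem history_succ (σ : EdgeOrdering n) (t : Fin (numEdges n)) :
    history σ (t + 1) = history σ t ++ [(σ.symm t : Sym2 (Fin n))] := by
  have hfilter : (List.finRange (numEdges n)).filter (fun r : Fin _ => decide ((r : ℕ) < t + 1)) =
      (List.finRange (numEdges n)).filter (fun r : Fin _ => decide ((r : ℕ) < t)) ++ [t] := by
    have hsorted := List.pairwise_lt_finRange (numEdges n)
    refine (hsorted.filter _).eq_of_mem_iff (List.pairwise_append.2
      ⟨hsorted.filter _, List.pairwise_singleton _ _, ?_⟩) fun r => ?_
    · simp
    · simp [le_iff_lt_or_eq, Fin.ext_iff]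
  simp only [history, hfilter, List.map_append, List.map_singleton]

theorem symm_apply_mem_history (σ : EdgeOrdering n) {t : ℕ} {r : Fin (numEdges n)}
    (hr : (r : ℕ) < t) : (σ.symm r : Sym2 (Fin n)) ∈ history σ t :=
  List.mem_map.2 ⟨r, by simpa using hr, rfl⟩

theorem history_trans_swap (σ : EdgeOrdering n) {t r : Fin (numEdges n)} (htr : t ≤ r) :
    history (σ.trans (Equiv.swap t r)) t = history σ t := by
  refine List.map_congr_left fun i hi => ?_
  have hit : i < t := by simpa using hi
  simp [Equiv.swap_apply_of_ne_of_ne hit.ne (hit.trans_le htr).ne]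

/-- The rounds whose edge joins two vertices that are unmatched after the first `t` rounds. -/
def freeRounds (σ : EdgeOrdering n) (t : ℕ) : Finset (Fin (numEdges n)) :=
  {r | (σ.symm r : Sym2 (Fin n)) ∈ (unmatched (history σ t)).sym2}

theorem mem_freeRounds {σ : EdgeOrdering n} {t : ℕ} {r : Fin (numEdges n)} :
    r ∈ freeRounds σ t ↔ (σ.symm r : Sym2 (Fin n)) ∈ (unmatched (history σ t)).sym2 := by
  simp only [freeRounds, mem_filter, mem_univ, true_and]

theorem le_of_mem_freeRounds {σ : EdgeOrdering n} {t : ℕ} {r : Fin (numEdges n)}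
    (hr : r ∈ freeRounds σ t) : t ≤ r :=
  not_lt.1 fun hrt =>
    notMem_sym2_unmatched_of_mem (symm_apply_mem_history σ hrt) (mem_freeRounds.1 hr)

theorem card_freeRounds (σ : EdgeOrdering n) (t : ℕ) :
    (freeRounds σ t).card = (unmatched (history σ t)).card.choose 2 := by
  rw [← Sym2.card_image_offDiag, ← Sym2.filter_image_mk_not_isDiag,
    ← sym2_eq_image, ← card_image_of_injective _ (Subtype.val_injective.comp σ.symm.injective)]
  congr 1
  ext e
  simp only [mem_image, mem_filter, mem_freeRounds, Function.comp_apply]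
  constructor
  · rintro ⟨r, hr, rfl⟩
    exact ⟨hr, not_isDiag_of_mem_edgeSet _ (σ.symm r).2⟩
  · rintro ⟨hfree, hdiag⟩
    have hedge : e ∈ (completeGraph (Fin n)).edgeSet := by simpa using hdiag
    exact ⟨σ ⟨e, hedge⟩, by simpa using hfree, by simp⟩

theorem card_unmatched_history_succ (σ : EdgeOrdering n) (t : Fin (numEdges n)) :
    (unmatched (history σ (t + 1))).card + (if t ∈ freeRounds σ t then 2 else 0) =
      (unmatched (history σ t)).card := by
  simp only [history_succ, mem_freeRounds]
  exact card_unmatched_append_singleton _ (not_isDiag_of_mem_edgeSet _ (σ.symm t).2)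

theorem card_unmatched_history_le_one (σ : EdgeOrdering n) {t : ℕ} (ht : numEdges n ≤ t) :
    (unmatched (history σ t)).card ≤ 1 := by
  have hempty : freeRounds σ t = ∅ := eq_empty_of_forall_notMem fun r hr =>
    absurd (le_of_mem_freeRounds hr) (r.2.trans_le ht).not_ge
  have hchoose := card_freeRounds σ t
  rw [hempty, card_empty, eq_comm, Nat.choose_eq_zero_iff] at hchoose
  exact Nat.lt_succ_iff.1 hchoose

theorem Pr_mem_freeRounds_le (t r : Fin (numEdges n)) :
    Pr (fun σ : EdgeOrdering n => r ∈ freeRounds σ t) ≤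
      Pr (fun σ : EdgeOrdering n => t ∈ freeRounds σ t) := by
  rcases lt_or_ge r t with hrt | htr
  · have hzero : ∀ σ : EdgeOrdering n, r ∉ freeRounds σ t := fun σ hr =>
      (le_of_mem_freeRounds hr).not_gt hrt
    simp only [Pr_eq_expect, hzero, if_false, expect_const_zero]
    exact expect_nonneg fun σ _ => by positivity
  · -- Transposing rounds `t` and `r` permutes the orderings and fixes the first `t` rounds.
    simp only [Pr_eq_expect]
    refine (Fintype.expect_equiv ((Equiv.refl _).equivCongr (Equiv.swap t r)) _ _ fun σ => ?_).le
    have hswap : t ∈ freeRounds (σ.trans (Equiv.swap t r)) t ↔ r ∈ freeRounds σ t := by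
      simp only [mem_freeRounds, history_trans_swap σ htr, Equiv.symm_trans_apply,
        Equiv.symm_swap, Equiv.swap_apply_left]
    simp only [← hswap]
    rfl

/-- The expected number of vertices left unmatched after `t` rounds of a uniformly random
ordering of the edges of `K_n`. -/
def meanUnmatched (n t : ℕ) : ℝ :=
  𝔼 σ : EdgeOrdering n, ((unmatched (history σ t)).card : ℝ)

theorem meanUnmatched_le_one {t : ℕ} (ht : numEdges n ≤ t) : meanUnmatched n t ≤ 1 :=
  expect_le univ_nonempty fun σ _ => mod_cast card_unmatched_history_le_one σ ht

theorem meanUnmatched_succ (t : Fin (numEdges n)) :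
    meanUnmatched n (t + 1) =
      meanUnmatched n t - 2 * Pr (fun σ : EdgeOrdering n => t ∈ freeRounds σ t) := by
  rw [Pr_eq_expect, mul_expect, meanUnmatched, meanUnmatched, ← expect_sub_distrib]
  refine expect_congr rfl fun σ _ => ?_
  rw [← card_unmatched_history_succ σ t]
  split_ifs <;> simp

theorem expect_card_freeRounds_le (t : Fin (numEdges n)) :
    𝔼 σ : EdgeOrdering n, ((freeRounds σ t).card : ℝ) ≤
      numEdges n * Pr (fun σ : EdgeOrdering n => t ∈ freeRounds σ t) := by
  calc 𝔼 σ : EdgeOrdering n, ((freeRounds σ t).card : ℝ)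
      = 𝔼 σ : EdgeOrdering n, ∑ r, if r ∈ freeRounds σ t then (1 : ℝ) else 0 := by
        simp only [sum_boole, filter_univ_mem]
    _ = ∑ r, Pr (fun σ : EdgeOrdering n => r ∈ freeRounds σ t) := by
        rw [expect_sum_comm]
        exact sum_congr rfl fun r _ => (Pr_eq_expect _).symm
    _ ≤ ∑ _r : Fin (numEdges n), Pr (fun σ : EdgeOrdering n => t ∈ freeRounds σ t) :=
        sum_le_sum fun r _ => Pr_mem_freeRounds_le t r
    _ = numEdges n * Pr (fun σ : EdgeOrdering n => t ∈ freeRounds σ t) := by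
        rw [sum_const, card_univ, Fintype.card_fin, nsmul_eq_mul]

theorem meanUnmatched_mul_sub_one_le (n t : ℕ) :
    meanUnmatched n t * (meanUnmatched n t - 1) ≤
      2 * 𝔼 σ : EdgeOrdering n, ((freeRounds σ t).card : ℝ) := by
  calc meanUnmatched n t * (meanUnmatched n t - 1)
      = meanUnmatched n t ^ 2 - meanUnmatched n t := by ring
    _ ≤ (𝔼 σ : EdgeOrdering n, ((unmatched (history σ t)).card : ℝ) ^ 2) - meanUnmatched n t :=
        sub_le_sub_right (sq_expect_le_expect_sq _) _
    _ = 2 * 𝔼 σ : EdgeOrdering n, ((freeRounds σ t).card : ℝ) := by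
        rw [meanUnmatched, ← expect_sub_distrib, mul_expect]
        refine expect_congr rfl fun σ _ => ?_
        rw [card_freeRounds, Nat.cast_choose_two]
        ring

theorem numEdges_mul_meanUnmatched_succ_le (t : Fin (numEdges n)) :
    numEdges n * meanUnmatched n (t + 1) ≤
      numEdges n * meanUnmatched n t - meanUnmatched n t * (meanUnmatched n t - 1) := by
  rw [meanUnmatched_succ]
  linarith [meanUnmatched_mul_sub_one_le n t, expect_card_freeRounds_le t]

-- With `y = u - 1`, the step gives `y' ≤ y (1 - y / N)`, hence `1 / y' ≥ 1 / y + 1 / N`; the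
-- conclusion is stated without reciprocals so that it also covers `y ≤ 0`.
theorem add_one_mul_sub_one_le_of_logistic_step {N s u u' : ℝ} (hN : 1 ≤ N) (hs : 0 ≤ s)
    (hstep : N * u' ≤ N * u - u * (u - 1)) (ih : s * (u - 1) ≤ N) :
    (s + 1) * (u' - 1) ≤ N := by
  rcases le_or_gt u 1 with hu1 | hu1
  · have hu' : u' ≤ 1 := by nlinarith
    exact (mul_nonpos_of_nonneg_of_nonpos (by positivity) (sub_nonpos.2 hu')).trans
      (zero_le_one.trans hN)
  · have hstep' : N * (u' - 1) ≤ (u - 1) * (N - (u - 1)) := by nlinarith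
    refine le_of_mul_le_mul_left ?_ (zero_lt_one.trans_le hN)
    calc N * ((s + 1) * (u' - 1)) = (s + 1) * (N * (u' - 1)) := by ring
      _ ≤ (s + 1) * ((u - 1) * (N - (u - 1))) := by gcongr
      _ = (s * (u - 1) + (u - 1)) * (N - (u - 1)) := by ring
      _ ≤ N * N := ?_
    rcases le_or_gt (u - 1) N with hle | hgt
    · calc (s * (u - 1) + (u - 1)) * (N - (u - 1)) ≤ (N + (u - 1)) * (N - (u - 1)) := by
            gcongr
        _ = N * N - (u - 1) ^ 2 := by ring
        _ ≤ N * N := sub_le_self _ (sq_nonneg _)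
    · have hneg : (s * (u - 1) + (u - 1)) * (N - (u - 1)) ≤ 0 :=
        mul_nonpos_of_nonneg_of_nonpos (by nlinarith) (by linarith)
      exact hneg.trans (mul_self_nonneg N)

theorem mul_meanUnmatched_sub_one_le (n t : ℕ) :
    t * (meanUnmatched n t - 1) ≤ numEdges n := by
  induction t with
  | zero => simp
  | succ t ih =>
    rcases lt_or_ge t (numEdges n) with ht | ht
    · have hN : (1 : ℝ) ≤ numEdges n := mod_cast Nat.one_le_of_lt ht
      push_cast
      exact add_one_mul_sub_one_le_of_logistic_step hN t.cast_nonneg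
        (numEdges_mul_meanUnmatched_succ_le ⟨t, ht⟩) ih
    · have hle := meanUnmatched_le_one (ht.trans t.le_succ)
      exact (mul_nonpos_of_nonneg_of_nonpos (Nat.cast_nonneg _) (sub_nonpos.2 hle)).trans
        (Nat.cast_nonneg _)

theorem meanUnmatched_floor_le (n : ℕ) {x : ℝ} (hx : 1 ≤ x) :
    meanUnmatched n ⌊x⌋₊ ≤ 1 + (n : ℝ) ^ 2 / x := by
  have hx0 : 0 < x := zero_lt_one.trans_le hx
  have hfloor : 0 < (⌊x⌋₊ : ℝ) := (half_pos hx0).trans (Nat.div_two_lt_floor hx)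
  rw [← sub_le_iff_le_add']
  calc meanUnmatched n ⌊x⌋₊ - 1 ≤ numEdges n / ⌊x⌋₊ :=
        (le_div_iff₀' hfloor).2 (mul_meanUnmatched_sub_one_le n _)
    _ ≤ ((n : ℝ) ^ 2 / 2) / (x / 2) := by
        gcongr
        · exact numEdges_le_sq_div_two n
        · exact (Nat.div_two_lt_floor hx).le
    _ = (n : ℝ) ^ 2 / x := by field_simp

end History

section Union

variable {ι : Type*} [Fintype ι] {n : ℕ}

/-- The set of vertices left unmatched, after `t` rounds, by at least one of the greedy
matchings of the family of orderings `σ`. -/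
def unmatchedBySome (σ : ι → EdgeOrdering n) (t : ℕ) : Finset (Fin n) :=
  univ.biUnion fun j => unmatched (history (σ j) t)

theorem filter_exists_unmatched_eq_unmatchedBySome (σ : ι → EdgeOrdering n) (t : ℕ)
    [DecidablePred fun v : Fin n => ∃ j, ∀ e ∈ greedyMatching (history (σ j) t), v ∉ e] :
    (univ.filter fun v : Fin n => ∃ j, ∀ e ∈ greedyMatching (history (σ j) t), v ∉ e) =
      unmatchedBySome σ t := by
  ext v
  simp only [unmatchedBySome, mem_filter, mem_biUnion, mem_univ, true_and, mem_unmatched]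

variable [DecidableEq ι]

theorem expect_card_unmatchedBySome_le (n t : ℕ) :
    𝔼 σ : ι → EdgeOrdering n, ((unmatchedBySome σ t).card : ℝ) ≤
      Fintype.card ι * meanUnmatched n t := by
  calc 𝔼 σ : ι → EdgeOrdering n, ((unmatchedBySome σ t).card : ℝ)
      ≤ 𝔼 σ : ι → EdgeOrdering n, ∑ j, ((unmatched (history (σ j) t)).card : ℝ) :=
        expect_le_expect fun σ _ => mod_cast card_biUnion_le
    _ = ∑ j, 𝔼 σ : ι → EdgeOrdering n, ((unmatched (history (σ j) t)).card : ℝ) :=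
        expect_sum_comm _ _ _
    _ = ∑ _j : ι, meanUnmatched n t :=
        sum_congr rfl fun j _ => expect_comp_eval j fun σ => ((unmatched (history σ t)).card : ℝ)
    _ = Fintype.card ι * meanUnmatched n t := by
        rw [sum_const, card_univ, nsmul_eq_mul]

theorem one_sub_div_le_Pr_card_unmatchedBySome_le (n t : ℕ) {a : ℝ} (ha : 0 < a) :
    1 - Fintype.card ι * meanUnmatched n t / a ≤
      Pr fun σ : ι → EdgeOrdering n => ((unmatchedBySome σ t).card : ℝ) ≤ a := by
  refine le_trans ?_ (one_sub_expect_div_le_Pr_le (fun _ => Nat.cast_nonneg _) ha)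
  gcongr
  exact expect_card_unmatchedBySome_le n t

theorem one_sub_le_Pr_card_unmatchedBySome_floor_le {L w : ℝ} (hL : 0 < L) (hLn : L ≤ n)
    (hw : 1 ≤ w) :
    1 - 2 * Fintype.card ι / w ^ 2 ≤
      Pr fun σ : ι → EdgeOrdering n =>
        ((unmatchedBySome σ ⌊n * L / w⌋₊).card : ℝ) ≤ w ^ 3 * n / L := by
  have hw0 : 0 < w := zero_lt_one.trans_le hw
  have hn : (0 : ℝ) < n := hL.trans_le hLn
  rcases le_or_gt w L with hwL | hLw
  · have hx : 1 ≤ n * L / w := by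
      rw [one_le_div hw0]
      nlinarith
    have hone : 1 ≤ n * w / L := by
      rw [one_le_div hL]
      nlinarith
    have hmean : meanUnmatched n ⌊n * L / w⌋₊ ≤ 2 * (n * w / L) := by
      calc meanUnmatched n ⌊n * L / w⌋₊ ≤ 1 + (n : ℝ) ^ 2 / (n * L / w) :=
            meanUnmatched_floor_le n hx
        _ = 1 + n * w / L := by field_simp
        _ ≤ 2 * (n * w / L) := by linarith
    refine le_trans ?_ (one_sub_div_le_Pr_card_unmatchedBySome_le n _ (by positivity))
    calc 1 - 2 * Fintype.card ι / w ^ 2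
        = 1 - Fintype.card ι * (2 * (n * w / L)) / (w ^ 3 * n / L) := by field_simp
      _ ≤ 1 - Fintype.card ι * meanUnmatched n ⌊n * L / w⌋₊ / (w ^ 3 * n / L) := by gcongr
  · -- Here the threshold exceeds `n`, so the event is certain.
    have hn_le : (n : ℝ) ≤ w ^ 3 * n / L := by
      rw [le_div_iff₀ hL, mul_comm]
      gcongr
      exact hLw.le.trans (le_self_pow₀ hw three_ne_zero)
    rw [Pr_eq_one_of_forall fun σ => le_trans (mod_cast card_finset_fin_le _) hn_le]
    exact sub_le_self _ (by positivity)

end Union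

end

theorem statement4_general (d : ℕ) (ω : ℕ → ℝ) (hω : Tendsto ω atTop atTop) :
    Tendsto (fun n =>
        Pr (fun σ : Fin d → EdgeOrdering n =>
          ((Finset.univ.filter (fun v : Fin n => ∃ j : Fin d,
              ∀ e ∈ greedyMatching (history (σ j) ⌊(n : ℝ) * Real.log n / ω n⌋₊),
                v ∉ e)).card : ℝ)
            ≤ ω n ^ 3 * n / Real.log n))
      atTop (nhds 1) := by
  simp only [filter_exists_unmatched_eq_unmatchedBySome]
  have hlower : Tendsto (fun n => 1 - 2 * (d : ℝ) / ω n ^ 2) atTop (nhds 1) := by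
    simpa using tendsto_const_nhds.sub
      (((tendsto_pow_atTop two_ne_zero).comp hω).const_div_atTop (2 * (d : ℝ)))
  refine tendsto_of_tendsto_of_tendsto_of_le_of_le' hlower tendsto_const_nhds ?_
    (Eventually.of_forall fun n => Pr_le_one _)
  filter_upwards [hω.eventually_ge_atTop 1, eventually_ge_atTop 2] with n hω1 hn
  simpa using one_sub_le_Pr_card_unmatchedBySome_floor_le (ι := Fin d)
    (Real.log_pos (mod_cast hn)) (Real.log_le_self n.cast_nonneg) hω1

/-- Fix `d ≥ 1`. Take `d` mutually independent uniformly random orderings of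
the edges of `K_n` and form, for each, the greedy matching among the first
`⌊n·log n/ω⌋` edges. Then a.a.s. the set of vertices left unmatched by at least one
of the `d` greedy matchings has size at most `ω³·n/log n`. -/
theorem statement4 (d : ℕ) (hd : 1 ≤ d) (ω : ℕ → ℝ)
    (hω : Tendsto ω atTop atTop)
    (hω' : Tendsto (fun n : ℕ => Real.log (ω n) / Real.log (Real.log n)) atTop (nhds 0)) :
    Tendsto (fun n =>
        Pr (fun σ : Fin d → EdgeOrdering n =>
          ((Finset.univ.filter (fun v : Fin n => ∃ j : Fin d,
              ∀ e ∈ greedyMatching (history (σ j) ⌊(n : ℝ) * Real.log n / ω n⌋₊),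
                v ∉ e)).card : ℝ)
            ≤ ω n ^ 3 * n / Real.log n))
      atTop (nhds 1) :=
  statement4_general d ω hω

end
end

section
/- Let d ≥ 2 be an integer and let G be a finite graph with maximum degree at most d. Let H be an induced subgraph of G such that: (i) every vertex of G of degree at most d−2 in G belongs to V(H); (ii) every vertex of degree exactly 1 in H has degree d in G; and (iii) every neighbour in G of a vertex of V(H) ∖ L(H) belongs to V(H), where L(H) denotes the set of vertices of degree 1 in H. Let G' be the induced subgraph of G on the vertex set V(G) ∖ (V(H) ∖ L(H)). Then every vertex of G' has degree d−1 or d in G', and the number of vertices of degree d−1 in G' is at most |L(H)| + |{v ∈ V(G) : deg_G(v) = d−1}|. -/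
open Finset

/-!
A vertex of `G'` is either a leaf of `H` or lies outside `H`. By (iii) the deleted set
`V(H) ∖ L(H)` has no neighbours outside `V(H)`, so a vertex outside `H` keeps its full degree,
which is `d - 1` or `d` by (i). A leaf of `H` has degree `d` by (ii) and loses at most its
unique neighbour in `H`. Hence a vertex of degree `d - 1` in `G'` is a leaf of `H` or already has
degree `d - 1` in `G`. Counting in `ℕ∞` makes this work for infinite graphs.
-/

section DegreeWithin

variable {V : Type*} (G : SimpleGraph V)

/-- The number of neighbours of `v` in `S`, as an extended natural number. For `v ∈ S` it is the
degree of `v` in the subgraph of `G` induced on `S`, and for `S = Set.univ` it is the degree in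
`G`. -/
noncomputable def degreeWithin (S : Set V) (v : V) : ℕ∞ :=
  (G.neighborSet v ∩ S).encard

/-- The set `L(H)` of vertices of degree one in the subgraph `H` of `G` induced on `W`. -/
def leavesWithin (W : Set V) : Set V :=
  {v ∈ W | degreeWithin G W v = 1}

variable {G} {S T W : Set V} {v : V}

lemma degreeWithin_mono (hST : S ⊆ T) : degreeWithin G S v ≤ degreeWithin G T v :=
  Set.encard_le_encard (Set.inter_subset_inter_right _ hST)

lemma degreeWithin_compl_add_degreeWithin :
    degreeWithin G Sᶜ v + degreeWithin G S v = degreeWithin G Set.univ v := by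
  simpa only [degreeWithin, Set.inter_univ, Set.sdiff_eq] using
    Set.encard_sdiff_add_encard_inter (G.neighborSet v) S

lemma degreeWithin_compl_of_degreeWithin_le_one (h : degreeWithin G S v ≤ 1) :
    degreeWithin G Sᶜ v + 1 = degreeWithin G Set.univ v ∨
      degreeWithin G Sᶜ v = degreeWithin G Set.univ v := by
  rw [← degreeWithin_compl_add_degreeWithin (S := S)]
  rcases Order.le_one_iff.mp h with h0 | h1
  · exact .inr (by rw [h0, add_zero])
  · exact .inl (by rw [h1])

lemma degreeWithin_compl_of_notMem (hS : ∀ u ∈ S, ∀ w, G.Adj u w → w ∈ W) (hv : v ∉ W) :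
    degreeWithin G Sᶜ v = degreeWithin G Set.univ v := by
  have hvS : G.neighborSet v ⊆ Sᶜ := fun u hvu hu ↦ hv (hS u hu v hvu.symm)
  rw [degreeWithin, degreeWithin, Set.inter_eq_left.mpr hvS, Set.inter_univ]

lemma degreeWithin_sdiff_leavesWithin_le_one (hv : v ∈ leavesWithin G W) :
    degreeWithin G (W \ leavesWithin G W) v ≤ 1 :=
  (degreeWithin_mono Set.sdiff_subset).trans_eq hv.2

lemma mem_leavesWithin_or_notMem (hv : v ∈ (W \ leavesWithin G W)ᶜ) :
    v ∈ leavesWithin G W ∨ v ∉ W := by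
  by_contra! h
  exact hv ⟨h.2, h.1⟩

lemma degreeWithin_coe_finset (S : Finset V) [DecidableRel G.Adj] :
    degreeWithin G S v = #{u ∈ S | G.Adj v u} := by
  rw [degreeWithin, ← Set.encard_coe_eq_coe_finsetCard, Finset.coe_filter, Set.inter_comm]
  rfl

lemma degreeWithin_univ_eq_card [Fintype V] [DecidableRel G.Adj] :
    degreeWithin G Set.univ v = #{u | G.Adj v u} := by
  rw [← Finset.coe_univ, degreeWithin_coe_finset]

lemma leavesWithin_coe_finset (W : Finset V) [DecidableRel G.Adj] :
    leavesWithin G W = ({v ∈ W | #{u ∈ W | G.Adj v u} = 1} : Finset V) := by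
  ext v
  simp only [leavesWithin, degreeWithin_coe_finset, Nat.cast_eq_one, Finset.mem_coe,
    Set.mem_ofPred_eq, Finset.coe_filter]

end DegreeWithin

theorem statement5_general {V : Type*} (G : SimpleGraph V) (d : ℕ) (W : Set V)
    (hmax : ∀ v, degreeWithin G Set.univ v ≤ d)
    (hlow : ∀ v, degreeWithin G Set.univ v + 2 ≤ d → v ∈ W)
    (hleaves : ∀ v ∈ leavesWithin G W, degreeWithin G Set.univ v = d)
    (hclosed : ∀ v ∈ W \ leavesWithin G W, ∀ u, G.Adj v u → u ∈ W) :
    (∀ v ∈ (W \ leavesWithin G W)ᶜ,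
      degreeWithin G (W \ leavesWithin G W)ᶜ v + 1 = d ∨
        degreeWithin G (W \ leavesWithin G W)ᶜ v = d) ∧
    {v ∈ (W \ leavesWithin G W)ᶜ | degreeWithin G (W \ leavesWithin G W)ᶜ v + 1 = d}.encard ≤
      (leavesWithin G W).encard + {v | degreeWithin G Set.univ v + 1 = d}.encard := by
  constructor
  · intro v hv
    rcases mem_leavesWithin_or_notMem hv with hleaf | hout
    · rw [← hleaves v hleaf]
      exact degreeWithin_compl_of_degreeWithin_le_one (degreeWithin_sdiff_leavesWithin_le_one hleaf)
    · rw [degreeWithin_compl_of_notMem hclosed hout]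
      have hd_lt : (d : ℕ∞) < degreeWithin G Set.univ v + 1 + 1 := by
        simpa only [add_assoc, one_add_one_eq_two, not_le] using mt (hlow v) hout
      exact (hmax v).lt_or_eq.imp_left fun hlt_d ↦
        (Order.add_one_le_of_lt hlt_d).antisymm (Order.le_of_lt_add_one hd_lt)
  · refine (Set.encard_le_encard fun v hv ↦ ?_).trans (Set.encard_union_le _ _)
    refine (mem_leavesWithin_or_notMem hv.1).imp_right fun hout ↦ ?_
    rw [Set.mem_ofPred_eq, ← degreeWithin_compl_of_notMem hclosed hout]
    exact hv.2

/-- Let `d ≥ 2` and let `G` be a finite graph of maximum degree at most `d`.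
Let `H` be the induced subgraph of `G` on a vertex set `W` such that: (i) every vertex of
degree at most `d−2` in `G` lies in `W`; (ii) every vertex of degree `1` in `H` has degree
`d` in `G`; (iii) every `G`-neighbour of a vertex of `W ∖ L(H)` lies in `W`, where `L(H)`
is the set of vertices of degree `1` in `H`.  Let `G'` be the induced subgraph of `G` on
`V(G) ∖ (W ∖ L(H))`.  Then every vertex of `G'` has degree `d−1` or `d` in `G'`, and the
number of vertices of degree `d−1` in `G'` is at most `|L(H)| + #{v : deg_G v = d−1}`.
(Degrees in the induced subgraphs are expressed by counting neighbours inside the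
corresponding vertex set.) -/
theorem statement5 {V : Type*} [Fintype V] [DecidableEq V] (d : ℕ) (hd : 2 ≤ d)
    (G : SimpleGraph V) [DecidableRel G.Adj]
    (hmax : ∀ v, (Finset.univ.filter (fun u => G.Adj v u)).card ≤ d)
    (W : Finset V)
    (hi : ∀ v, (Finset.univ.filter (fun u => G.Adj v u)).card ≤ d - 2 → v ∈ W)
    (L : Finset V)
    (hL : L = W.filter (fun v => (W.filter (fun u => G.Adj v u)).card = 1))
    (hii : ∀ v ∈ L, (Finset.univ.filter (fun u => G.Adj v u)).card = d)
    (hiii : ∀ v ∈ W \ L, ∀ u, G.Adj v u → u ∈ W) :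
    (∀ v ∈ Finset.univ \ (W \ L),
        ((Finset.univ \ (W \ L)).filter (fun u => G.Adj v u)).card = d - 1 ∨
        ((Finset.univ \ (W \ L)).filter (fun u => G.Adj v u)).card = d) ∧
    ((Finset.univ \ (W \ L)).filter
        (fun v => ((Finset.univ \ (W \ L)).filter (fun u => G.Adj v u)).card = d - 1)).card
      ≤ L.card +
        (Finset.univ.filter
          (fun v => (Finset.univ.filter (fun u => G.Adj v u)).card = d - 1)).card := by
  have hpred (n : ℕ) : (n : ℕ∞) + 1 = d ↔ n = d - 1 := by norm_cast; omega
  have hsub (n : ℕ) : (n : ℕ∞) + 2 ≤ d ↔ n ≤ d - 2 := by norm_cast; omega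
  subst hL
  have key := statement5_general G d W
  simp only [leavesWithin_coe_finset, ← Finset.coe_sdiff, ← Finset.coe_compl,
    Finset.compl_eq_univ_sdiff, degreeWithin_coe_finset, degreeWithin_univ_eq_card, hpred, hsub,
    Finset.mem_coe, ← Finset.coe_filter, Nat.cast_le, Nat.cast_inj] at key
  simp only [← Finset.coe_filter_univ, Set.encard_coe_eq_coe_finsetCard, ← Nat.cast_add,
    Nat.cast_le] at key
  exact key hmax hi hii hiii
end
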